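/- Let α ∈ (1,2) and let a ∈ L^α(ℝ, dx) be nonzero with a(x) = 0 for x < 0. Let (ξ_n)_{n∈ℤ} be an SαS moving average driven by a: real random variables on a probability space (Ω, P) such that for every finite collection of indices n₁, …, n_m ∈ ℤ and reals u₁, …, u_m, E exp(i ∑_{j=1}^m u_j ξ_{n_j}) = exp(−∫_ℝ |∑_{j=1}^m u_j a(n_j − x)|^α dx). Let K satisfy Assumptions (K1), (K2) and (K3). Assume that ∑_{m=1}^{∞} (∫_{m−1}^{m} |a(x)|^α dx)^{1/2} < ∞ and ∑_{n=1}^{∞} [ξ₀, ξ_n]₁ < ∞, where [ξ₀, ξ_n]₁ := ∫_ℝ (|a(−x)|^{α−1}|a(n−x)| + |a(n−x)|^{α−1}|a(−x)|) dx. Then E K(ξ_0)² < ∞, the series σ² := Var(K(ξ_0)) + 2∑_{n=1}^{∞} Cov(K(ξ_0), K(ξ_n)) converges absolutely, σ² = lim_{N→∞} N^{−1} Var(S_N) where S_N := ∑_{n=1}^{N} (K(ξ_n) − E K(ξ_n)), and N^{−1/2} S_N converges in distribution, as N → ∞, to a centered Gaussian law with variance σ². (Paper's Theorem 6.1.) 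-/

import Mathlib

open MeasureTheory Real Set Filter
open scoped ENNReal Topology

noncomputable def nrm (α : ℝ) {S : Type*} [MeasurableSpace S] (μ : Measure S) (f : S → ℝ) : ℝ :=
  (∫ s, |f s| ^ α ∂μ) ^ (1 / α)

noncomputable def dep2 (α : ℝ) {S : Type*} [MeasurableSpace S] (μ : Measure S) (f g : S → ℝ) : ℝ :=
  ∫ s, |f s * g s| ^ (α / 2) ∂μ

noncomputable def dep1s (α : ℝ) {S : Type*} [MeasurableSpace S] (μ : Measure S) (f g : S → ℝ) : ℝ :=
  ∫ s, |f s| ^ (α - 1) * |g s| ∂μ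

noncomputable def dep1 (α : ℝ) {S : Type*} [MeasurableSpace S] (μ : Measure S) (f g : S → ℝ) : ℝ :=
  dep1s α μ f g + dep1s α μ g f

/-- `f ∈ L^α(S, μ)`. -/
def MemLalpha (α : ℝ) {S : Type*} [MeasurableSpace S] (μ : Measure S) (f : S → ℝ) : Prop :=
  AEStronglyMeasurable f μ ∧ Integrable (fun s => |f s| ^ α) μ

/-- Assumption (A1) with constant ε₁. -/
def A1 (α ε₁ : ℝ) {S : Type*} [MeasurableSpace S] (μ : Measure S) (f g : S → ℝ) : Prop :=
  nrm α μ f ^ (α / 2) * nrm α μ g ^ (α / 2) - dep2 α μ f g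
    ≥ ε₁ * (nrm α μ f ^ (α / 2) * nrm α μ g ^ (α / 2))

/-- Assumption (A2) with constant ε₂. -/
def A2 (α ε₂ : ℝ) {S : Type*} [MeasurableSpace S] (μ : Measure S) (f g : S → ℝ) : Prop :=
  ∀ u v : ℝ, nrm α μ (fun s => u * f s + v * g s) ^ α
    ≥ ε₂ * (|u| ^ α * nrm α μ f ^ α + |v| ^ α * nrm α μ g ^ α)

noncomputable def Ufun (α : ℝ) {S : Type*} [MeasurableSpace S] (μ : Measure S)
    (f g : S → ℝ) (u v : ℝ) : ℝ :=
  Real.exp (-(nrm α μ (fun s => u * f s + v * g s) ^ α)) -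
    Real.exp (-(nrm α μ (fun s => u * f s) ^ α) - nrm α μ (fun s => v * g s) ^ α)

/-- signed power `a^⟨p⟩ = sign(a)|a|^p`. -/
noncomputable def spow (a p : ℝ) : ℝ := Real.sign a * |a| ^ p

noncomputable def D1 (α : ℝ) {S : Type*} [MeasurableSpace S] (μ : Measure S)
    (f g : S → ℝ) (u v : ℝ) : ℝ :=
  -α * (∫ s, spow (u * f s + v * g s) (α - 1) * f s ∂μ) *
      Real.exp (-(nrm α μ (fun s => u * f s + v * g s) ^ α)) +
    α * (∫ s, spow (u * f s) (α - 1) * f s ∂μ) *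
      Real.exp (-(nrm α μ (fun s => u * f s) ^ α) - nrm α μ (fun s => v * g s) ^ α)

noncomputable def D2 (α : ℝ) {S : Type*} [MeasurableSpace S] (μ : Measure S)
    (f g : S → ℝ) (u v : ℝ) : ℝ :=
  -(α * (α - 1)) * (∫ s, (if f s = 0 ∨ g s = 0 then (0:ℝ) else
        |u * f s + v * g s| ^ (α - 2) * (f s * g s)) ∂μ) *
      Real.exp (-(nrm α μ (fun s => u * f s + v * g s) ^ α)) +
    α ^ 2 * (∫ s, spow (u * f s + v * g s) (α - 1) * f s ∂μ) *
      (∫ s, spow (u * f s + v * g s) (α - 1) * g s ∂μ) *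
      Real.exp (-(nrm α μ (fun s => u * f s + v * g s) ^ α)) -
    α ^ 2 * (∫ s, spow (u * f s) (α - 1) * f s ∂μ) *
      (∫ s, spow (v * g s) (α - 1) * g s ∂μ) *
      Real.exp (-(nrm α μ (fun s => u * f s) ^ α) - nrm α μ (fun s => v * g s) ^ α)

/-- `(ξ, η)` is jointly SαS with spectral pair `(f, g)`. -/
def JointSAS (α : ℝ) {S : Type*} [MeasurableSpace S] (μ : Measure S) (f g : S → ℝ)
    {Ω : Type*} [MeasurableSpace Ω] (P : Measure Ω) (ξ η : Ω → ℝ) : Prop :=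
  ∀ u v : ℝ, (∫ ω, Complex.exp (Complex.I * ((u * ξ ω + v * η ω : ℝ) : ℂ)) ∂P)
    = Complex.exp (-((nrm α μ (fun s => u * f s + v * g s) ^ α : ℝ) : ℂ))

namespace S18

/-- `ρ` is a symmetric stable law with index `α` and scale parameter `τ`. -/
def IsSAS (α τ : ℝ) (ρ : Measure ℝ) : Prop :=
  ∀ t : ℝ, charFun ρ t = Complex.exp (-((τ * |t| ^ α : ℝ) : ℂ))

lemma IsSAS.integral_cos {α τ : ℝ} {ρ : Measure ℝ} [IsProbabilityMeasure ρ] (h : IsSAS α τ ρ)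
    (t : ℝ) : ∫ y, (1 - Real.cos (t * y)) ∂ρ = 1 - Real.exp (-(τ * |t| ^ α)) := by
  have h1 := h t
  rw [charFun_apply_real] at h1
  have h_integ0 : Integrable (fun x : ℝ => Complex.exp (t * x * Complex.I)) ρ := by
    apply Integrable.of_bound (C := 1) (by fun_prop)
    refine Eventually.of_forall fun x => ?_
    rw [← Complex.ofReal_mul, Complex.norm_exp_ofReal_mul_I]
  have h2 : ∫ y, Real.cos (t * y) ∂ρ = Real.exp (-(τ * |t| ^ α)) := by
    have h3 := congrArg Complex.re h1
    rw [← Complex.ofReal_neg, Complex.exp_ofReal_re] at h3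
    rw [← h3]
    have := integral_re h_integ0
    simp only [RCLike.re_to_complex] at this
    rw [← this]
    congr 1; ext x
    rw [← Complex.ofReal_mul, Complex.exp_ofReal_mul_I_re]
  rw [integral_sub (by simp), h2]
  · simp
  · apply Integrable.of_bound (C := 1) (by fun_prop)
    exact Eventually.of_forall fun x => by simpa using abs_cos_le_one _

lemma lower_int {q : ℝ} (hq2 : q < 2) {y : ℝ} (hy : y ≠ 0) :
    ENNReal.ofReal ((2 / π ^ 2 / (2 - q)) * min (y ^ 2) (|y| ^ q)) ≤
      ∫⁻ t in Ioc (0:ℝ) 1, ENNReal.ofReal ((1 - Real.cos (t * y)) * t ^ (-1 - q)) := by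
  have hy' : 0 < |y| := abs_pos.mpr hy
  set m : ℝ := min 1 (1 / |y|) with hm
  have hm0 : 0 < m := lt_min one_pos (by positivity)
  have hmy : m * |y| ≤ 1 := by
    calc m * |y| ≤ 1 / |y| * |y| := by gcongr; exact min_le_right _ _
      _ = 1 := by field_simp
  have h1 : ∫⁻ t in Ioc (0:ℝ) m, ENNReal.ofReal ((2 / π ^ 2 * y ^ 2) * t ^ (1 - q)) =
      ENNReal.ofReal ((2 / π ^ 2 / (2 - q)) * (y ^ 2 * m ^ (2 - q))) := by
    rw [← ofReal_integral_eq_lintegral_ofReal]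
    · rw [← intervalIntegral.integral_of_le hm0.le, intervalIntegral.integral_const_mul,
        integral_rpow (Or.inl (by linarith)), Real.zero_rpow (by linarith)]
      congr 1
      have : 1 - q + 1 = 2 - q := by ring
      rw [this]; ring
    · rw [← IntegrableOn, ← intervalIntegrable_iff_integrableOn_Ioc_of_le hm0.le]
      exact (intervalIntegral.intervalIntegrable_rpow' (by linarith)).const_mul _
    · filter_upwards [ae_restrict_mem measurableSet_Ioc] with t ht
      have := ht.1.le
      positivity
  have h2 : y ^ 2 * m ^ (2 - q) = min (y ^ 2) (|y| ^ q) := by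
    rcases le_total 1 |y| with h | h
    · have : m = 1 / |y| := min_eq_right (by rw [div_le_one hy']; exact h)
      have h3 : |y| ^ q ≤ y ^ 2 := by
        rw [← sq_abs, ← Real.rpow_natCast |y| 2]
        exact Real.rpow_le_rpow_of_exponent_le h (by simpa using hq2.le)
      rw [this, min_eq_right h3, one_div, Real.inv_rpow hy'.le, ← Real.rpow_neg hy'.le,
        ← sq_abs, ← Real.rpow_natCast |y| 2, ← Real.rpow_add hy']
      congr 1; push_cast; ring
    · have : m = 1 := min_eq_left (by rw [le_div_iff₀ hy']; simpa using h)
      have h3 : y ^ 2 ≤ |y| ^ q := by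
        rw [← sq_abs, ← Real.rpow_natCast |y| 2]
        exact Real.rpow_le_rpow_of_exponent_ge hy' h (by simpa using hq2.le)
      rw [this, min_eq_left h3]; simp
  rw [← h2, ← h1]
  calc _ ≤ ∫⁻ t in Ioc (0:ℝ) m, ENNReal.ofReal ((1 - Real.cos (t * y)) * t ^ (-1 - q)) := by
        apply setLIntegral_mono' measurableSet_Ioc
        intro t ht
        apply ENNReal.ofReal_le_ofReal
        have hty : |t * y| ≤ π := by
          rw [abs_mul, abs_of_pos ht.1]
          calc t * |y| ≤ m * |y| := by gcongr; exact ht.2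
            _ ≤ 1 := hmy
            _ ≤ π := by linarith [Real.pi_gt_three]
        have h3 := Real.cos_le_one_sub_mul_cos_sq hty
        have h4 : t ^ (1 - q) = t ^ 2 * t ^ (-1 - q) := by
          rw [← Real.rpow_natCast t 2, ← Real.rpow_add ht.1]; congr 1; push_cast; ring
        rw [h4, ← mul_assoc]
        apply mul_le_mul_of_nonneg_right _ (Real.rpow_nonneg ht.1.le _)
        nlinarith
    _ ≤ _ := lintegral_mono_set (Ioc_subset_Ioc_right (min_le_left _ _))

/-- Main moment bound for stable laws. -/
lemma moment_bound {α q : ℝ} (hq : 0 < q) (hqα : q < α) (hα : α < 2) :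
    ∃ C : ℝ, 0 ≤ C ∧ ∀ (τ : ℝ) (ρ : Measure ℝ) [IsProbabilityMeasure ρ], 0 ≤ τ → IsSAS α τ ρ →
      Integrable (fun y : ℝ => min (y ^ 2) (|y| ^ q)) ρ ∧
      ∫ y, min (y ^ 2) (|y| ^ q) ∂ρ ≤ C * τ := by
  set c : ℝ := 2 / π ^ 2 / (2 - q) with hc
  have hc0 : 0 < c := by
    have : 0 < 2 - q := by linarith
    positivity
  refine ⟨c⁻¹ * (1 / (α - q)), by have : 0 < α - q := by linarith
                                  positivity, ?_⟩
  intro τ ρ _ hτ h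
  have hmeas : Measurable (fun y : ℝ => min (y ^ 2) (|y| ^ q)) := by fun_prop
  have hnn : ∀ y : ℝ, 0 ≤ min (y ^ 2) (|y| ^ q) := fun y => by positivity
  have key : ∫⁻ y, ENNReal.ofReal (c * min (y ^ 2) (|y| ^ q)) ∂ρ ≤
      ENNReal.ofReal (τ * (1 / (α - q))) := by
    calc ∫⁻ y, ENNReal.ofReal (c * min (y ^ 2) (|y| ^ q)) ∂ρ
        ≤ ∫⁻ y, (∫⁻ t in Ioc (0:ℝ) 1, ENNReal.ofReal ((1 - Real.cos (t * y)) * t ^ (-1 - q))) ∂ρ := by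
          apply lintegral_mono
          intro y
          by_cases hy : y = 0
          · simp [hy, Real.zero_rpow hq.ne']
          · exact lower_int (by linarith) hy
      _ = ∫⁻ t in Ioc (0:ℝ) 1, ∫⁻ y, ENNReal.ofReal ((1 - Real.cos (t * y)) * t ^ (-1 - q)) ∂ρ := by
          rw [lintegral_lintegral_swap]
          apply Measurable.aemeasurable
          fun_prop
      _ ≤ ∫⁻ t in Ioc (0:ℝ) 1, ENNReal.ofReal (τ * t ^ (α - 1 - q)) := by
          apply setLIntegral_mono' measurableSet_Ioc
          intro t ht
          rw [← ofReal_integral_eq_lintegral_ofReal]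
          · apply ENNReal.ofReal_le_ofReal
            rw [integral_mul_const, h.integral_cos, abs_of_pos ht.1]
            have h4 : t ^ (α - 1 - q) = t ^ α * t ^ (-1 - q) := by
              rw [← Real.rpow_add ht.1]; congr 1; ring
            rw [h4, ← mul_assoc]
            apply mul_le_mul_of_nonneg_right _ (Real.rpow_nonneg ht.1.le _)
            linarith [Real.add_one_le_exp (-(τ * t ^ α))]
          · apply Integrable.mul_const
            apply Integrable.of_bound (C := 2) (by fun_prop)
            refine Eventually.of_forall fun x => ?_
            rw [Real.norm_eq_abs, abs_le]
            constructor <;> linarith [Real.cos_le_one (t * x), Real.neg_one_le_cos (t * x)]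
          · refine Eventually.of_forall fun x => ?_
            exact mul_nonneg (by linarith [Real.cos_le_one (t * x)]) (Real.rpow_nonneg ht.1.le _)
      _ = ENNReal.ofReal (τ * (1 / (α - q))) := by
          rw [← ofReal_integral_eq_lintegral_ofReal]
          · rw [← intervalIntegral.integral_of_le zero_le_one, intervalIntegral.integral_const_mul,
              integral_rpow (Or.inl (by linarith)), Real.zero_rpow (by linarith)]
            have : α - 1 - q + 1 = α - q := by ring
            simp [this]
          · rw [← IntegrableOn, ← intervalIntegrable_iff_integrableOn_Ioc_of_le zero_le_one]
            exact (intervalIntegral.intervalIntegrable_rpow' (by linarith)).const_mul _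
          · filter_upwards [ae_restrict_mem measurableSet_Ioc] with t ht
            have := ht.1.le
            positivity
  have hi : Integrable (fun y : ℝ => c * min (y ^ 2) (|y| ^ q)) ρ := by
    refine ⟨by fun_prop, ?_⟩
    rw [hasFiniteIntegral_iff_ofReal (Eventually.of_forall fun y => mul_nonneg hc0.le (hnn y))]
    exact key.trans_lt ENNReal.ofReal_lt_top
  have hi' : Integrable (fun y : ℝ => min (y ^ 2) (|y| ^ q)) ρ := by
    have := hi.const_mul c⁻¹
    refine this.congr (Eventually.of_forall fun y => ?_)
    field_simp
  refine ⟨hi', ?_⟩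
  have h5 : ∫ y, c * min (y ^ 2) (|y| ^ q) ∂ρ ≤ τ * (1 / (α - q)) := by
    rw [← ofReal_integral_eq_lintegral_ofReal hi
      (Eventually.of_forall fun y => mul_nonneg hc0.le (hnn y))] at key
    rwa [ENNReal.ofReal_le_ofReal_iff] at key
    have : 0 < α - q := by linarith
    positivity
  rw [integral_const_mul] at h5
  calc _ = c⁻¹ * (c * ∫ y, min (y ^ 2) (|y| ^ q) ∂ρ) := by field_simp
    _ ≤ c⁻¹ * (τ * (1 / (α - q))) := by gcongr
    _ = _ := by ring

/-- scaling -/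
lemma IsSAS.map_mul {α τ : ℝ} {ρ : Measure ℝ} (h : IsSAS α τ ρ) (r : ℝ) :
    IsSAS α (|r| ^ α * τ) (ρ.map (fun x => r * x)) := by
  intro t
  rw [charFun_map_mul, h (r * t), abs_mul, Real.mul_rpow (abs_nonneg _) (abs_nonneg _)]
  congr 3; ring

/-- First absolute moment. -/
lemma first_moment {α : ℝ} (h1 : 1 < α) (h2 : α < 2) :
    ∃ C : ℝ, 0 ≤ C ∧ ∀ (τ s : ℝ) (ρ : Measure ℝ) [IsProbabilityMeasure ρ], 0 ≤ τ → 0 < s →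
      τ ≤ s ^ α → IsSAS α τ ρ → Integrable (fun y : ℝ => |y|) ρ ∧ ∫ y, |y| ∂ρ ≤ C * s := by
  obtain ⟨C, hC, hb⟩ := moment_bound (q := 1) one_pos h1 h2
  refine ⟨1 + C, by positivity, ?_⟩
  intro τ s ρ _ hτ hs hle h
  have hs' := h.map_mul s⁻¹
  have : IsProbabilityMeasure (ρ.map (fun x => s⁻¹ * x)) :=
    Measure.isProbabilityMeasure_map (by fun_prop)
  have hle1 : |s⁻¹| ^ α * τ ≤ 1 := by
    rw [abs_of_pos (by positivity), Real.inv_rpow hs.le]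
    rw [inv_mul_le_iff₀ (by positivity)]; simpa using hle
  obtain ⟨hi, hle2⟩ := hb _ _ (by positivity) hs'
  rw [integrable_map_measure (by fun_prop) (by fun_prop)] at hi
  rw [integral_map (by fun_prop) (by fun_prop)] at hle2
  simp only [Function.comp_def, Real.rpow_one] at hi hle2
  have hpt : ∀ y : ℝ, |y| ≤ s * (1 + min ((s⁻¹ * y) ^ 2) |s⁻¹ * y|) := by
    intro y
    have h3 : |y| = s * |s⁻¹ * y| := by
      rw [abs_mul, abs_of_pos (a := s⁻¹) (by positivity)]; field_simp
    rw [h3]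
    gcongr
    have h4 := abs_nonneg (s⁻¹ * y)
    rcases le_total (|s⁻¹ * y|) 1 with h5 | h5
    · have : 0 ≤ min ((s⁻¹ * y) ^ 2) |s⁻¹ * y| := by positivity
      linarith
    · rw [← sq_abs, min_eq_right (by nlinarith)]; linarith
  have hbnd : Integrable (fun y : ℝ => s * (1 + min ((s⁻¹ * y) ^ 2) |s⁻¹ * y|)) ρ :=
    ((integrable_const _).add hi).const_mul _
  have hI : Integrable (fun y : ℝ => |y|) ρ :=
    hbnd.mono' (by fun_prop) (Eventually.of_forall fun y => by simpa using hpt y)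
  refine ⟨hI, ?_⟩
  calc ∫ y, |y| ∂ρ ≤ ∫ y, s * (1 + min ((s⁻¹ * y) ^ 2) |s⁻¹ * y|) ∂ρ :=
        integral_mono hI hbnd hpt
    _ = s * (1 + ∫ y, min ((s⁻¹ * y) ^ 2) |s⁻¹ * y| ∂ρ) := by
        rw [integral_const_mul, integral_add (integrable_const _) hi]; simp
    _ ≤ s * (1 + C) := by
        gcongr
        calc _ ≤ C * (|s⁻¹| ^ α * τ) := hle2
          _ ≤ C * 1 := by gcongr
          _ = C := mul_one _
    _ = _ := by ring

end S18

namespace S18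

/-- auxiliary weight `t ^ s * exp (-τ t ^ α)` -/
noncomputable def wt (α τ s t : ℝ) : ℝ := t ^ s * Real.exp (-τ * t ^ α)

lemma wt_measurable (α τ s : ℝ) : Measurable (wt α τ s) := by unfold wt; fun_prop

lemma wt_integrable {α τ s : ℝ} (hα : 0 < α) (hτ : 0 < τ) (hs : -1 < s) :
    IntegrableOn (wt α τ s) (Ioi 0) := integrableOn_rpow_mul_exp_neg_mul_rpow hs hα hτ

lemma wt_hasDerivAt {α τ s t : ℝ} (ht : 0 < t) :
    HasDerivAt (wt α τ s) (s * wt α τ (s - 1) t - τ * α * wt α τ (s + α - 1) t) t := by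
  have h1 : HasDerivAt (fun t : ℝ => t ^ s) (s * t ^ (s - 1)) t :=
    Real.hasDerivAt_rpow_const (Or.inl ht.ne')
  have h2 : HasDerivAt (fun t : ℝ => t ^ α) (α * t ^ (α - 1)) t :=
    Real.hasDerivAt_rpow_const (Or.inl ht.ne')
  have h3 := h1.mul ((h2.const_mul (-τ)).exp)
  refine h3.congr_deriv ?_
  unfold wt
  have : t ^ (s + α - 1) = t ^ s * t ^ (α - 1) := by
    rw [← Real.rpow_add ht]; congr 1; ring
  rw [this]; ring

lemma wt_tendsto_atTop {α τ : ℝ} (hα : 0 < α) (hτ : 0 < τ) (s : ℝ) :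
    Tendsto (wt α τ s) atTop (𝓝 0) := by
  have h1 := (tendsto_rpow_mul_exp_neg_mul_atTop_nhds_zero (s / α) τ hτ).comp
    (tendsto_rpow_atTop hα)
  refine h1.congr' ?_
  filter_upwards [eventually_gt_atTop 0] with t ht
  simp only [Function.comp, wt]
  rw [← Real.rpow_mul ht.le, mul_div_cancel₀ _ hα.ne']

lemma wt_tendsto_zero {α τ s : ℝ} (hα : 0 < α) (hs : 0 < s) :
    Tendsto (wt α τ s) (𝓝[>] 0) (𝓝 0) := by
  have : ContinuousAt (wt α τ s) 0 := by
    unfold wt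
    refine (Real.continuousAt_rpow_const _ _ (Or.inr hs.le)).mul ?_
    exact ((Real.continuousAt_rpow_const _ _ (Or.inr hα.le)).const_mul _).rexp
  have h := this.tendsto
  simp only [wt, Real.zero_rpow hs.ne', zero_mul] at h
  exact h.mono_left nhdsWithin_le_nhds

lemma wt_tendsto_one {α τ : ℝ} (hα : 0 < α) :
    Tendsto (wt α τ 0) (𝓝[>] 0) (𝓝 1) := by
  have : ContinuousAt (wt α τ 0) 0 := by
    unfold wt
    refine (Real.continuousAt_rpow_const _ _ (Or.inr le_rfl)).mul ?_
    exact ((Real.continuousAt_rpow_const _ _ (Or.inr hα.le)).const_mul _).rexp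
  have h := this.tendsto
  simp only [wt, Real.zero_rpow hα.ne', Real.rpow_zero, mul_zero, Real.exp_zero, mul_one] at h
  exact h.mono_left nhdsWithin_le_nhds

lemma int_trig_mul {f : ℝ → ℝ} (hf : IntegrableOn f (Ioi 0)) {c : ℝ → ℝ} (hc : Continuous c)
    (hb : ∀ x, |c x| ≤ 1) : IntegrableOn (fun t => c t * f t) (Ioi 0) := by
  apply Integrable.bdd_mul (c := 1) hf hc.aestronglyMeasurable
  exact Eventually.of_forall fun x => hb x

lemma abs_int_trig_le {f : ℝ → ℝ} (hf : IntegrableOn f (Ioi 0)) {c : ℝ → ℝ} (hc : Continuous c)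
    (hb : ∀ x, |c x| ≤ 1) : |∫ t in Ioi 0, c t * f t| ≤ ∫ t in Ioi (0:ℝ), |f t| := by
  rw [← Real.norm_eq_abs]
  apply norm_integral_le_of_norm_le hf.abs
  refine Eventually.of_forall fun x => ?_
  rw [Real.norm_eq_abs, abs_mul]
  exact mul_le_of_le_one_left (abs_nonneg _) (hb x)

lemma ibp_cos {f f' : ℝ → ℝ} {u c : ℝ} (hd : ∀ t ∈ Ioi (0:ℝ), HasDerivAt f (f' t) t)
    (hf : IntegrableOn f (Ioi 0)) (hf' : IntegrableOn f' (Ioi 0))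
    (h0 : Tendsto f (𝓝[>] 0) (𝓝 c)) (hi : Tendsto f atTop (𝓝 0)) :
    u * ∫ t in Ioi 0, Real.cos (t * u) * f t = - ∫ t in Ioi 0, Real.sin (t * u) * f' t := by
  have hs : Continuous fun t => Real.sin (t * u) := by fun_prop
  have hc : Continuous fun t => Real.cos (t * u) := by fun_prop
  have h := integral_Ioi_mul_deriv_eq_deriv_mul (a := (0:ℝ)) (u := fun t => Real.sin (t * u))
    (u' := fun t => Real.cos (t * u) * u) (v := f) (v' := f') (a' := 0) (b' := 0)
    (fun x _ => by
      have := ((hasDerivAt_id x).mul_const u).sin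
      simpa using this) hd
    (int_trig_mul hf' hs fun x => Real.abs_sin_le_one _)
    (by
      have := (int_trig_mul hf hc fun x => Real.abs_cos_le_one _).const_mul u
      refine this.congr (Eventually.of_forall fun x => ?_)
      simp only [Pi.mul_apply]; ring)
    (by
      have h1 : Tendsto (fun t => Real.sin (t * u)) (𝓝[>] 0) (𝓝 0) := by
        have := hs.tendsto 0
        simp only [zero_mul, Real.sin_zero] at this
        exact this.mono_left nhdsWithin_le_nhds
      have h2 := h1.mul h0
      rw [zero_mul] at h2
      exact h2)
    (by
      refine squeeze_zero_norm (fun t => ?_) (by simpa using hi.abs)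
      simp only [Pi.mul_apply, norm_mul, Real.norm_eq_abs]
      exact mul_le_of_le_one_left (abs_nonneg _) (Real.abs_sin_le_one _))
  rw [h, ← integral_const_mul]
  simp only [sub_zero, zero_sub, neg_neg]
  congr 1; ext t; ring

lemma ibp_sin {f f' : ℝ → ℝ} {u : ℝ} (hd : ∀ t ∈ Ioi (0:ℝ), HasDerivAt f (f' t) t)
    (hf : IntegrableOn f (Ioi 0)) (hf' : IntegrableOn f' (Ioi 0))
    (h0 : Tendsto f (𝓝[>] 0) (𝓝 0)) (hi : Tendsto f atTop (𝓝 0)) :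
    u * ∫ t in Ioi 0, Real.sin (t * u) * f t = ∫ t in Ioi 0, Real.cos (t * u) * f' t := by
  have hs : Continuous fun t => Real.sin (t * u) := by fun_prop
  have hc : Continuous fun t => Real.cos (t * u) := by fun_prop
  have h := integral_Ioi_mul_deriv_eq_deriv_mul (a := (0:ℝ)) (u := fun t => Real.cos (t * u))
    (u' := fun t => -Real.sin (t * u) * u) (v := f) (v' := f') (a' := 0) (b' := 0)
    (fun x _ => by
      have := ((hasDerivAt_id x).mul_const u).cos
      simpa using this) hd
    (int_trig_mul hf' hc fun x => Real.abs_cos_le_one _)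
    (by
      have := (int_trig_mul hf hs fun x => Real.abs_sin_le_one _).const_mul (-u)
      refine this.congr (Eventually.of_forall fun x => ?_)
      simp only [Pi.mul_apply]; ring)
    (by
      have h1 : Tendsto (fun t => Real.cos (t * u)) (𝓝[>] 0) (𝓝 1) := by
        have := hc.tendsto 0
        simp only [zero_mul, Real.cos_zero] at this
        exact this.mono_left nhdsWithin_le_nhds
      have h2 := h1.mul h0
      rw [mul_zero] at h2
      exact h2)
    (by
      refine squeeze_zero_norm (fun t => ?_) (by simpa using hi.abs)
      simp only [Pi.mul_apply, norm_mul, Real.norm_eq_abs]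
      exact mul_le_of_le_one_left (abs_nonneg _) (Real.abs_cos_le_one _))
  rw [h, ← integral_const_mul]
  simp only [sub_zero, zero_sub]
  rw [← integral_neg]
  congr 1; ext t; ring

/-- the stable density -/
noncomputable def dens (α τ u : ℝ) : ℝ := π⁻¹ * ∫ t in Ioi 0, Real.cos (t * u) * wt α τ 0 t

/-- derivative of the stable density -/
noncomputable def dens' (α τ u : ℝ) : ℝ := -π⁻¹ * ∫ t in Ioi 0, Real.sin (t * u) * wt α τ 1 t

lemma le_of_two {x u A B : ℝ} (h1 : |x| ≤ A) (h2 : u ^ 2 * |x| ≤ B) :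
    |x| ≤ (A + B) * (1 + u ^ 2)⁻¹ := by
  rw [← div_eq_mul_inv, le_div_iff₀ (by positivity)]; nlinarith

lemma dens_bound {α τ : ℝ} (h1 : 1 < α) (hτ : 0 < τ) :
    ∃ C, 0 ≤ C ∧ ∀ u, |dens α τ u| ≤ C * (1 + u ^ 2)⁻¹ := by
  have hα : 0 < α := by linarith
  have hd1 : ∀ t ∈ Ioi (0:ℝ), HasDerivAt (wt α τ 0) (-(τ * α) * wt α τ (α - 1) t) t := by
    intro t ht
    refine (wt_hasDerivAt (s := 0) ht).congr_deriv ?_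
    simp
  have hd2 : ∀ t ∈ Ioi (0:ℝ), HasDerivAt (fun t => -(τ * α) * wt α τ (α - 1) t)
      (-(τ * α) * ((α - 1) * wt α τ (α - 1 - 1) t - τ * α * wt α τ (α - 1 + α - 1) t)) t :=
    fun t ht => (wt_hasDerivAt ht).const_mul _
  have i0 : IntegrableOn (wt α τ 0) (Ioi 0) := wt_integrable hα hτ (by norm_num)
  have i1 : IntegrableOn (fun t => -(τ * α) * wt α τ (α - 1) t) (Ioi 0) :=
    (wt_integrable hα hτ (by linarith)).const_mul _
  have i2 : IntegrableOn (fun t => -(τ * α) * ((α - 1) * wt α τ (α - 1 - 1) t -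
      τ * α * wt α τ (α - 1 + α - 1) t)) (Ioi 0) :=
    (((wt_integrable hα hτ (by linarith)).const_mul _).sub
      ((wt_integrable hα hτ (by linarith)).const_mul _)).const_mul _
  set A := ∫ t in Ioi (0:ℝ), |wt α τ 0 t| with hA
  set B := ∫ t in Ioi (0:ℝ), |-(τ * α) * ((α - 1) * wt α τ (α - 1 - 1) t -
      τ * α * wt α τ (α - 1 + α - 1) t)| with hB
  have hA0 : 0 ≤ A := integral_nonneg fun _ => abs_nonneg _
  have hB0 : 0 ≤ B := integral_nonneg fun _ => abs_nonneg _
  refine ⟨π⁻¹ * A + π⁻¹ * B, by positivity, fun u => le_of_two ?_ ?_⟩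
  · unfold dens
    rw [abs_mul, abs_of_pos (a := π⁻¹) (by positivity)]
    gcongr
    exact abs_int_trig_le i0 (by fun_prop) fun _ => Real.abs_cos_le_one _
  · have e1 := ibp_cos (u := u) hd1 i0 i1 (wt_tendsto_one hα) (wt_tendsto_atTop hα hτ _)
    have e2 := ibp_sin (u := u) hd2 i1 i2
      (by simpa using (wt_tendsto_zero (τ := τ) hα (s := α - 1) (by linarith)).const_mul (-(τ * α)))
      (by simpa using (wt_tendsto_atTop hα hτ (α - 1)).const_mul (-(τ * α)))
    have e3 : u ^ 2 * |dens α τ u| = π⁻¹ * |u * (u * ∫ t in Ioi 0, Real.cos (t * u) * wt α τ 0 t)| := by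
      unfold dens
      rw [abs_mul, abs_of_pos (a := π⁻¹) (by positivity), abs_mul, abs_mul, ← sq_abs u]; ring
    rw [e3, e1, mul_neg, e2, abs_neg]
    gcongr
    exact abs_int_trig_le i2 (by fun_prop) fun _ => Real.abs_cos_le_one _

lemma dens'_bound {α τ : ℝ} (h1 : 1 < α) (hτ : 0 < τ) :
    ∃ C, 0 ≤ C ∧ ∀ u, |dens' α τ u| ≤ C * (1 + u ^ 2)⁻¹ := by
  have hα : 0 < α := by linarith
  have hd1 : ∀ t ∈ Ioi (0:ℝ), HasDerivAt (wt α τ 1) (wt α τ 0 t - τ * α * wt α τ α t) t := by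
    intro t ht
    refine (wt_hasDerivAt (s := 1) ht).congr_deriv ?_
    simp
  have hd2 : ∀ t ∈ Ioi (0:ℝ), HasDerivAt (fun t => wt α τ 0 t - τ * α * wt α τ α t)
      ((-(τ * α) * wt α τ (α - 1) t) -
        τ * α * (α * wt α τ (α - 1) t - τ * α * wt α τ (α + α - 1) t)) t := by
    intro t ht
    refine HasDerivAt.sub ?_ ((wt_hasDerivAt ht).const_mul _)
    refine (wt_hasDerivAt (s := 0) ht).congr_deriv ?_
    simp
  have i0 : IntegrableOn (wt α τ 1) (Ioi 0) := wt_integrable hα hτ (by norm_num)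
  have i1 : IntegrableOn (fun t => wt α τ 0 t - τ * α * wt α τ α t) (Ioi 0) :=
    (wt_integrable hα hτ (by linarith)).sub ((wt_integrable hα hτ (by linarith)).const_mul _)
  have i2 : IntegrableOn (fun t => (-(τ * α) * wt α τ (α - 1) t) -
        τ * α * (α * wt α τ (α - 1) t - τ * α * wt α τ (α + α - 1) t)) (Ioi 0) :=
    ((wt_integrable hα hτ (by linarith)).const_mul _).sub
      ((((wt_integrable hα hτ (by linarith)).const_mul _).sub
      ((wt_integrable hα hτ (by linarith)).const_mul _)).const_mul _)
  set A := ∫ t in Ioi (0:ℝ), |wt α τ 1 t| with hA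
  set B := ∫ t in Ioi (0:ℝ), |(-(τ * α) * wt α τ (α - 1) t) -
        τ * α * (α * wt α τ (α - 1) t - τ * α * wt α τ (α + α - 1) t)| with hB
  have hA0 : 0 ≤ A := integral_nonneg fun _ => abs_nonneg _
  have hB0 : 0 ≤ B := integral_nonneg fun _ => abs_nonneg _
  refine ⟨π⁻¹ * A + π⁻¹ * B, by positivity, fun u => le_of_two ?_ ?_⟩
  · unfold dens'
    rw [abs_mul, abs_neg, abs_of_pos (a := π⁻¹) (by positivity)]
    gcongr
    exact abs_int_trig_le i0 (by fun_prop) fun _ => Real.abs_sin_le_one _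
  · have e1 := ibp_sin (u := u) hd1 i0 i1 (wt_tendsto_zero hα one_pos) (wt_tendsto_atTop hα hτ _)
    have e2 := ibp_cos (u := u) (c := 1 - τ * α * 0) hd2 i1 i2
      ((wt_tendsto_one hα).sub ((wt_tendsto_zero hα hα).const_mul _))
      (by simpa using (wt_tendsto_atTop hα hτ 0).sub ((wt_tendsto_atTop hα hτ α).const_mul (τ * α)))
    have e3 : u ^ 2 * |dens' α τ u| = π⁻¹ * |u * (u * ∫ t in Ioi 0, Real.sin (t * u) * wt α τ 1 t)| := by
      unfold dens'
      rw [abs_mul, abs_neg, abs_of_pos (a := π⁻¹) (by positivity), abs_mul, abs_mul, ← sq_abs u]; ring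
    rw [e3, e1, e2, abs_neg]
    gcongr
    exact abs_int_trig_le i2 (by fun_prop) fun _ => Real.abs_sin_le_one _

lemma dens_hasDerivAt {α τ : ℝ} (h1 : 1 < α) (hτ : 0 < τ) (u : ℝ) :
    HasDerivAt (dens α τ) (dens' α τ u) u := by
  have hα : 0 < α := by linarith
  have i0 : IntegrableOn (wt α τ 0) (Ioi 0) := wt_integrable hα hτ (by norm_num)
  have i1 : IntegrableOn (wt α τ 1) (Ioi 0) := wt_integrable hα hτ (by norm_num)
  have hm0 := wt_measurable α τ 0
  have hm1 := wt_measurable α τ 1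
  have h := hasDerivAt_integral_of_dominated_loc_of_deriv_le
    (μ := volume.restrict (Ioi (0:ℝ))) (F := fun u t => Real.cos (t * u) * wt α τ 0 t)
    (F' := fun u t => -Real.sin (t * u) * wt α τ 1 t) (x₀ := u) (s := univ)
    (bound := fun t => |wt α τ 1 t|) univ_mem
    (Eventually.of_forall fun x => by fun_prop)
    (int_trig_mul i0 (by fun_prop) fun _ => Real.abs_cos_le_one _)
    (by fun_prop)
    (Eventually.of_forall fun t x _ => by
      rw [norm_mul, norm_neg, Real.norm_eq_abs, Real.norm_eq_abs]
      exact mul_le_of_le_one_left (abs_nonneg _) (Real.abs_sin_le_one _))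
    i1.abs
    (by
      filter_upwards [ae_restrict_mem measurableSet_Ioi] with t ht x _
      have h2 : wt α τ 1 t = t * wt α τ 0 t := by simp [wt]
      have := (((hasDerivAt_id x).const_mul t).cos).mul_const
        (wt α τ 0 t)
      refine this.congr_deriv ?_
      rw [h2]; simp; ring)
  have h2 := h.2.const_mul π⁻¹
  refine h2.congr_deriv ?_
  unfold dens'
  simp only [neg_mul, integral_neg]
  ring

lemma dens_shift {α τ : ℝ} (h1 : 1 < α) (hτ : 0 < τ) :
    ∃ C, 0 ≤ C ∧ ∀ u δ, |δ| ≤ 1 → |dens α τ (u + δ) - dens α τ u| ≤ C * |δ| * (1 + u ^ 2)⁻¹ := by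
  obtain ⟨C, hC, hb⟩ := dens'_bound h1 hτ
  refine ⟨C * 3, by positivity, fun u δ hδ => ?_⟩
  have h := Convex.norm_image_sub_le_of_norm_hasDerivWithin_le (f := dens α τ) (f' := dens' α τ)
    (s := Icc (u - 1) (u + 1)) (x := u) (y := u + δ) (C := C * 3 * (1 + u ^ 2)⁻¹)
    (fun x _ => (dens_hasDerivAt h1 hτ x).hasDerivWithinAt) (fun x hx => by
      refine (hb x).trans ?_
      rw [mul_assoc]
      gcongr
      rw [← div_eq_mul_inv, le_div_iff₀ (by positivity), inv_mul_le_iff₀ (by positivity)]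
      have : (u - x) ^ 2 ≤ 1 := by
        rw [sq_le_one_iff_abs_le_one, abs_le]; constructor <;> linarith [hx.1, hx.2]
      nlinarith [sq_nonneg (u - 2 * x)]) (convex_Icc _ _)
    (by constructor <;> linarith) (by rw [abs_le] at hδ; constructor <;> linarith)
  simp only [add_sub_cancel_left, Real.norm_eq_abs] at h
  calc _ ≤ _ := h
    _ = _ := by ring

end S18

namespace S18

open scoped FourierTransform in
lemma dens_integral {α τ : ℝ} (h1 : 1 < α) (hτ : 0 < τ) (t : ℝ) :
    ∫ u : ℝ, dens α τ u • Complex.exp (t * u * Complex.I) =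
      Complex.exp (-((τ * |t| ^ α : ℝ) : ℂ)) := by
  have hα : 0 < α := by linarith
  have hEint : Integrable (fun v : ℝ => Real.exp (-τ * |v| ^ α)) := by
    by_contra hcon
    have h2 := integral_undef hcon
    rw [integral_comp_abs (f := fun v => Real.exp (-τ * v ^ α))] at h2
    have h3 := integral_rpow_mul_exp_neg_mul_rpow (p := α) (q := 0) (b := τ) hα (by norm_num) hτ
    simp only [Real.rpow_zero, one_mul] at h3
    rw [h3] at h2
    have : 0 < Real.Gamma ((0 + 1) / α) := Real.Gamma_pos_of_pos (by positivity)
    have : 0 < τ ^ (-(0 + 1) / α) := by positivity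
    have h4 : 0 < 2 * (τ ^ (-(0 + 1) / α) * (1 / α) * Real.Gamma ((0 + 1) / α)) := by positivity
    linarith
  set F : ℝ → ℂ := fun v => ((Real.exp (-τ * |v| ^ α) : ℝ) : ℂ) with hF
  have hFc : Continuous F := by
    apply Complex.continuous_ofReal.comp
    apply Real.continuous_exp.comp
    apply Continuous.mul continuous_const
    exact continuous_abs.rpow_const (fun x => Or.inr hα.le)
  have hFi : Integrable F := hEint.ofReal
  have hFF : ∀ w : ℝ, 𝓕 F w = ((2 * π * dens α τ (2 * π * w) : ℝ) : ℂ) := by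
    intro w
    rw [Real.fourier_eq']
    have e1 : ∀ v : ℝ, Complex.exp (((-2 * π * inner ℝ v w : ℝ) : ℂ) * Complex.I) • F v =
        ((Real.cos (2 * π * v * w) * Real.exp (-τ * |v| ^ α) : ℝ) : ℂ) -
        ((Real.sin (2 * π * v * w) * Real.exp (-τ * |v| ^ α) : ℝ) : ℂ) * Complex.I := by
      intro v
      have : (-2 * π * inner ℝ v w : ℝ) = -(2 * π * v * w) := by
        simp [inner]; ring
      rw [this, Complex.exp_mul_I, ← Complex.ofReal_cos, ← Complex.ofReal_sin, Real.cos_neg,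
        Real.sin_neg]
      simp only [hF, smul_eq_mul]
      push_cast; ring
    simp_rw [e1]
    have ic : Integrable (fun v : ℝ => Real.cos (2 * π * v * w) * Real.exp (-τ * |v| ^ α)) := by
      apply Integrable.bdd_mul (c := 1) hEint (by fun_prop)
      exact Eventually.of_forall fun x => Real.abs_cos_le_one _
    have is : Integrable (fun v : ℝ => Real.sin (2 * π * v * w) * Real.exp (-τ * |v| ^ α)) := by
      apply Integrable.bdd_mul (c := 1) hEint (by fun_prop)
      exact Eventually.of_forall fun x => Real.abs_sin_le_one _
    rw [integral_sub ic.ofReal (is.ofReal.mul_const _), integral_mul_const]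
    erw [integral_complex_ofReal, integral_complex_ofReal]
    have z : ∫ v : ℝ, Real.sin (2 * π * v * w) * Real.exp (-τ * |v| ^ α) = 0 := by
      have := integral_neg_eq_self
        (fun v : ℝ => Real.sin (2 * π * v * w) * Real.exp (-τ * |v| ^ α)) volume
      simp only [mul_neg, neg_mul, Real.sin_neg, abs_neg, integral_neg] at this
      simp only [neg_mul]
      linarith
    rw [z]
    have c : ∫ v : ℝ, Real.cos (2 * π * v * w) * Real.exp (-τ * |v| ^ α) =
        2 * π * dens α τ (2 * π * w) := by
      have := integral_comp_abs (f := fun v : ℝ => Real.cos (v * (2 * π * w)) * wt α τ 0 v)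
      unfold dens
      rw [show 2 * π * (π⁻¹ * ∫ t in Ioi 0, Real.cos (t * (2 * π * w)) * wt α τ 0 t) =
        2 * ∫ t in Ioi 0, Real.cos (t * (2 * π * w)) * wt α τ 0 t by rw [← mul_assoc, mul_assoc 2 π, mul_inv_cancel₀ (by positivity), mul_one], ← this]
      congr 1; ext v
      simp only [wt, Real.rpow_zero, one_mul]
      congr 1
      rcases abs_cases v with ⟨h, _⟩ | ⟨h, _⟩
      · rw [h]; congr 1; ring
      · rw [h, ← Real.cos_neg]; congr 1; ring
    rw [c]; simp
  obtain ⟨C, hC, hb⟩ := dens_bound h1 hτ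
  have hdc : Continuous (dens α τ) :=
    continuous_iff_continuousAt.2 fun u => (dens_hasDerivAt h1 hτ u).continuousAt
  have hdi : Integrable (dens α τ) := by
    refine (integrable_inv_one_add_sq.const_mul C).mono' hdc.aestronglyMeasurable ?_
    exact Eventually.of_forall fun x => hb x
  have hFFi : Integrable (𝓕 F) := by
    have : 𝓕 F = fun w => ((2 * π * dens α τ (2 * π * w) : ℝ) : ℂ) := funext hFF
    rw [this]
    exact ((hdi.comp_mul_left' (by positivity)).const_mul _).ofReal
  have hinv := congrFun (hFc.fourierInv_fourier_eq hFi hFFi) t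
  rw [Real.fourierInv_eq'] at hinv
  simp_rw [hFF] at hinv
  have h4 := Measure.integral_comp_mul_left
    (fun u : ℝ => dens α τ u • Complex.exp (t * u * Complex.I)) (2 * π)
  rw [abs_of_pos (by positivity)] at h4
  have h5 : ∫ u : ℝ, dens α τ u • Complex.exp (t * u * Complex.I) = (2 * π) •
      ∫ x : ℝ, dens α τ (2 * π * x) • Complex.exp (t * (2 * π * x : ℝ) * Complex.I) := by
    rw [h4, smul_smul, mul_inv_cancel₀ (by positivity), one_smul]
  rw [h5, ← integral_smul]
  have h6 : Complex.exp (-((τ * |t| ^ α : ℝ) : ℂ)) = F t := by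
    simp [hF]
  rw [h6, ← hinv]
  congr 1; ext x
  have : (2 * π * inner ℝ x t : ℝ) = t * (2 * π * x) := by
    simp [inner]; ring
  rw [this]
  simp only [Complex.real_smul, smul_eq_mul]
  push_cast; ring

lemma IsSAS.density_eq {α τ : ℝ} (h1 : 1 < α) (hτ : 0 < τ) {ρ : Measure ℝ} [IsProbabilityMeasure ρ]
    (h : IsSAS α τ ρ) :
    ρ + volume.withDensity (fun u => ENNReal.ofReal (-dens α τ u)) =
      volume.withDensity (fun u => ENNReal.ofReal (dens α τ u)) := by
  obtain ⟨C, hC, hb⟩ := dens_bound h1 hτ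
  have hdc : Continuous (dens α τ) :=
    continuous_iff_continuousAt.2 fun u => (dens_hasDerivAt h1 hτ u).continuousAt
  have hdi : Integrable (dens α τ) := by
    refine (integrable_inv_one_add_sq.const_mul C).mono' hdc.aestronglyMeasurable ?_
    exact Eventually.of_forall fun x => hb x
  have f1 : IsFiniteMeasure (volume.withDensity (fun u => ENNReal.ofReal (-dens α τ u))) :=
    isFiniteMeasure_withDensity_ofReal hdi.neg.2
  have f2 : IsFiniteMeasure (volume.withDensity (fun u => ENNReal.ofReal (dens α τ u))) :=
    isFiniteMeasure_withDensity_ofReal hdi.2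
  apply Measure.ext_of_charFun
  ext t
  have hbd : ∀ (μ : Measure ℝ) [IsFiniteMeasure μ],
      Integrable (fun x : ℝ => Complex.exp (t * x * Complex.I)) μ := by
    intro μ _
    apply Integrable.of_bound (C := 1) (by fun_prop)
    refine Eventually.of_forall fun x => ?_
    rw [← Complex.ofReal_mul, Complex.norm_exp_ofReal_mul_I]
  have hcf := h t
  rw [charFun_apply_real] at hcf
  rw [charFun_apply_real, charFun_apply_real, integral_add_measure (hbd _) (hbd _), hcf,
    ← dens_integral h1 hτ t]
  rw [integral_withDensity_eq_integral_toReal_smul (by fun_prop) (by simp),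
    integral_withDensity_eq_integral_toReal_smul (by fun_prop) (by simp), ← integral_add]
  · congr 1; ext x
    rw [← add_smul]; congr 1
    rw [ENNReal.toReal_ofReal', ENNReal.toReal_ofReal']
    rcases le_total (dens α τ x) 0 with h | h
    · rw [max_eq_left (by linarith), max_eq_right h]; ring
    · rw [max_eq_right (by linarith), max_eq_left h]; ring
  · have i := hdi.ofReal (𝕜 := ℂ)
    refine (i.bdd_mul (c := 1) (f := fun x : ℝ => Complex.exp (t * x * Complex.I))
      (by fun_prop) (Eventually.of_forall fun x => ?_)).congr ?_
    · rw [← Complex.ofReal_mul, Complex.norm_exp_ofReal_mul_I]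
    · exact Eventually.of_forall fun x => by simp [mul_comm]
  · exact (integrable_withDensity_iff_integrable_smul' (by fun_prop) (by simp)).1 (hbd _)

lemma IsSAS.absCont {α τ : ℝ} (h1 : 1 < α) (hτ : 0 < τ) {ρ : Measure ℝ} [IsProbabilityMeasure ρ]
    (h : IsSAS α τ ρ) : ρ ≪ volume := by
  refine Measure.AbsolutelyContinuous.trans ?_ (withDensity_absolutelyContinuous volume
    (fun u => ENNReal.ofReal (dens α τ u)))
  rw [← h.density_eq h1 hτ]
  exact Measure.AbsolutelyContinuous.add_right Measure.AbsolutelyContinuous.rfl _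

lemma IsSAS.integral_dens {α τ : ℝ} (h1 : 1 < α) (hτ : 0 < τ) {ρ : Measure ℝ}
    [IsProbabilityMeasure ρ]
    (h : IsSAS α τ ρ) {f : ℝ → ℝ} (hf : Measurable f)
    (hi : Integrable (fun u => f u * (1 + u ^ 2)⁻¹)) :
    Integrable f ρ ∧ Integrable (fun u => f u * dens α τ u) ∧
      ∫ u, f u ∂ρ = ∫ u, f u * dens α τ u := by
  obtain ⟨C, hC, hb⟩ := dens_bound h1 hτ
  have hdc : Continuous (dens α τ) :=
    continuous_iff_continuousAt.2 fun u => (dens_hasDerivAt h1 hτ u).continuousAt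
  have key : ∀ g : ℝ → ℝ, Measurable g → (∀ u, |g u| ≤ |dens α τ u|) →
      Integrable (fun u => f u * g u) := by
    intro g hg hgb
    refine (hi.norm.const_mul C).mono' (by fun_prop) (Eventually.of_forall fun u => ?_)
    rw [norm_mul, norm_mul, Real.norm_eq_abs (g u), Real.norm_eq_abs (_⁻¹),
      abs_of_pos (a := (1 + u ^ 2)⁻¹) (by positivity)]
    calc ‖f u‖ * |g u| ≤ ‖f u‖ * (C * (1 + u ^ 2)⁻¹) := by
          gcongr; exact (hgb u).trans (hb u)
      _ = _ := by ring
  have hp : Integrable (fun u => f u * max (dens α τ u) 0) := key _ (by fun_prop) fun u => by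
    rw [abs_of_nonneg (le_max_right _ _)]; exact max_le (le_abs_self _) (abs_nonneg _)
  have hn : Integrable (fun u => f u * max (-dens α τ u) 0) := key _ (by fun_prop) fun u => by
    rw [abs_of_nonneg (le_max_right _ _)]; exact max_le (neg_le_abs _) (abs_nonneg _)
  have ip : Integrable f (volume.withDensity (fun u => ENNReal.ofReal (dens α τ u))) := by
    rw [integrable_withDensity_iff_integrable_smul' (by fun_prop) (by simp)]
    simpa [ENNReal.toReal_ofReal', mul_comm] using hp
  have hsum := h.density_eq h1 hτ
  rw [← hsum] at ip
  have ir := integrable_add_measure.1 ip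
  refine ⟨ir.1, key _ (by fun_prop) fun u => le_rfl, ?_⟩
  have e := integral_add_measure ir.1 ir.2
  rw [hsum, integral_withDensity_eq_integral_toReal_smul (by fun_prop) (by simp),
    integral_withDensity_eq_integral_toReal_smul (by fun_prop) (by simp)] at e
  simp only [ENNReal.toReal_ofReal', smul_eq_mul] at e
  rw [eq_sub_of_add_eq e.symm, ← integral_sub]
  · congr 1; ext u
    rcases le_total (dens α τ u) 0 with h | h
    · rw [max_eq_left (a := -dens α τ u) (by linarith), max_eq_right h]; ring
    · rw [max_eq_right (a := -dens α τ u) (by linarith), max_eq_left h]; ring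
  · simpa [mul_comm] using hp
  · simpa [mul_comm] using hn

end S18

namespace S18

lemma pw_sub {β : ℝ} (h0 : 0 ≤ β) (h1 : β ≤ 1) (v z : ℝ) :
    1 + |v + z| ^ β ≤ (1 + |v| ^ β) * (1 + |z| ^ β) := by
  have h : |v + z| ^ β ≤ |v| ^ β + |z| ^ β :=
    (Real.rpow_le_rpow (abs_nonneg _) (abs_add_le v z) h0).trans
      (Real.rpow_add_le_add_rpow (abs_nonneg _) (abs_nonneg _) h0 h1)
  have : 0 ≤ |v| ^ β := by positivity
  have : 0 ≤ |z| ^ β := by positivity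
  nlinarith

lemma wtz_integrable {β : ℝ} (h0 : 0 < β) (h1 : β < 1) :
    Integrable (fun z : ℝ => (1 + |z| ^ β) * (1 + z ^ 2)⁻¹) := by
  have h := integrable_rpow_neg_one_add_norm_sq (E := ℝ) (μ := volume) (r := 2 - β)
    (by simp; linarith)
  refine (h.const_mul 2).mono' (by fun_prop) (Eventually.of_forall fun z => ?_)
  rw [Real.norm_eq_abs, abs_of_nonneg (by positivity), Real.norm_eq_abs, sq_abs]
  have e : (1 + z ^ 2) ^ (-(2 - β) / 2) = (1 + z ^ 2) ^ (β / 2) * (1 + z ^ 2)⁻¹ := by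
    rw [← Real.rpow_neg_one, ← Real.rpow_add (by positivity)]; congr 1; ring
  rw [e, ← mul_assoc]
  gcongr
  have e1 : (1:ℝ) ≤ (1 + z ^ 2) ^ (β / 2) := Real.one_le_rpow (by nlinarith [sq_nonneg z]) (by positivity)
  have e2 : |z| ^ β ≤ (1 + z ^ 2) ^ (β / 2) := by
    calc |z| ^ β = (|z| ^ (2:ℝ)) ^ (β / 2) := by
          rw [← Real.rpow_mul (abs_nonneg _)]; congr 1; ring
      _ ≤ _ := by
        gcongr
        rw [Real.rpow_two, sq_abs]; linarith
  linarith

/-- smoothing of `K` by convolution with `ρ` -/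
noncomputable def smo (K : ℝ → ℝ) (ρ : Measure ℝ) (x : ℝ) : ℝ := ∫ z, K (x + z) ∂ρ

lemma smo_measurable {K : ℝ → ℝ} (hK : Measurable K) (ρ : Measure ℝ) [IsProbabilityMeasure ρ] :
    Measurable (smo K ρ) := by
  have : StronglyMeasurable (fun x => ∫ z, K (x + z) ∂ρ) := by
    apply StronglyMeasurable.integral_prod_right
    exact Measurable.stronglyMeasurable (by
      show Measurable fun p : ℝ × ℝ => K (p.1 + p.2)
      fun_prop)
  exact this.measurable

lemma smo_props {α τ β C : ℝ} (h1 : 1 < α) (hτ : 0 < τ) (hβ0 : 0 < β) (hβ1 : β < 1)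
    {K : ℝ → ℝ} (hK : Measurable K) (hC : 0 ≤ C) (hKb : ∀ z, |K z| ≤ C * (1 + |z| ^ β))
    {ρ : Measure ℝ} [IsProbabilityMeasure ρ] (hρ : IsSAS α τ ρ) :
    (∀ x, Integrable (fun z => K (x + z)) ρ) ∧
    (∃ D, 0 ≤ D ∧ ∀ x, |smo K ρ x| ≤ D * (1 + |x| ^ β)) ∧
    (∃ D, 0 ≤ D ∧ ∀ v y, (smo K ρ (v + y) - smo K ρ v) ^ 2 ≤
      D * ((1 + |v| ^ β) ^ 2 * min (y ^ 2) (|y| ^ (2 * β)))) := by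
  have hw := wtz_integrable hβ0 hβ1
  set W := ∫ z : ℝ, (1 + |z| ^ β) * (1 + z ^ 2)⁻¹ with hW
  have hW0 : 0 ≤ W := integral_nonneg fun z => by positivity
  have hb2 : ∀ x z, |K (x + z)| ≤ C * (1 + |x| ^ β) * (1 + |z| ^ β) := by
    intro x z
    calc _ ≤ _ := hKb _
      _ ≤ C * ((1 + |x| ^ β) * (1 + |z| ^ β)) := by gcongr; exact pw_sub hβ0.le hβ1.le x z
      _ = _ := by ring
  have hi : ∀ x, Integrable (fun z => K (x + z) * (1 + z ^ 2)⁻¹) := by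
    intro x
    refine (hw.const_mul (C * (1 + |x| ^ β))).mono' (by fun_prop) (Eventually.of_forall fun z => ?_)
    rw [norm_mul, Real.norm_eq_abs, Real.norm_eq_abs, abs_of_pos (a := (1 + z ^ 2)⁻¹) (by positivity),
      ← mul_assoc]
    gcongr
    exact hb2 x z
  have hd := fun x => hρ.integral_dens h1 hτ (f := fun z => K (x + z)) (by fun_prop) (hi x)
  obtain ⟨D1, hD1, hb⟩ := dens_bound h1 hτ
  have hB : ∀ x, |smo K ρ x| ≤ C * D1 * W * (1 + |x| ^ β) := by
    intro x
    unfold smo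
    rw [(hd x).2.2, ← Real.norm_eq_abs]
    calc _ ≤ ∫ z : ℝ, C * (1 + |x| ^ β) * D1 * ((1 + |z| ^ β) * (1 + z ^ 2)⁻¹) := by
          apply norm_integral_le_of_norm_le (hw.const_mul _)
          refine Eventually.of_forall fun z => ?_
          rw [norm_mul, Real.norm_eq_abs, Real.norm_eq_abs]
          calc _ ≤ C * (1 + |x| ^ β) * (1 + |z| ^ β) * (D1 * (1 + z ^ 2)⁻¹) := by
                gcongr
                · exact hb2 x z
                · exact hb z
            _ = _ := by ring
      _ = _ := by rw [integral_const_mul]; ring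
  obtain ⟨D2, hD2, hs⟩ := dens_shift h1 hτ
  have hS : ∀ v y, |y| ≤ 1 → |smo K ρ (v + y) - smo K ρ v| ≤ C * D2 * W * (1 + |v| ^ β) * |y| := by
    intro v y hy
    have e1 : smo K ρ (v + y) = ∫ z, K (v + z) * dens α τ (z - y) := by
      unfold smo
      rw [(hd (v + y)).2.2, ← integral_sub_right_eq_self _ y]
      congr 1; ext z; congr 2; ring
    have i1 : Integrable (fun z => K (v + z) * dens α τ (z - y)) := by
      have := (hd (v + y)).2.1.comp_sub_right y
      refine this.congr (Eventually.of_forall fun z => ?_)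
      show K (v + y + (z - y)) * _ = _
      congr 2; ring
    have e2 : smo K ρ v = ∫ z, K (v + z) * dens α τ z := (hd v).2.2
    rw [e1, e2, ← integral_sub i1 (hd v).2.1, ← Real.norm_eq_abs]
    calc _ ≤ ∫ z : ℝ, C * (1 + |v| ^ β) * (D2 * |y|) * ((1 + |z| ^ β) * (1 + z ^ 2)⁻¹) := by
          apply norm_integral_le_of_norm_le (hw.const_mul _)
          refine Eventually.of_forall fun z => ?_
          rw [← mul_sub, norm_mul, Real.norm_eq_abs, Real.norm_eq_abs]
          have := hs z (-y) (by rwa [abs_neg])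
          rw [abs_neg, ← sub_eq_add_neg] at this
          calc _ ≤ C * (1 + |v| ^ β) * (1 + |z| ^ β) * (D2 * |y| * (1 + z ^ 2)⁻¹) := by
                gcongr
                exact hb2 v z
            _ = _ := by ring
      _ = _ := by rw [integral_const_mul]; ring
  refine ⟨fun x => (hd x).1, ⟨_, by positivity, hB⟩, ?_⟩
  set A := C * D2 * W with hA
  set B := C * D1 * W with hBdef
  have hA0 : 0 ≤ A := by positivity
  have hB0 : 0 ≤ B := by positivity
  refine ⟨A ^ 2 + (3 * B) ^ 2, by positivity, fun v y => ?_⟩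
  have hv : 0 ≤ |v| ^ β := by positivity
  rcases le_total |y| 1 with hy | hy
  · have hm : min (y ^ 2) (|y| ^ (2 * β)) = y ^ 2 := by
      apply min_eq_left
      rw [← sq_abs, ← Real.rpow_two]
      exact Real.rpow_le_rpow_of_exponent_ge' (abs_nonneg _) hy (by positivity) (by linarith)
    rw [hm, ← sq_abs]
    calc _ ≤ (A * (1 + |v| ^ β) * |y|) ^ 2 := by gcongr; exact hS v y hy
      _ = A ^ 2 * ((1 + |v| ^ β) ^ 2 * y ^ 2) := by rw [mul_pow, mul_pow, sq_abs]; ring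
      _ ≤ _ := by gcongr; nlinarith [sq_nonneg (3 * B)]
  · have hm : min (y ^ 2) (|y| ^ (2 * β)) = |y| ^ (2 * β) := by
      apply min_eq_right
      rw [← sq_abs, ← Real.rpow_two]
      exact Real.rpow_le_rpow_of_exponent_le hy (by linarith)
    have hy1 : 1 ≤ |y| ^ β := Real.one_le_rpow hy hβ0.le
    rw [hm, ← sq_abs, show |y| ^ (2 * β) = (|y| ^ β) ^ 2 by
      rw [← Real.rpow_natCast, ← Real.rpow_mul (abs_nonneg _)]; congr 1; push_cast; ring]
    have : |smo K ρ (v + y) - smo K ρ v| ≤ 3 * B * (1 + |v| ^ β) * |y| ^ β := by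
      calc _ ≤ |smo K ρ (v + y)| + |smo K ρ v| := abs_sub _ _
        _ ≤ B * ((1 + |v| ^ β) * (1 + |y| ^ β)) + B * (1 + |v| ^ β) := by
          refine add_le_add ((hB _).trans ?_) (hB _)
          gcongr
          exact pw_sub hβ0.le hβ1.le _ _
        _ = B * (1 + |v| ^ β) * (2 + |y| ^ β) := by ring
        _ ≤ B * (1 + |v| ^ β) * (3 * |y| ^ β) := by gcongr; linarith
        _ = _ := by ring
    calc _ ≤ (3 * B * (1 + |v| ^ β) * |y| ^ β) ^ 2 := by gcongr
      _ = (3 * B) ^ 2 * ((1 + |v| ^ β) ^ 2 * (|y| ^ β) ^ 2) := by ring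
      _ ≤ _ := by gcongr; nlinarith [sq_nonneg A]

end S18

namespace S18

lemma int_abs_rpow_sum {α : ℝ} (h1 : 1 < α) {X : Type*} [MeasurableSpace X] {μ : Measure X}
    {f : ℕ → X → ℝ} (hf : ∀ k, Measurable (f k)) (hi : ∀ k, Integrable (fun x => |f k x| ^ α) μ)
    (s : Finset ℕ) (u : ℕ → ℝ) : Integrable (fun x => |∑ k ∈ s, u k * f k x| ^ α) μ := by
  have hα : (ENNReal.ofReal α).toReal = α := ENNReal.toReal_ofReal (by linarith)
  have hm : ∀ k, MemLp (f k) (ENNReal.ofReal α) μ := by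
    intro k
    rw [← integrable_norm_rpow_iff (hf k).aestronglyMeasurable (by simp; linarith) (by simp), hα]
    exact hi k
  have hs : MemLp (fun x => ∑ k ∈ s, u k * f k x) (ENNReal.ofReal α) μ :=
    memLp_finsetSum s fun k _ => (hm k).const_mul (u k)
  rw [← integrable_norm_rpow_iff hs.1 (by simp; linarith) (by simp), hα] at hs
  exact hs

lemma exp_limit {X : Type*} [MeasurableSpace X] {μ : Measure X} [IsProbabilityMeasure μ]
    {g : X → ℝ} (hg : Integrable g μ) (h0 : ∀ x, 0 ≤ g x) :
    Tendsto (fun n : ℕ => (∫ x, Real.exp (-((n:ℝ)⁻¹ * g x)) ∂μ) ^ n) atTop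
      (𝓝 (Real.exp (-∫ x, g x ∂μ))) := by
  have hi : ∀ n : ℕ, Integrable (fun x => Real.exp (-((n:ℝ)⁻¹ * g x))) μ := by
    intro n
    have hgm := hg.aestronglyMeasurable
    refine Integrable.of_bound (C := 1) (by
      exact Real.continuous_exp.comp_aestronglyMeasurable (hgm.const_mul _).neg) ?_
    refine Eventually.of_forall fun x => ?_
    rw [Real.norm_eq_abs, Real.abs_exp, Real.exp_le_one_iff]
    have := h0 x
    have : 0 ≤ (n:ℝ)⁻¹ * g x := by positivity
    linarith
  have key : Tendsto (fun n : ℕ => (n:ℝ) * (∫ x, Real.exp (-((n:ℝ)⁻¹ * g x)) ∂μ - 1)) atTop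
      (𝓝 (-∫ x, g x ∂μ)) := by
    have e : ∀ n : ℕ, (n:ℝ) * (∫ x, Real.exp (-((n:ℝ)⁻¹ * g x)) ∂μ - 1) =
        ∫ x, (n:ℝ) * (Real.exp (-((n:ℝ)⁻¹ * g x)) - 1) ∂μ := by
      intro n
      rw [integral_const_mul, integral_sub (hi n) (integrable_const _)]
      simp
    simp_rw [e]
    rw [← integral_neg]
    apply tendsto_integral_of_dominated_convergence g
    · intro n
      exact (((hi n).sub (integrable_const 1)).const_mul _).aestronglyMeasurable
    · exact hg
    · intro n
      refine Eventually.of_forall fun x => ?_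
      rcases Nat.eq_zero_or_pos n with rfl | hn
      · simpa using h0 x
      have hn' : (0:ℝ) < n := by exact_mod_cast hn
      have := h0 x
      have h3 : Real.exp (-((n:ℝ)⁻¹ * g x)) ≤ 1 := by
        rw [Real.exp_le_one_iff]
        have : 0 ≤ (n:ℝ)⁻¹ * g x := by positivity
        linarith
      have h4 := Real.add_one_le_exp (-((n:ℝ)⁻¹ * g x))
      rw [Real.norm_eq_abs, abs_of_nonpos (by nlinarith)]
      calc -((n:ℝ) * (Real.exp (-((n:ℝ)⁻¹ * g x)) - 1))
          = n * (1 - Real.exp (-((n:ℝ)⁻¹ * g x))) := by ring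
        _ ≤ n * ((n:ℝ)⁻¹ * g x) := by gcongr; linarith
        _ = g x := by field_simp
    · refine Eventually.of_forall fun x => ?_
      have hd : HasDerivAt (fun t : ℝ => Real.exp (-(t * g x))) (-(g x)) 0 := by
        have := (((hasDerivAt_id (0:ℝ)).mul_const (g x)).neg).exp
        simpa using this
      have h5 := hd.tendsto_slope_zero
      have h6 : Tendsto (fun n : ℕ => (n:ℝ)⁻¹) atTop (𝓝[≠] 0) := by
        rw [tendsto_nhdsWithin_iff]
        refine ⟨tendsto_inv_atTop_nhds_zero_nat, ?_⟩
        filter_upwards [eventually_gt_atTop 0] with n hn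
        simp; omega
      have h7 := h5.comp h6
      refine h7.congr fun n => ?_
      simp
  have := Real.tendsto_one_add_pow_exp_of_tendsto key
  refine this.congr fun n => ?_
  congr 1; ring

lemma tight_pi {μ : ℕ → Measure (ℕ → ℝ)}
    (h : ∀ k, IsTightMeasureSet (range fun n => (μ n).map (fun x => x k))) :
    IsTightMeasureSet (range μ) := by
  rw [isTightMeasureSet_iff_exists_isCompact_measure_compl_le]
  intro ε hε
  obtain ⟨δ, hδ, hsum⟩ := ENNReal.exists_pos_sum_of_countable' hε.ne' ℕ
  have h' := fun k => isTightMeasureSet_iff_exists_isCompact_measure_compl_le.1 (h k) (δ k) (hδ k)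
  choose K hK hb using h'
  refine ⟨Set.pi univ K, isCompact_univ_pi hK, ?_⟩
  rintro _ ⟨n, rfl⟩
  have : (Set.pi univ K)ᶜ ⊆ ⋃ k, (fun x : ℕ → ℝ => x k) ⁻¹' (K k)ᶜ := by
    intro x hx
    simp only [Set.mem_compl_iff, Set.mem_pi, Set.mem_univ, true_implies, not_forall] at hx
    simpa using hx
  calc μ n (Set.pi univ K)ᶜ ≤ _ := measure_mono this
    _ ≤ ∑' k, μ n ((fun x : ℕ → ℝ => x k) ⁻¹' (K k)ᶜ) := measure_iUnion_le _
    _ ≤ ∑' k, δ k := by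
      refine ENNReal.tsum_le_tsum fun k => ?_
      have := hb k _ ⟨n, rfl⟩
      rwa [Measure.map_apply (by fun_prop) (hK k).measurableSet.compl] at this
    _ ≤ ε := hsum.le

lemma exists_limit {μ : ℕ → Measure (ℕ → ℝ)} [∀ n, IsProbabilityMeasure (μ n)]
    {φ : Finset ℕ → (ℕ → ℝ) → ℂ}
    (hlim : ∀ s u, Tendsto (fun n => ∫ x, Complex.exp (Complex.I *
      ((∑ k ∈ s, u k * x k : ℝ) : ℂ)) ∂μ n) atTop (𝓝 (φ s u)))
    (hc : ∀ k, ContinuousAt (fun t : ℝ => φ {k} (fun _ => t)) 0) :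
    ∃ ν : Measure (ℕ → ℝ), IsProbabilityMeasure ν ∧ ∀ s u, ∫ x, Complex.exp (Complex.I *
      ((∑ k ∈ s, u k * x k : ℝ) : ℂ)) ∂ν = φ s u := by
  have ht : IsTightMeasureSet (range μ) := by
    apply tight_pi
    intro k
    have hpm : ∀ n, IsProbabilityMeasure ((μ n).map (fun x => x k)) := fun n =>
      Measure.isProbabilityMeasure_map (measurable_pi_apply k).aemeasurable
    refine isTightMeasureSet_of_tendsto_charFun (hc k) fun t => ?_
    refine (hlim {k} (fun _ => t)).congr fun n => ?_
    rw [charFun_apply_real, integral_map (measurable_pi_apply k).aemeasurable (by fun_prop)]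
    congr 1; ext x
    congr 1
    simp; ring
  set μ' : ℕ → ProbabilityMeasure (ℕ → ℝ) := fun n => ⟨μ n, inferInstance⟩ with hμ'
  have hcpt : IsCompact (closure (range μ')) := by
    apply isCompact_closure_of_isTightMeasureSet
    refine ht.subset ?_
    rintro _ ⟨_, ⟨n, rfl⟩, rfl⟩
    exact ⟨n, rfl⟩
  obtain ⟨ν, -, hν⟩ := hcpt.exists_mapClusterPt (f := atTop) (u := μ') (by
    refine tendsto_principal.2 ?_
    exact Eventually.of_forall fun n => subset_closure ⟨n, rfl⟩)
  refine ⟨ν, inferInstance, fun s u => ?_⟩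
  set G : BoundedContinuousFunction (ℕ → ℝ) ℂ := BoundedContinuousFunction.ofNormedAddCommGroup
    (fun x => Complex.exp (Complex.I * ((∑ k ∈ s, u k * x k : ℝ) : ℂ))) (by fun_prop) 1
    (fun x => by rw [mul_comm, Complex.norm_exp_ofReal_mul_I]) with hG
  have hcont : Tendsto (fun m : ProbabilityMeasure (ℕ → ℝ) => ∫ x, G x ∂(m : Measure (ℕ → ℝ)))
      (𝓝 ν) (𝓝 (∫ x, G x ∂(ν : Measure (ℕ → ℝ)))) :=
    (ProbabilityMeasure.tendsto_iff_forall_integral_rclike_tendsto ℂ).1 tendsto_id G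
  have h1 := hν.tendsto_comp hcont
  have h2 : Tendsto ((fun m : ProbabilityMeasure (ℕ → ℝ) => ∫ x, G x ∂(m : Measure (ℕ → ℝ))) ∘ μ')
      atTop (𝓝 (φ s u)) := hlim s u
  exact eq_of_nhds_neBot (h1.neBot.mono (inf_le_inf_left _ h2))

lemma exists_law {α : ℝ} (h1 : 1 < α) {X : Type*} [MeasurableSpace X] {μ : Measure X}
    [IsProbabilityMeasure μ]
    {f : ℕ → X → ℝ} (hf : ∀ k, Measurable (f k)) (hi : ∀ k, Integrable (fun x => |f k x| ^ α) μ)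
    {ρ : Measure ℝ} [IsProbabilityMeasure ρ] (hρ : IsSAS α 1 ρ) :
    ∃ ν : Measure (ℕ → ℝ), IsProbabilityMeasure ν ∧ ∀ (s : Finset ℕ) (u : ℕ → ℝ),
      ∫ x, Complex.exp (Complex.I * ((∑ k ∈ s, u k * x k : ℝ) : ℂ)) ∂ν =
      Complex.exp (-((∫ x, |∑ k ∈ s, u k * f k x| ^ α ∂μ : ℝ) : ℂ)) := by
  have hα : 0 < α := by linarith
  set lam : Measure (ℕ → ℝ) := (μ.prod ρ).map (fun p k => f k p.1 * p.2) with hlam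
  have hmm : Measurable (fun (p : X × ℝ) (k : ℕ) => f k p.1 * p.2) := by
    rw [measurable_pi_iff]; intro k; have := hf k; fun_prop
  have : IsProbabilityMeasure lam := Measure.isProbabilityMeasure_map hmm.aemeasurable
  set S : (n : ℕ) → (Fin n → ℕ → ℝ) → ℕ → ℝ := fun n v k => (n:ℝ) ^ (-1 / α) * ∑ j, v j k with hS
  have hSm : ∀ n, Measurable (S n) := by
    intro n
    rw [measurable_pi_iff]; intro k; simp only [hS]; fun_prop
  set m : ℕ → Measure (ℕ → ℝ) := fun n => (Measure.pi (fun _ : Fin n => lam)).map (S n) with hm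
  have : ∀ n, IsProbabilityMeasure (m n) := fun n =>
    Measure.isProbabilityMeasure_map (hSm n).aemeasurable
  refine exists_limit (μ := m) (φ := fun s u =>
    Complex.exp (-((∫ x, |∑ k ∈ s, u k * f k x| ^ α ∂μ : ℝ) : ℂ))) ?_ ?_
  · intro s u
    have hg := int_abs_rpow_sum h1 hf hi s u
    have hl := exp_limit hg (fun x => by positivity)
    have hl' := (Complex.continuous_ofReal.tendsto _).comp hl
    simp only [Complex.ofReal_exp, Complex.ofReal_neg] at hl'
    refine hl'.congr' ?_
    filter_upwards [eventually_gt_atTop 0] with n hn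
    have hn' : (0:ℝ) < n := by exact_mod_cast hn
    simp only [Function.comp, hm]
    rw [integral_map (hSm n).aemeasurable (Measurable.aestronglyMeasurable (by fun_prop))]
    have e1 : ∀ v : Fin n → ℕ → ℝ, Complex.exp (Complex.I * ((∑ k ∈ s, u k * S n v k : ℝ) : ℂ)) =
        ∏ j, Complex.exp (Complex.I * (((n:ℝ) ^ (-1 / α) * ∑ k ∈ s, u k * v j k : ℝ) : ℂ)) := by
      intro v
      rw [← Complex.exp_sum, ← Finset.mul_sum, ← Complex.ofReal_sum]
      congr 3
      simp only [hS, Finset.mul_sum]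
      rw [Finset.sum_comm]
      refine Finset.sum_congr rfl fun _ _ => Finset.sum_congr rfl fun _ _ => by ring
    simp_rw [e1]
    rw [integral_fintype_prod_eq_pow (fun v : ℕ → ℝ =>
      Complex.exp (Complex.I * (((n:ℝ) ^ (-1 / α) * ∑ k ∈ s, u k * v k : ℝ) : ℂ))),
      Fintype.card_fin, Complex.ofReal_pow]
    congr 1
    rw [hlam, integral_map hmm.aemeasurable (Measurable.aestronglyMeasurable (by fun_prop)), integral_prod, ← integral_complex_ofReal]
    · congr 1; ext x
      have := hρ ((n:ℝ) ^ (-1 / α) * ∑ k ∈ s, u k * f k x)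
      rw [charFun_apply_real] at this
      rw [abs_mul, Real.mul_rpow (abs_nonneg _) (abs_nonneg _), one_mul,
        abs_of_nonneg (by positivity), ← Real.rpow_mul hn'.le, div_mul_cancel₀ _ hα.ne',
        Real.rpow_neg_one] at this
      rw [Complex.ofReal_exp, Complex.ofReal_neg, ← this]
      congr 1; ext z
      congr 1
      rw [mul_comm Complex.I, ← Complex.ofReal_mul]
      congr 2
      rw [mul_assoc, Finset.sum_mul]
      congr 1
      exact Finset.sum_congr rfl fun _ _ => by ring
    · apply Integrable.of_bound (C := 1)
      · apply Measurable.aestronglyMeasurable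
        have : Measurable fun v : ℕ → ℝ => Complex.exp (Complex.I * (((n:ℝ) ^ (-1 / α) * ∑ k ∈ s, u k * v k : ℝ) : ℂ)) := by
          fun_prop
        exact this.comp hmm
      · refine Eventually.of_forall fun x => ?_
        rw [mul_comm, Complex.norm_exp_ofReal_mul_I]
  · intro k
    simp only [Finset.sum_singleton, abs_mul]
    have : ∀ t : ℝ, ∫ x, (|t| * |f k x|) ^ α ∂μ = |t| ^ α * ∫ x, |f k x| ^ α ∂μ := by
      intro t
      rw [← integral_const_mul]
      congr 1; ext x
      rw [Real.mul_rpow (abs_nonneg _) (abs_nonneg _)]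
    simp_rw [this]
    apply Continuous.continuousAt
    have : Continuous fun t : ℝ => |t| ^ α := continuous_abs.rpow_const fun _ => Or.inr hα.le
    fun_prop

end S18

namespace S18

section five
variable {E : Type*} [MeasurableSpace E]

/-- two-sided i.i.d. product measure -/
noncomputable abbrev PP (ν : Measure E) : Measure (ℤ → E) := Measure.infinitePi (fun _ : ℤ => ν)

open Classical in
/-- `ω` on `A`, `ω'` off `A` -/
noncomputable def mrg (A : Set ℤ) (p : (ℤ → E) × (ℤ → E)) : ℤ → E :=
  fun i => if i ∈ A then p.1 i else p.2 i

/-- shift -/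
def shf (n : ℤ) (ω : ℤ → E) : ℤ → E := fun i => ω (i + n)

lemma mrg_measurable (A : Set ℤ) : Measurable (mrg (E := E) A) := by
  classical
  rw [measurable_pi_iff]
  intro i
  unfold mrg
  by_cases h : i ∈ A
  · simp only [h, if_true]; fun_prop
  · simp only [h, if_false]; fun_prop

lemma shf_measurable (n : ℤ) : Measurable (shf (E := E) n) := by
  rw [measurable_pi_iff]
  intro i
  unfold shf
  fun_prop

variable (ν : Measure E) [IsProbabilityMeasure ν]

lemma mrg_mp (A : Set ℤ) : MeasurePreserving (mrg A) ((PP ν).prod (PP ν)) (PP ν) := by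
  classical
  refine ⟨mrg_measurable A, ?_⟩
  apply Measure.eq_infinitePi
  intro s t ht
  rw [Measure.map_apply (mrg_measurable A) (MeasurableSet.pi s.countable_toSet fun i _ => ht i)]
  have : mrg A ⁻¹' ((s : Set ℤ).pi t) =
      ((s.filter (· ∈ A) : Finset ℤ) : Set ℤ).pi t ×ˢ ((s.filter (· ∉ A) : Finset ℤ) : Set ℤ).pi t := by
    ext ⟨ω, ω'⟩
    simp only [mem_preimage, Set.mem_pi, Finset.mem_coe, Finset.mem_filter, mem_prod, mrg]
    constructor
    · intro h
      refine ⟨fun i hi => ?_, fun i hi => ?_⟩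
      · simpa [hi.2] using h i hi.1
      · simpa [hi.2] using h i hi.1
    · rintro ⟨h1, h2⟩ i hi
      by_cases hA : i ∈ A
      · simpa [hA] using h1 i ⟨hi, hA⟩
      · simpa [hA] using h2 i ⟨hi, hA⟩
  rw [this, Measure.prod_prod, Measure.infinitePi_pi _ fun i _ => ht i,
    Measure.infinitePi_pi _ fun i _ => ht i]
  exact Finset.prod_filter_mul_prod_filter_not s (· ∈ A) fun i => ν (t i)

lemma shf_mp (n : ℤ) : MeasurePreserving (shf n) (PP ν) (PP ν) := by
  refine ⟨shf_measurable n, ?_⟩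
  apply Measure.eq_infinitePi
  intro s t ht
  have key : ∀ j i : ℤ, j = i → t j = t i := by rintro _ _ rfl; rfl
  rw [Measure.map_apply (shf_measurable n) (MeasurableSet.pi s.countable_toSet fun i _ => ht i)]
  have : shf n ⁻¹' ((s : Set ℤ).pi t) =
      ((s.map (Equiv.addRight n).toEmbedding : Finset ℤ) : Set ℤ).pi (fun i => t (i - n)) := by
    ext ω
    simp only [mem_preimage, Set.mem_pi, Finset.mem_coe, shf, Finset.mem_map]
    constructor
    · rintro h i ⟨j, hj, rfl⟩
      have := h j hj
      rw [key j (j + n - n) (by ring)] at this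
      exact this
    · intro h i hi
      have := h (i + n) ⟨i, hi, rfl⟩
      rw [key (i + n - n) i (by ring)] at this
      exact this
  rw [this, Measure.infinitePi_pi _ fun i _ => ht _, Finset.prod_map]
  refine Finset.prod_congr rfl fun i _ => ?_
  exact congrArg ν (key (i + n - n) i (by ring))

/-- the Hilbert space -/
abbrev HH : Type _ := Lp ℝ 2 (PP ν)

/-- shift operator -/
noncomputable def Us (n : ℤ) : HH ν →ₗᵢ[ℝ] HH ν := Lp.compMeasurePreservingₗᵢ ℝ (shf n) (shf_mp ν n)

lemma Us_ae (n : ℤ) (x : HH ν) : Us ν n x =ᵐ[PP ν] fun ω => x (shf n ω) :=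
  Lp.coeFn_compMeasurePreserving x (shf_mp ν n)

/-- conditional expectation operator onto coordinates in `A` -/
noncomputable def Ec (A : Set ℤ) : HH ν →L[ℝ] HH ν :=
  (ContinuousLinearMap.adjoint
    (Lp.compMeasurePreservingₗᵢ ℝ (Prod.fst : (ℤ → E) × (ℤ → E) → (ℤ → E))
      (measurePreserving_fst (μ := PP ν) (ν := PP ν))).toContinuousLinearMap) ∘L
  (Lp.compMeasurePreservingₗᵢ ℝ (mrg A) (mrg_mp ν A)).toContinuousLinearMap

lemma Ec_norm_le (A : Set ℤ) (x : HH ν) : ‖Ec ν A x‖ ≤ ‖x‖ := by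
  unfold Ec
  simp only [ContinuousLinearMap.comp_apply]
  refine (ContinuousLinearMap.le_opNorm _ _).trans ?_
  rw [LinearIsometryEquiv.norm_map]
  calc _ ≤ 1 * ‖x‖ := by
        gcongr
        · exact LinearIsometry.norm_toContinuousLinearMap_le _
        · exact (LinearIsometry.norm_map _ _).le
    _ = _ := one_mul _

lemma hh_int (x : HH ν) : Integrable x (PP ν) :=
  (Lp.memLp x).integrable (by norm_num)

lemma mrg_int (A : Set ℤ) (x : HH ν) :
    Integrable (fun p => x (mrg A p)) ((PP ν).prod (PP ν)) :=
  (mrg_mp ν A).integrable_comp_of_integrable (hh_int ν x)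

lemma Ec_ae (A : Set ℤ) (x : HH ν) :
    Ec ν A x =ᵐ[PP ν] fun ω => ∫ ω', x (mrg A (ω, ω')) ∂(PP ν) := by
  have hi := mrg_int ν A x
  refine Integrable.ae_eq_of_forall_setIntegral_eq _ _ (hh_int ν _) hi.integral_prod_left ?_
  intro s hs hfin
  rw [← L2.inner_indicatorConstLp_one hs hfin.ne (Ec ν A x)]
  unfold Ec
  rw [ContinuousLinearMap.comp_apply, ContinuousLinearMap.adjoint_inner_right]
  have e1 : (Lp.compMeasurePreservingₗᵢ ℝ (Prod.fst : (ℤ → E) × (ℤ → E) → (ℤ → E))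
      (measurePreserving_fst (μ := PP ν) (ν := PP ν))).toContinuousLinearMap
      (indicatorConstLp 2 hs hfin.ne (1:ℝ)) =
      indicatorConstLp 2 (measurePreserving_fst (μ := PP ν) (ν := PP ν) |>.measurable hs)
        (measure_ne_top _ _) (1:ℝ) := by
    exact Lp.indicatorConstLp_compMeasurePreserving hs hfin.ne (1:ℝ) _
  rw [e1, L2.inner_indicatorConstLp_one]
  have e2 : ∀ᵐ p ∂((PP ν).prod (PP ν)).restrict (Prod.fst ⁻¹' s),
      (Lp.compMeasurePreservingₗᵢ ℝ (mrg A) (mrg_mp ν A)).toContinuousLinearMap x p =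
      x (mrg A p) := by
    apply ae_restrict_of_ae
    exact Lp.coeFn_compMeasurePreserving x (mrg_mp ν A)
  rw [integral_congr_ae e2]
  have e3 : (Prod.fst ⁻¹' s : Set ((ℤ → E) × (ℤ → E))) = s ×ˢ univ := by ext; simp
  rw [e3, setIntegral_prod _ hi.integrableOn]
  simp

end five
end S18

namespace S18
set_option linter.unusedSectionVars false

section fiveb
variable {E : Type*} [MeasurableSpace E]

lemma mp_int {X Y G : Type*} [MeasurableSpace X] [MeasurableSpace Y] [NormedAddCommGroup G]
    [NormedSpace ℝ G] {μ : Measure X} {κ : Measure Y} {g : X → Y} (hg : MeasurePreserving g μ κ)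
    {f : Y → G} (hf : AEStronglyMeasurable f κ) : ∫ x, f (g x) ∂μ = ∫ y, f y ∂κ := by
  have := hg.map_eq
  rw [← this, integral_map hg.aemeasurable]
  rwa [this]

lemma mrg_inter (A B : Set ℤ) (ω ω' ω'' : ℤ → E) :
    mrg B (mrg A (ω, ω'), ω'') = mrg (A ∩ B) (ω, mrg B (ω', ω'')) := by
  classical
  funext i
  unfold mrg
  by_cases hA : i ∈ A <;> by_cases hB : i ∈ B <;> simp [hA, hB]

lemma mrg_compl (A : Set ℤ) (ω ω' : ℤ → E) : mrg Aᶜ (ω', ω) = mrg A (ω, ω') := by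
  classical
  funext i
  unfold mrg
  by_cases hA : i ∈ A <;> simp [hA]

lemma shf_mrg (A : Set ℤ) (n : ℤ) (ω ω' : ℤ → E) :
    shf n (mrg A (ω, ω')) = mrg {i | i + n ∈ A} (shf n ω, shf n ω') := by
  classical
  funext i
  simp [mrg, shf]

lemma shf_shf (m n : ℤ) (ω : ℤ → E) : shf m (shf n ω) = shf (m + n) ω := by
  funext i
  simp [shf, add_assoc]

variable (ν : Measure E) [IsProbabilityMeasure ν]

lemma ae_int_mrg (A : Set ℤ) (x : HH ν) :
    ∀ᵐ ω ∂(PP ν), Integrable (fun ω' => x (mrg A (ω, ω'))) (PP ν) :=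
  (mrg_int ν A x).prod_right_ae

lemma Ec_comp (A B : Set ℤ) (x : HH ν) : Ec ν A (Ec ν B x) = Ec ν (A ∩ B) x := by
  apply Lp.ext
  have h1 := (mrg_mp ν A).quasiMeasurePreserving.ae (Ec_ae ν B x)
  have h1' := Measure.ae_ae_of_ae_prod h1
  filter_upwards [Ec_ae ν A (Ec ν B x), Ec_ae ν (A ∩ B) x, h1', ae_int_mrg ν (A ∩ B) x] with
    ω e1 e2 e3 e4
  rw [e1, e2, integral_congr_ae e3]
  simp_rw [mrg_inter]
  have h5 := (mrg_mp ν B).integrable_comp_of_integrable e4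
  have h6 := integral_prod _ h5
  exact h6.symm.trans (mp_int (mrg_mp ν B) e4.1)

lemma Ec_empty (x : HH ν) : Ec ν ∅ x =ᵐ[PP ν] fun _ => ∫ ω, x ω ∂(PP ν) := by
  filter_upwards [Ec_ae ν ∅ x] with ω h
  rw [h]
  refine integral_congr_ae (ae_of_all _ fun ω' => ?_)
  have : mrg ∅ (ω, ω') = ω' := by funext i; simp [mrg]
  simp only [this]

lemma proj_symm {H : Type*} [NormedAddCommGroup H] [InnerProductSpace ℝ H] (T : H →L[ℝ] H)
    (h1 : ∀ x, T (T x) = T x) (h2 : ∀ x, ‖T x‖ ≤ ‖x‖) (x y : H) :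
    inner ℝ (T x) y = inner ℝ x (T y) := by
  have key : ∀ u v : H, T u = u → T v = 0 → inner ℝ u v = 0 := by
    intro u v hu hv
    have : ∀ t : ℝ, 0 ≤ 2 * t * inner ℝ u v + t ^ 2 * ‖v‖ ^ 2 := by
      intro t
      have h := h2 (u + t • v)
      rw [map_add, map_smul, hu, hv, smul_zero, add_zero] at h
      have h' := mul_self_le_mul_self (norm_nonneg _) h
      rw [← sq, ← sq, norm_add_sq_real, inner_smul_right, norm_smul] at h'
      have : (‖t‖ * ‖v‖) ^ 2 = t ^ 2 * ‖v‖ ^ 2 := by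
        rw [mul_pow, Real.norm_eq_abs, sq_abs]
      rw [this] at h'
      linarith
    have h3 := this (-(inner ℝ u v) / (‖v‖ ^ 2 + 1))
    have hp : 0 < ‖v‖ ^ 2 + 1 := by positivity
    have h4 : 2 * (-(inner ℝ u v) / (‖v‖ ^ 2 + 1)) * inner ℝ u v +
        (-(inner ℝ u v) / (‖v‖ ^ 2 + 1)) ^ 2 * ‖v‖ ^ 2 =
        - (inner ℝ u v) ^ 2 * (‖v‖ ^ 2 + 2) / (‖v‖ ^ 2 + 1) ^ 2 := by
      field_simp
      ring
    rw [h4] at h3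
    have h5 : 0 ≤ -(inner ℝ u v) ^ 2 * (‖v‖ ^ 2 + 2) := by
      by_contra hneg
      exact absurd h3 (not_le.mpr (div_neg_of_neg_of_pos (not_le.mp hneg) (by positivity)))
    have h6 : (inner ℝ u v) ^ 2 = 0 := by nlinarith [sq_nonneg (inner ℝ u v), sq_nonneg ‖v‖]
    exact pow_eq_zero_iff (two_ne_zero) |>.mp h6
  have a1 := key (T x) (y - T y) (h1 x) (by rw [map_sub, h1, sub_self])
  have a2 := key (T y) (x - T x) (h1 y) (by rw [map_sub, h1, sub_self])
  rw [inner_sub_right] at a1 a2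
  rw [real_inner_comm] at a2
  rw [real_inner_comm (T x) (T y)] at a2
  linarith

lemma Ec_symm (A : Set ℤ) (x y : HH ν) : inner ℝ (Ec ν A x) y = inner ℝ x (Ec ν A y) :=
  proj_symm _ (fun x => by rw [Ec_comp, inter_self]) (Ec_norm_le ν A) x y

lemma Ec_Us (A : Set ℤ) (n : ℤ) (x : HH ν) :
    Ec ν A (Us ν n x) = Us ν n (Ec ν {i | i + n ∈ A} x) := by
  apply Lp.ext
  have h1 := (mrg_mp ν A).quasiMeasurePreserving.ae (Us_ae ν n x)
  have h1' := Measure.ae_ae_of_ae_prod h1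
  have h2 := (shf_mp ν n).quasiMeasurePreserving.ae (Ec_ae ν {i | i + n ∈ A} x)
  have h3 := (shf_mp ν n).quasiMeasurePreserving.ae (ae_int_mrg ν {i | i + n ∈ A} x)
  filter_upwards [Ec_ae ν A (Us ν n x), Us_ae ν n (Ec ν {i | i + n ∈ A} x), h1', h2, h3] with
    ω e1 e2 e3 e4 e5
  rw [e1, e2, e4, integral_congr_ae e3]
  simp_rw [shf_mrg]
  exact mp_int (shf_mp ν n) e5.1

lemma Us_Us (m n : ℤ) (x : HH ν) : Us ν m (Us ν n x) = Us ν (m + n) x := by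
  apply Lp.ext
  have h1 := (shf_mp ν m).quasiMeasurePreserving.ae (Us_ae ν n x)
  filter_upwards [Us_ae ν m (Us ν n x), Us_ae ν (m + n) x, h1] with ω e1 e2 e3
  rw [e1, e3, e2, shf_shf, add_comm]

lemma Us_zero (x : HH ν) : Us ν 0 x = x := by
  apply Lp.ext
  filter_upwards [Us_ae ν 0 x] with ω e1
  rw [e1]
  congr 1
  funext i
  simp [shf]

lemma Us_inner (m n : ℤ) (x y : HH ν) :
    inner ℝ (Us ν m x) (Us ν n y) = inner ℝ x (Us ν (n - m) y) := by
  have : Us ν n y = Us ν m (Us ν (n - m) y) := by rw [Us_Us]; congr 2; ring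
  rw [this, LinearIsometry.inner_map_map]

lemma dep_mono {A B : Set ℤ} (h : A ⊆ B) {x : HH ν} (hx : Ec ν A x = x) : Ec ν B x = x := by
  rw [← hx, Ec_comp, inter_eq_self_of_subset_right h]

lemma dep_Us {A : Set ℤ} (n : ℤ) {x : HH ν} (hx : Ec ν A x = x) :
    Ec ν {i | i - n ∈ A} (Us ν n x) = Us ν n x := by
  rw [Ec_Us]
  have : {i | i + n ∈ {i | i - n ∈ A}} = A := by ext i; simp
  rw [this, hx]

lemma dep_add {A : Set ℤ} {x y : HH ν} (hx : Ec ν A x = x) (hy : Ec ν A y = y) :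
    Ec ν A (x + y) = x + y := by rw [map_add, hx, hy]

lemma dep_sum {ι : Type*} {A : Set ℤ} (s : Finset ι) {f : ι → HH ν} (h : ∀ i ∈ s, Ec ν A (f i) = f i) :
    Ec ν A (∑ i ∈ s, f i) = ∑ i ∈ s, f i := by
  rw [map_sum]
  exact Finset.sum_congr rfl h

lemma dep_mrg {A : Set ℤ} {x : HH ν} (hx : Ec ν A x = x) :
    ∀ᵐ p ∂((PP ν).prod (PP ν)), x (mrg A p) = x p.1 := by
  have h0 := Ec_ae ν A x
  rw [hx] at h0
  filter_upwards [(mrg_mp ν A).quasiMeasurePreserving.ae h0,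
    (measurePreserving_fst (μ := PP ν) (ν := PP ν)).quasiMeasurePreserving.ae h0] with p e1 e2
  rw [e1, e2]
  obtain ⟨ω, ω'⟩ := p
  refine integral_congr_ae (ae_of_all _ fun ω'' => ?_)
  have : mrg A (mrg A (ω, ω'), ω'') = mrg A (ω, ω'') := by
    classical
    funext i
    unfold mrg
    by_cases h : i ∈ A <;> simp [h]
  simp only [this]

lemma dep_of_mrg {A : Set ℤ} {x : HH ν} {f : (ℤ → E) → ℝ} (hf : x =ᵐ[PP ν] f)
    (hA : ∀ᵐ p ∂((PP ν).prod (PP ν)), f (mrg A p) = f p.1) : Ec ν A x = x := by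
  apply Lp.ext
  have h1 := Measure.ae_ae_of_ae_prod ((mrg_mp ν A).quasiMeasurePreserving.ae hf)
  have h2 := Measure.ae_ae_of_ae_prod hA
  filter_upwards [Ec_ae ν A x, hf, h1, h2] with ω e1 e2 e3 e4
  rw [e1, e2, integral_congr_ae e3, integral_congr_ae e4]
  simp

/-- characteristic functional -/
noncomputable def cf (x : HH ν) : ℂ := ∫ ω, Complex.exp (Complex.I * ((x ω : ℝ) : ℂ)) ∂(PP ν)

lemma cf_meas (x : HH ν) :
    AEStronglyMeasurable (fun ω => Complex.exp (Complex.I * ((x ω : ℝ) : ℂ))) (PP ν) := by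
  have h := (Lp.aestronglyMeasurable x)
  have hc : Continuous fun r : ℝ => Complex.exp (Complex.I * (r : ℂ)) := by fun_prop
  exact hc.comp_aestronglyMeasurable h

lemma cf_integrable (x : HH ν) :
    Integrable (fun ω => Complex.exp (Complex.I * ((x ω : ℝ) : ℂ))) (PP ν) := by
  refine Integrable.of_bound (cf_meas ν x) 1 (ae_of_all _ fun ω => ?_)
  rw [mul_comm, Complex.norm_exp_ofReal_mul_I]

lemma cf_norm_le (x : HH ν) : ‖cf ν x‖ ≤ 1 := by
  unfold cf
  refine (norm_integral_le_of_norm_le_const (C := 1) (ae_of_all _ fun ω => ?_)).trans ?_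
  · rw [mul_comm, Complex.norm_exp_ofReal_mul_I]
  · simp

lemma cf_add {A : Set ℤ} {x y : HH ν} (hx : Ec ν A x = x) (hy : Ec ν Aᶜ y = y) :
    cf ν (x + y) = cf ν x * cf ν y := by
  unfold cf
  rw [← mp_int (mrg_mp ν A) (cf_meas ν (x + y)), ← integral_prod_mul]
  refine integral_congr_ae ?_
  have hsw : MeasurePreserving Prod.swap ((PP ν).prod (PP ν)) ((PP ν).prod (PP ν)) :=
    Measure.measurePreserving_swap
  filter_upwards [(mrg_mp ν A).quasiMeasurePreserving.ae (Lp.coeFn_add x y), dep_mrg ν hx,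
    hsw.quasiMeasurePreserving.ae (dep_mrg ν hy)] with p e1 e2 e3
  rw [e1, Pi.add_apply, e2]
  obtain ⟨ω, ω'⟩ := p
  simp only [Prod.swap_prod_mk, mrg_compl] at e3
  rw [e3, Complex.ofReal_add, mul_add, Complex.exp_add]

lemma norm_sq_int (x : HH ν) : ‖x‖ ^ 2 = ∫ ω, (x ω) ^ 2 ∂(PP ν) := by
  rw [← real_inner_self_eq_norm_sq, L2.inner_def]
  refine integral_congr_ae (ae_of_all _ fun ω => ?_)
  simp [sq]

lemma int_abs_le (x : HH ν) : ∫ ω, |x ω| ∂(PP ν) ≤ ‖x‖ := by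
  have h := ProbabilityTheory.variance_nonneg (fun ω => |x ω|) (PP ν)
  have hm : MemLp (fun ω => |x ω|) 2 (PP ν) := (Lp.memLp x).abs
  rw [ProbabilityTheory.variance_eq_sub hm] at h
  have e : ∫ ω, ((fun ω => |x ω|) ^ 2) ω ∂(PP ν) = ‖x‖ ^ 2 := by
    rw [norm_sq_int]
    refine integral_congr_ae (ae_of_all _ fun ω => ?_)
    simp
  rw [e] at h
  exact (le_abs_self _).trans (abs_le_of_sq_le_sq (by linarith) (norm_nonneg _))

lemma cf_lip (x y : HH ν) : ‖cf ν x - cf ν y‖ ≤ ‖x - y‖ := by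
  unfold cf
  rw [← integral_sub (cf_integrable ν x) (cf_integrable ν y)]
  refine (norm_integral_le_integral_norm _).trans (le_trans ?_ (int_abs_le ν (x - y)))
  refine integral_mono_ae ((cf_integrable ν x).sub (cf_integrable ν y)).norm
    (hh_int ν _).abs ?_
  filter_upwards [Lp.coeFn_sub x y] with ω h
  rw [h, Pi.sub_apply]
  have h1 : Complex.exp (Complex.I * ((x ω : ℝ) : ℂ)) - Complex.exp (Complex.I * ((y ω : ℝ) : ℂ)) =
      Complex.exp (Complex.I * ((y ω : ℝ) : ℂ)) *
        (Complex.exp (Complex.I * ((x ω - y ω : ℝ) : ℂ)) - 1) := by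
    rw [mul_sub, ← Complex.exp_add]
    push_cast
    ring_nf
  show ‖_ - _‖ ≤ _
  rw [h1, norm_mul, mul_comm Complex.I, Complex.norm_exp_ofReal_mul_I, one_mul]
  exact Real.norm_exp_I_mul_ofReal_sub_one_le

end fiveb
end S18

namespace S18

section fivec
variable {H : Type*} [NormedAddCommGroup H] [InnerProductSpace ℝ H]

/-- a unitary shift with an adapted filtration of projections -/
structure Sys (U : ℤ → H →ₗᵢ[ℝ] H) (Q : ℤ → H →L[ℝ] H) : Prop where
  uu : ∀ m n x, U m (U n x) = U (m + n) x
  u0 : ∀ x, U 0 x = x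
  qq : ∀ i j x, Q i (Q j x) = Q (min i j) x
  qs : ∀ i x y, inner ℝ (Q i x) y = inner ℝ x (Q i y)
  qu : ∀ j n x, Q j (U n x) = U n (Q (j - n) x)

/-- martingale difference -/
def Dl (Q : ℤ → H →L[ℝ] H) (i : ℤ) : H →L[ℝ] H := Q i - Q (i - 1)

variable {U : ℤ → H →ₗᵢ[ℝ] H} {Q : ℤ → H →L[ℝ] H}

lemma Dl_apply (i : ℤ) (x : H) : Dl Q i x = Q i x - Q (i - 1) x := rfl

lemma Sys.dd_ne (h : Sys U Q) {i j : ℤ} (hij : i ≠ j) (x : H) : Dl Q i (Dl Q j x) = 0 := by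
  simp only [Dl_apply, map_sub, h.qq]
  rcases lt_or_gt_of_ne hij with hl | hl
  · simp [min_eq_left (by omega : i ≤ j), min_eq_left (by omega : i ≤ j - 1),
      min_eq_left (by omega : i - 1 ≤ j), min_eq_left (by omega : i - 1 ≤ j - 1)]
  · simp [min_eq_right (by omega : j ≤ i), min_eq_right (by omega : j ≤ i - 1),
      min_eq_right (by omega : j - 1 ≤ i), min_eq_right (by omega : j - 1 ≤ i - 1)]

lemma Sys.dd_eq (h : Sys U Q) (i : ℤ) (x : H) : Dl Q i (Dl Q i x) = Dl Q i x := by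
  simp only [Dl_apply, map_sub, h.qq]
  simp [min_eq_right (by omega : i - 1 ≤ i), min_eq_left (by omega : i - 1 ≤ i)]

lemma Sys.ds (h : Sys U Q) (i : ℤ) (x y : H) : inner ℝ (Dl Q i x) y = inner ℝ x (Dl Q i y) := by
  simp only [Dl_apply, inner_sub_left, inner_sub_right, h.qs]

lemma Sys.du (h : Sys U Q) (i n : ℤ) (x : H) : Dl Q i (U n x) = U n (Dl Q (i - n) x) := by
  simp only [Dl_apply, map_sub, h.qu]
  have : i - 1 - n = i - n - 1 := by ring
  rw [this]

/-- p_k -/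
noncomputable def pk (Q : ℤ → H →L[ℝ] H) (x : H) (k : ℕ) : ℝ := ‖Dl Q (-(k:ℤ)) x‖

lemma pk_nonneg (x : H) (k : ℕ) : 0 ≤ pk Q x k := norm_nonneg _

lemma tele (x : H) (hx : Q 0 x = x) (N : ℕ) :
    ∑ k ∈ Finset.range N, Dl Q (-(k:ℤ)) x = x - Q (-(N:ℤ)) x := by
  induction N with
  | zero => simp [hx]
  | succ n ih =>
    rw [Finset.sum_range_succ, ih, Dl_apply]
    have : (-(n:ℤ) - 1) = -((n + 1 : ℕ) : ℤ) := by push_cast; ring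
    rw [this]
    abel

lemma tele_tendsto {x : H} (hx : Q 0 x = x) (hq : Tendsto (fun k : ℕ => Q (-(k:ℤ)) x) atTop (𝓝 0)) :
    Tendsto (fun N => ∑ k ∈ Finset.range N, Dl Q (-(k:ℤ)) x) atTop (𝓝 x) := by
  simp_rw [tele x hx]
  simpa using tendsto_const_nhds.sub hq

lemma Sys.orth (h : Sys U Q) (s : Finset ℤ) (k : ℤ) (x : H) :
    ‖∑ n ∈ s, U n (Dl Q k x)‖ ^ 2 = s.card * ‖Dl Q k x‖ ^ 2 := by
  rw [← real_inner_self_eq_norm_sq, sum_inner]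
  have : ∀ n ∈ s, inner ℝ (U n (Dl Q k x)) (∑ m ∈ s, U m (Dl Q k x)) = ‖Dl Q k x‖ ^ 2 := by
    intro n hn
    rw [inner_sum, Finset.sum_eq_single n]
    · rw [LinearIsometry.inner_map_map, real_inner_self_eq_norm_sq]
    · intro m _ hmn
      have e1 : U n (Dl Q k x) = Dl Q (k + n) (U n x) := by rw [h.du, add_sub_cancel_right]
      have e2 : U m (Dl Q k x) = Dl Q (k + m) (U m x) := by rw [h.du, add_sub_cancel_right]
      rw [e1, e2, h.ds, h.dd_ne (by omega), inner_zero_right]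
    · intro h'; exact absurd hn h'
  rw [Finset.sum_congr rfl this, Finset.sum_const, nsmul_eq_mul]

lemma Sys.bound (h : Sys U Q) {x : H} (hx : Q 0 x = x)
    (hq : Tendsto (fun k : ℕ => Q (-(k:ℤ)) x) atTop (𝓝 0)) (hp : Summable (pk Q x)) (s : Finset ℤ) :
    ‖∑ n ∈ s, U n x‖ ≤ √(s.card) * ∑' k, pk Q x k := by
  have h1 : Tendsto (fun N => ‖∑ n ∈ s, U n (∑ k ∈ Finset.range N, Dl Q (-(k:ℤ)) x)‖) atTop
      (𝓝 ‖∑ n ∈ s, U n x‖) := by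
    apply Tendsto.norm
    apply tendsto_finsetSum
    intro n _
    exact ((U n).continuous.tendsto _).comp (tele_tendsto hx hq)
  refine le_of_tendsto h1 (Eventually.of_forall fun N => ?_)
  simp_rw [map_sum]
  rw [Finset.sum_comm]
  calc _ ≤ ∑ k ∈ Finset.range N, ‖∑ n ∈ s, U n (Dl Q (-(k:ℤ)) x)‖ := norm_sum_le _ _
    _ = ∑ k ∈ Finset.range N, √(s.card) * pk Q x k := by
        refine Finset.sum_congr rfl fun k _ => ?_
        have := h.orth s (-(k:ℤ)) x
        rw [← Real.sqrt_sq (norm_nonneg (∑ n ∈ s, U n (Dl Q (-(k:ℤ)) x))), this,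
          Real.sqrt_mul (by positivity), Real.sqrt_sq (norm_nonneg _)]
        rfl
    _ = √(s.card) * ∑ k ∈ Finset.range N, pk Q x k := by rw [Finset.mul_sum]
    _ ≤ _ := by
        gcongr
        exact hp.sum_le_tsum _ fun k _ => pk_nonneg x k

lemma Sys.cov_sum (h : Sys U Q) {x : H} (hx : Q 0 x = x)
    (hq : Tendsto (fun k : ℕ => Q (-(k:ℤ)) x) atTop (𝓝 0)) (hp : Summable (pk Q x)) :
    Summable fun n : ℕ => |inner ℝ x (U n x)| := by
  refine summable_of_sum_le (c := (∑' k, pk Q x k) * ∑' k, pk Q x k) (fun _ => abs_nonneg _) ?_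
  intro s
  have h1 : Tendsto (fun N => ∑ n ∈ s,
      |inner ℝ (∑ k ∈ Finset.range N, Dl Q (-(k:ℤ)) x) (U n x)|) atTop
      (𝓝 (∑ n ∈ s, |inner ℝ x (U n x)|)) := by
    apply tendsto_finsetSum
    intro n _
    exact ((tele_tendsto hx hq).inner tendsto_const_nhds).abs
  refine le_of_tendsto h1 (Eventually.of_forall fun N => ?_)
  have hb : ∀ (n k : ℕ), |inner ℝ (Dl Q (-(k:ℤ)) x) (U n x)| ≤ pk Q x k * pk Q x (n + k) := by
    intro n k
    rw [← h.dd_eq, h.ds, h.du]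
    refine (abs_real_inner_le_norm _ _).trans ?_
    rw [LinearIsometry.norm_map]
    have : (-(k:ℤ) - n) = -((n + k : ℕ) : ℤ) := by push_cast; ring
    rw [this]
    rfl
  calc _ ≤ ∑ n ∈ s, ∑ k ∈ Finset.range N, pk Q x k * pk Q x (n + k) := by
        gcongr with n _
        rw [sum_inner]
        exact (Finset.abs_sum_le_sum_abs _ _).trans (Finset.sum_le_sum fun k _ => hb n k)
    _ = ∑ k ∈ Finset.range N, pk Q x k * ∑ n ∈ s, pk Q x (n + k) := by
        rw [Finset.sum_comm]
        simp_rw [Finset.mul_sum]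
    _ ≤ ∑ k ∈ Finset.range N, pk Q x k * ∑' k, pk Q x k := by
        gcongr with k _
        · exact pk_nonneg x k
        · have : ∑ n ∈ s, pk Q x (n + k) = ∑ m ∈ s.map (addRightEmbedding k), pk Q x m := by
            rw [Finset.sum_map]; rfl
          rw [this]
          exact hp.sum_le_tsum _ fun k _ => pk_nonneg x k
    _ ≤ _ := by
        rw [← Finset.sum_mul]
        have h0 : 0 ≤ ∑' k, pk Q x k := tsum_nonneg fun k => pk_nonneg x k
        gcongr
        exact hp.sum_le_tsum _ fun k _ => pk_nonneg x k

/-- partial sum -/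
noncomputable def SN (U : ℤ → H →ₗᵢ[ℝ] H) (x : H) (N : ℕ) : H := ∑ n ∈ Finset.range N, U n x

/-- long-run variance -/
noncomputable def sg (U : ℤ → H →ₗᵢ[ℝ] H) (x : H) : ℝ :=
  ‖x‖ ^ 2 + 2 * ∑' n : ℕ, inner ℝ x (U ((n:ℤ) + 1) x)

lemma Sys.var_lim (h : Sys U Q) {x : H} (hs : Summable fun n : ℕ => |inner ℝ x (U n x)|) :
    Tendsto (fun N : ℕ => ‖SN U x N‖ ^ 2 / N) atTop (𝓝 (sg U x)) := by
  have hs' : Summable fun n : ℕ => inner ℝ x (U ((n:ℤ) + 1) x) := by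
    have := (summable_nat_add_iff 1).mpr hs.of_abs
    refine this.congr fun n => ?_
    push_cast
    rfl
  have e : ∀ N : ℕ, ‖SN U x N‖ ^ 2 =
      ∑ i ∈ Finset.range N, (‖x‖ ^ 2 + 2 * ∑ n ∈ Finset.range i, inner ℝ x (U ((n:ℤ) + 1) x)) := by
    intro N
    induction N with
    | zero => simp [SN]
    | succ N ih =>
      rw [Finset.sum_range_succ, ← ih]
      have : SN U x (N + 1) = SN U x N + U N x := Finset.sum_range_succ _ _
      rw [this, norm_add_sq_real, LinearIsometry.norm_map]
      have : inner ℝ (SN U x N) (U N x) = ∑ n ∈ Finset.range N, inner ℝ x (U ((n:ℤ) + 1) x) := by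
        unfold SN
        rw [sum_inner, ← Finset.sum_range_reflect]
        refine Finset.sum_congr rfl fun n hn => ?_
        have hn' := Finset.mem_range.mp hn
        have e2 : U N x = U ((N - 1 - n : ℕ) : ℤ) (U ((n:ℤ) + 1) x) := by
          rw [h.uu]
          congr 2
          omega
        rw [e2, LinearIsometry.inner_map_map]
      rw [this]
      ring
  have h1 : Tendsto (fun i : ℕ => ‖x‖ ^ 2 + 2 * ∑ n ∈ Finset.range i, inner ℝ x (U ((n:ℤ) + 1) x))
      atTop (𝓝 (sg U x)) :=
    tendsto_const_nhds.add (hs'.hasSum.tendsto_sum_nat.const_mul 2)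
  have h2 := h1.cesaro
  refine h2.congr fun N => ?_
  rw [e N, div_eq_inv_mul]

end fivec
end S18

namespace S18
set_option linter.unusedSectionVars false

section fived
variable {E : Type*} [MeasurableSpace E]
variable (ν : Measure E) [IsProbabilityMeasure ν]

lemma sysE : Sys (Us ν) (fun j => Ec ν (Iic j)) where
  uu := Us_Us ν
  u0 := Us_zero ν
  qq := by
    intro i j x
    rw [Ec_comp, Iic_inter_Iic]
  qs := fun i => Ec_symm ν _
  qu := by
    intro j n x
    rw [Ec_Us]
    have : {i : ℤ | i + n ∈ Iic j} = Iic (j - n) := by ext i; simp; omega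
    rw [this]

lemma approx_limit {f : ℕ → ℂ} {G : ℕ → ℂ} {e : ℕ → ℝ} {g : ℂ}
    (h : ∀ᶠ p in atTop, ∀ ε > 0, ∀ᶠ N in atTop, ‖f N - G p‖ ≤ e p + ε)
    (he : Tendsto e atTop (𝓝 0)) (hG : Tendsto G atTop (𝓝 g)) : Tendsto f atTop (𝓝 g) := by
  rw [Metric.tendsto_atTop']
  intro ε hε
  have h1 : ∀ᶠ p in atTop, e p < ε / 3 := he.eventually_lt_const (by positivity)
  have h2 : ∀ᶠ p in atTop, dist (G p) g < ε / 3 := (Metric.tendsto_nhds.mp hG) _ (by positivity)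
  obtain ⟨p, a1, a2, a3⟩ := (h.and (h1.and h2)).exists
  obtain ⟨N, hN⟩ := eventually_atTop.mp (a1 (ε / 3) (by positivity))
  refine ⟨N, fun n hn => ?_⟩
  have := hN n hn.le
  calc dist (f n) g ≤ dist (f n) (G p) + dist (G p) g := dist_triangle _ _ _
    _ < (e p + ε / 3) + ε / 3 := by
        rw [dist_eq_norm (f n)]
        linarith
    _ < ε := by linarith

lemma cf_Us (n : ℤ) (x : HH ν) : cf ν (Us ν n x) = cf ν x := by
  unfold cf
  rw [← mp_int (shf_mp ν n) (cf_meas ν x)]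
  refine integral_congr_ae ?_
  filter_upwards [Us_ae ν n x] with ω h
  rw [h]

lemma cf_zero : cf ν 0 = 1 := by
  unfold cf
  have : (fun ω => Complex.exp (Complex.I * (((0 : HH ν) ω : ℝ) : ℂ))) =ᵐ[PP ν] fun _ => 1 := by
    filter_upwards [Lp.coeFn_zero ℝ 2 (PP ν)] with ω h
    rw [h]
    simp
  rw [integral_congr_ae this]
  simp

lemma mean_zero {x : HH ν} (h : Ec ν ∅ x = 0) : ∫ ω, x ω ∂(PP ν) = 0 := by
  have h1 := Ec_empty ν x
  rw [h] at h1
  have h2 := h1.symm.trans (Lp.coeFn_zero ℝ 2 (PP ν))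
  obtain ⟨ω, hω⟩ := h2.exists
  exact hω

lemma iid_clt {B : HH ν} (hB : Ec ν ∅ B = 0) (s : ℝ) :
    Tendsto (fun M : ℕ => (cf ν ((s / √M) • B)) ^ M) atTop
      (𝓝 (Complex.exp (-((s ^ 2 * ‖B‖ ^ 2 / 2 : ℝ) : ℂ)))) := by
  by_cases h0 : B = 0
  · subst h0
    simp [cf_zero]
  have hn : ‖B‖ ≠ 0 := norm_ne_zero_iff.mpr h0
  have hm : AEMeasurable (fun ω => B ω / ‖B‖) (PP ν) :=
    (Lp.aestronglyMeasurable B).aemeasurable.div_const _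
  have a0 : ∫ ω, (fun ω => B ω / ‖B‖) ω ∂(PP ν) = 0 := by
    simp only [integral_div, mean_zero ν hB, zero_div]
  have a1 : ∫ ω, ((fun ω => B ω / ‖B‖) ^ 2) ω ∂(PP ν) = 1 := by
    simp only [Pi.pow_apply, div_pow, integral_div]
    rw [← norm_sq_int, div_self (pow_ne_zero _ hn)]
  have := ProbabilityTheory.tendsto_charFun_inv_sqrt_mul_pow hm a0 a1 (s * ‖B‖)
  have e : (Complex.exp (-((s ^ 2 * ‖B‖ ^ 2 / 2 : ℝ) : ℂ))) =
      Complex.exp (-((s * ‖B‖ : ℝ) : ℂ) ^ 2 / 2) := by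
    congr 1
    push_cast
    ring
  rw [e]
  refine this.congr fun M => ?_
  congr 1
  rw [charFun_apply_real, integral_map hm (by fun_prop)]
  unfold cf
  refine integral_congr_ae ?_
  filter_upwards [Lp.coeFn_smul (s / √M) B] with ω h
  rw [h]
  congr 1
  simp only [Pi.smul_apply, smul_eq_mul]
  have hc : ((‖B‖ : ℝ) : ℂ) ≠ 0 := by exact_mod_cast hn
  push_cast
  field_simp

lemma cf_blocks {L p : ℕ} {B : HH ν} (hB : Ec ν (Icc (-(L:ℤ)) ((p:ℤ) - 1)) B = B) (M : ℕ) :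
    cf ν (∑ i ∈ Finset.range M, Us ν ((i:ℤ) * (p + L)) B) = (cf ν B) ^ M := by
  induction M with
  | zero => simp [cf_zero]
  | succ M ih =>
    rw [Finset.sum_range_succ, pow_succ, ← ih]
    rw [cf_add ν (A := Iic ((M:ℤ) * (p + L) - L - 1)), cf_Us]
    · apply dep_sum
      intro i hi
      refine dep_mono ν ?_ (dep_Us ν _ hB)
      intro j hj
      simp only [mem_ofPred_eq, mem_Icc, mem_Iic] at hj ⊢
      have : (i:ℤ) + 1 ≤ M := by exact_mod_cast Finset.mem_range.mp hi
      nlinarith [mul_le_mul_of_nonneg_right this (by positivity : (0:ℤ) ≤ p + L)]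
    · refine dep_mono ν ?_ (dep_Us ν _ hB)
      intro j hj
      simp only [mem_ofPred_eq, mem_Icc, mem_Iic, mem_compl_iff] at hj ⊢
      omega

lemma SN_eq (x : HH ν) (N : ℕ) :
    SN (Us ν) x N = ∑ n ∈ (Finset.range N).map Nat.castEmbedding, Us ν (n:ℤ) x := by
  rw [Finset.sum_map]; rfl

/-- decomposition into blocks -/
lemma block_decomp (x : HH ν) (p q M N : ℕ) (hpq : p ≤ q) (hM : M * q ≤ N) :
    ∃ s : Finset ℤ, s.card + M * p = N ∧
      SN (Us ν) x N = (∑ i ∈ Finset.range M, Us ν ((i:ℤ) * q) (SN (Us ν) x p)) +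
        ∑ n ∈ s, Us ν n x := by
  classical
  set big : Finset ℕ := (Finset.range M ×ˢ Finset.range p).image (fun ir => ir.1 * q + ir.2) with hbig
  have hinj : Set.InjOn (fun ir : ℕ × ℕ => ir.1 * q + ir.2)
      ((Finset.range M ×ˢ Finset.range p : Finset (ℕ × ℕ)) : Set (ℕ × ℕ)) := by
    rintro ⟨i, r⟩ h1 ⟨i', r'⟩ h2 h
    simp only [Finset.coe_product, mem_prod, Finset.mem_coe, Finset.mem_range] at h1 h2 h
    have hr : r < q := by omega
    have hr' : r' < q := by omega
    have e1 : (i * q + r) / q = i := by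
      rw [mul_comm, Nat.mul_add_div (by omega), Nat.div_eq_of_lt hr, add_zero]
    have e2 : (i' * q + r') / q = i' := by
      rw [mul_comm, Nat.mul_add_div (by omega), Nat.div_eq_of_lt hr', add_zero]
    have e3 : i = i' := by rw [← e1, ← e2, h]
    subst e3
    simp only [Prod.mk.injEq, true_and]
    omega
  have hsub : big ⊆ Finset.range N := by
    intro n hn
    simp only [hbig, Finset.mem_image, Finset.mem_product, Finset.mem_range, Prod.exists] at hn ⊢
    obtain ⟨i, r, ⟨h1, h2⟩, rfl⟩ := hn
    have : (i + 1) * q ≤ M * q := Nat.mul_le_mul_right _ h1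
    rw [add_mul, one_mul] at this
    omega
  have hcard : big.card = M * p := by
    rw [hbig, Finset.card_image_of_injOn hinj]
    simp
  refine ⟨(Finset.range N \ big).map Nat.castEmbedding, ?_, ?_⟩
  · rw [Finset.card_map, ← hcard, Finset.card_sdiff_add_card_eq_card hsub, Finset.card_range]
  · rw [Finset.sum_map]
    have h1 : ∑ n ∈ big, Us ν (n:ℤ) x =
        ∑ i ∈ Finset.range M, Us ν ((i:ℤ) * q) (SN (Us ν) x p) := by
      rw [hbig, Finset.sum_image hinj, Finset.sum_product]
      refine Finset.sum_congr rfl fun i _ => ?_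
      unfold SN
      rw [map_sum]
      refine Finset.sum_congr rfl fun r _ => ?_
      rw [Us_Us]
      push_cast
      rfl
    rw [← h1, add_comm]
    exact (Finset.sum_sdiff hsub).symm

end fived
end S18

namespace S18
set_option linter.unusedSectionVars false

section fivee

lemma div_nat_tendsto (q : ℕ) (hq : 0 < q) :
    Tendsto (fun N : ℕ => ((N / q : ℕ) : ℝ) / N) atTop (𝓝 (1 / q)) := by
  have hq' : (0:ℝ) < q := by exact_mod_cast hq
  have h1 : Tendsto (fun N : ℕ => (1:ℝ) / q - 1 / N) atTop (𝓝 (1 / q)) := by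
    simpa using (tendsto_const_nhds (x := (1:ℝ) / q)).sub tendsto_one_div_atTop_nhds_zero_nat
  refine tendsto_of_tendsto_of_tendsto_of_le_of_le' h1 tendsto_const_nhds ?_ ?_
  · filter_upwards [eventually_gt_atTop 0] with N hN
    have hN' : (0:ℝ) < N := by exact_mod_cast hN
    have : (N:ℝ) ≤ ((N / q : ℕ) + 1) * q := by exact_mod_cast (Nat.lt_div_mul_add hq (a := N)).le.trans (by rw [add_mul, one_mul])
    rw [div_sub_div _ _ hq'.ne' hN'.ne', div_le_div_iff₀ (by positivity) hN']
    nlinarith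
  · filter_upwards [eventually_gt_atTop 0] with N hN
    have hN' : (0:ℝ) < N := by exact_mod_cast hN
    have : ((N / q : ℕ):ℝ) * q ≤ N := by exact_mod_cast Nat.div_mul_le_self N q
    rw [div_le_div_iff₀ hN' hq']
    linarith

variable {E : Type*} [MeasurableSpace E]
variable (ν : Measure E) [IsProbabilityMeasure ν]

lemma SN_dep {L : ℕ} {y : HH ν} (hy : Ec ν (Icc (-(L:ℤ)) 0) y = y) (p : ℕ) :
    Ec ν (Icc (-(L:ℤ)) ((p:ℤ) - 1)) (SN (Us ν) y p) = SN (Us ν) y p := by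
  apply dep_sum
  intro n hn
  refine dep_mono ν ?_ (dep_Us ν _ hy)
  intro j hj
  have := Finset.mem_range.mp hn
  simp only [mem_ofPred_eq, mem_Icc] at hj ⊢
  omega

lemma SN_mean {y : HH ν} (h0 : Ec ν ∅ y = 0) (p : ℕ) : Ec ν ∅ (SN (Us ν) y p) = 0 := by
  unfold SN
  rw [map_sum]
  refine Finset.sum_eq_zero fun n _ => ?_
  rw [Ec_Us]
  have : {i : ℤ | i + n ∈ (∅ : Set ℤ)} = ∅ := by ext; simp
  rw [this, h0, map_zero]

lemma mdep_est {L : ℕ} {y : HH ν} (hy : Ec ν (Icc (-(L:ℤ)) 0) y = y) (h0 : Ec ν ∅ y = 0)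
    {Δ : ℝ} (hΔ0 : 0 ≤ Δ) (hΔ : ∀ s : Finset ℤ, ‖∑ n ∈ s, Us ν n y‖ ≤ √(s.card) * Δ) (t : ℝ)
    (p : ℕ) (hp : 0 < p) (ε : ℝ) (hε : 0 < ε) :
    ∀ᶠ N : ℕ in atTop, ‖cf ν ((t / √N) • SN (Us ν) y N) -
      Complex.exp (-(((t / √(p + L : ℕ)) ^ 2 * ‖SN (Us ν) y p‖ ^ 2 / 2 : ℝ) : ℂ))‖ ≤
      |t| * Δ * √(1 - p * (1 / (p + L : ℕ))) + ε := by
  set q := p + L with hq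
  have hq0 : 0 < q := by omega
  have hq' : (0:ℝ) < q := by exact_mod_cast hq0
  set B := SN (Us ν) y p with hB
  have hMt : Tendsto (fun N : ℕ => N / q) atTop atTop := Nat.tendsto_div_const_atTop hq0.ne'
  have l3 := ((iid_clt ν (SN_mean ν h0 p) (t / √q)).comp hMt)
  rw [← hB] at l3
  set G : ℂ := Complex.exp (-(((t / √q) ^ 2 * ‖B‖ ^ 2 / 2 : ℝ) : ℂ)) with hG
  have l3' : Tendsto (fun N : ℕ => ‖(cf ν (((t / √q) / √(N / q : ℕ)) • B)) ^ (N / q) - G‖) atTop (𝓝 0) := by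
    rw [tendsto_iff_norm_sub_tendsto_zero] at l3
    exact l3
  have ld := div_nat_tendsto q hq0
  have l1 : Tendsto (fun N : ℕ => |t| * Δ * √(1 - p * (((N / q : ℕ) : ℝ) / N))) atTop
      (𝓝 (|t| * Δ * √(1 - p * (1 / q)))) :=
    ((tendsto_const_nhds.sub (ld.const_mul _)).sqrt).const_mul _
  have l2 : Tendsto (fun N : ℕ => |t| * (2 * Δ) * |1 - 1 / (√q * √(((N / q : ℕ) : ℝ) / N))|) atTop
      (𝓝 0) := by
    have a1 : Tendsto (fun N : ℕ => √q * √(((N / q : ℕ) : ℝ) / N)) atTop (𝓝 (√q * √(1 / q))) :=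
      (ld.sqrt).const_mul _
    have e1 : √(q:ℝ) * √(1 / q) = 1 := by
      rw [← Real.sqrt_mul hq'.le, mul_one_div_cancel hq'.ne', Real.sqrt_one]
    rw [e1] at a1
    have a2 := ((tendsto_const_nhds (x := (1:ℝ))).sub ((tendsto_const_nhds (x := (1:ℝ))).div a1 one_ne_zero)).abs.const_mul (|t| * (2 * Δ))
    simpa using a2
  have lall := (l1.add l2).add l3'
  rw [add_zero, add_zero] at lall
  have hev := lall.eventually_le_const (lt_add_of_pos_right _ hε)
  filter_upwards [hev, eventually_ge_atTop q] with N hN hNq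
  refine le_trans ?_ hN
  set M := N / q with hM
  have hN0 : 0 < N := by omega
  have hN' : (0:ℝ) < N := by exact_mod_cast hN0
  have hM0 : 0 < M := Nat.div_pos hNq hq0
  have hM' : (0:ℝ) < M := by exact_mod_cast hM0
  obtain ⟨s, hs1, hs2⟩ := block_decomp ν y p q M N (by omega) (Nat.div_mul_le_self N q)
  set T := ∑ i ∈ Finset.range M, Us ν ((i:ℤ) * q) B with hT
  set c := (t / √q) / √M with hc
  have e1 : cf ν (c • T) = (cf ν (c • B)) ^ M := by
    rw [← cf_blocks ν (L := L) (p := p) (B := c • B) (by rw [map_smul, SN_dep ν hy]) M]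
    congr 1
    rw [hT, Finset.smul_sum]
    refine Finset.sum_congr rfl fun i _ => ?_
    rw [map_smul, hq]
    push_cast
    rfl
  have hscard : (s.card : ℝ) = N - M * p := by
    have : (s.card : ℝ) + M * p = N := by exact_mod_cast hs1
    linarith
  have hS : ‖SN (Us ν) y N‖ ≤ √N * Δ := by
    rw [SN_eq]
    simpa using hΔ ((Finset.range N).map Nat.castEmbedding)
  have hs3 : ‖∑ n ∈ s, Us ν n y‖ ≤ √N * Δ := by
    refine (hΔ s).trans ?_
    gcongr
    omega
  have hTn : ‖T‖ ≤ 2 * Δ * √N := by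
    have : T = SN (Us ν) y N - ∑ n ∈ s, Us ν n y := by rw [hs2]; abel
    rw [this]
    refine (norm_sub_le _ _).trans ?_
    linarith
  have hsN : 0 < √(N:ℝ) := Real.sqrt_pos.mpr hN'
  have hsM : 0 < √(M:ℝ) := Real.sqrt_pos.mpr hM'
  have hsq : 0 < √(q:ℝ) := Real.sqrt_pos.mpr hq'
  have d1 : ‖cf ν ((t / √N) • SN (Us ν) y N) - cf ν ((t / √N) • T)‖ ≤
      |t| * Δ * √(1 - p * ((M : ℝ) / N)) := by
    refine (cf_lip ν _ _).trans ?_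
    rw [← smul_sub, hs2, add_sub_cancel_left, norm_smul]
    calc ‖t / √N‖ * ‖∑ n ∈ s, Us ν n y‖ ≤ ‖t / √N‖ * (√(s.card) * Δ) := by gcongr; exact hΔ s
      _ = |t| * Δ * (√(s.card) / √N) := by
          rw [norm_div, Real.norm_eq_abs, Real.norm_eq_abs, abs_of_pos hsN]; ring
      _ = _ := by
          rw [← Real.sqrt_div (by positivity), hscard]
          congr 2
          field_simp
  have d2 : ‖cf ν ((t / √N) • T) - cf ν (c • T)‖ ≤
      |t| * (2 * Δ) * |1 - 1 / (√q * √((M : ℝ) / N))| := by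
    refine (cf_lip ν _ _).trans ?_
    rw [← sub_smul, norm_smul]
    have : t / √N - c = t / √N * (1 - 1 / (√q * √((M : ℝ) / N))) := by
      rw [hc, Real.sqrt_div hM'.le]
      field_simp
    rw [this, norm_mul, norm_div, Real.norm_eq_abs, Real.norm_eq_abs, Real.norm_eq_abs, abs_of_pos hsN]
    calc |t| / √N * |1 - 1 / (√q * √((M : ℝ) / N))| * ‖T‖
        ≤ |t| / √N * |1 - 1 / (√q * √((M : ℝ) / N))| * (2 * Δ * √N) := by gcongr
      _ = _ := by field_simp
  calc ‖cf ν ((t / √N) • SN (Us ν) y N) - G‖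
      = ‖(cf ν ((t / √N) • SN (Us ν) y N) - cf ν ((t / √N) • T)) +
          (cf ν ((t / √N) • T) - cf ν (c • T)) + ((cf ν (c • B)) ^ M - G)‖ := by
        rw [← e1]; congr 1; ring
    _ ≤ _ := (norm_add₃_le).trans (by gcongr)

lemma mdep_clt {L : ℕ} {y : HH ν} (hy : Ec ν (Icc (-(L:ℤ)) 0) y = y) (h0 : Ec ν ∅ y = 0)
    {Δ : ℝ} (hΔ0 : 0 ≤ Δ) (hΔ : ∀ s : Finset ℤ, ‖∑ n ∈ s, Us ν n y‖ ≤ √(s.card) * Δ)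
    {σ : ℝ} (hσ : Tendsto (fun N : ℕ => ‖SN (Us ν) y N‖ ^ 2 / N) atTop (𝓝 σ)) (t : ℝ) :
    Tendsto (fun N : ℕ => cf ν ((t / √N) • SN (Us ν) y N)) atTop
      (𝓝 (Complex.exp (-((t ^ 2 * σ / 2 : ℝ) : ℂ)))) := by
  have hr : Tendsto (fun p : ℕ => (p : ℝ) * (1 / (p + L : ℕ))) atTop (𝓝 1) := by
    have := tendsto_natCast_div_add_atTop (𝕜 := ℝ) (L : ℝ)
    refine this.congr fun p => ?_
    push_cast
    ring
  refine approx_limit (G := fun p : ℕ =>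
    Complex.exp (-(((t / √(p + L : ℕ)) ^ 2 * ‖SN (Us ν) y p‖ ^ 2 / 2 : ℝ) : ℂ)))
    (e := fun p : ℕ => |t| * Δ * √(1 - p * (1 / (p + L : ℕ)))) ?_ ?_ ?_
  · filter_upwards [eventually_gt_atTop 0] with p hp
    intro ε hε
    exact mdep_est ν hy h0 hΔ0 hΔ t p hp ε hε
  · have := (((tendsto_const_nhds (x := (1:ℝ))).sub hr).sqrt).const_mul (|t| * Δ)
    simpa using this
  · have h1 : Tendsto (fun p : ℕ => (t / √(p + L : ℕ)) ^ 2 * ‖SN (Us ν) y p‖ ^ 2 / 2) atTop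
        (𝓝 (t ^ 2 * σ / 2)) := by
      have := (((hr.mul hσ).const_mul (t ^ 2)).div_const 2)
      rw [one_mul] at this
      refine this.congr' ?_
      filter_upwards [eventually_gt_atTop 0] with p hp
      have hp' : (0:ℝ) < p := by exact_mod_cast hp
      rw [div_pow, Real.sq_sqrt (by positivity)]
      have : (0:ℝ) < (p + L : ℕ) := by push_cast; positivity
      field_simp
    have hc : Continuous fun r : ℝ => Complex.exp (-(r : ℂ)) := by fun_prop
    exact (hc.tendsto _).comp h1

end fivee
end S18

namespace S18
set_option linter.unusedSectionVars false

section fivef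
variable {E : Type*} [MeasurableSpace E]
variable (ν : Measure E) [IsProbabilityMeasure ν]

/-- Hannan-type theorem -/
theorem hannan {x : HH ν} (hx : Ec ν (Iic 0) x = x) (h0 : Ec ν ∅ x = 0)
    (happ : ∀ ε > 0, ∃ (L : ℕ) (z : HH ν), Ec ν (Icc (-(L:ℤ)) 0) z = z ∧ ‖x - z‖ ≤ ε)
    (hp : Summable (pk (fun j => Ec ν (Iic j)) x)) :
    (Summable fun n : ℕ => |inner ℝ x (Us ν n x)|) ∧
    Tendsto (fun N : ℕ => ‖SN (Us ν) x N‖ ^ 2 / N) atTop (𝓝 (sg (Us ν) x)) ∧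
    ∀ t : ℝ, Tendsto (fun N : ℕ => cf ν ((t / √N) • SN (Us ν) x N)) atTop
      (𝓝 (Complex.exp (-((t ^ 2 * sg (Us ν) x / 2 : ℝ) : ℂ)))) := by
  set Q : ℤ → HH ν →L[ℝ] HH ν := fun j => Ec ν (Iic j) with hQ
  have hsys : Sys (Us ν) Q := sysE ν
  have hq : Tendsto (fun k : ℕ => Q (-(k:ℤ)) x) atTop (𝓝 0) := by
    rw [Metric.tendsto_atTop]
    intro ε hε
    obtain ⟨L, z, hz, hxz⟩ := happ (ε / 3) (by positivity)
    refine ⟨L + 1, fun k hk => ?_⟩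
    have e1 : Q (-(k:ℤ)) z = Ec ν ∅ z := by
      rw [hQ]
      nth_rewrite 1 [← hz]
      simp only
      rw [Ec_comp]
      congr 2
      ext i
      simp only [mem_inter_iff, mem_Iic, mem_Icc, mem_empty_iff_false, iff_false]
      omega
    have e2 : Ec ν ∅ z = - Ec ν ∅ (x - z) := by rw [map_sub, h0]; simp
    have e3 : Q (-(k:ℤ)) x = Q (-(k:ℤ)) (x - z) - Ec ν ∅ (x - z) := by
      rw [map_sub, e1, e2]; abel
    rw [dist_zero_right, e3]
    have := Ec_norm_le ν (Iic (-(k:ℤ))) (x - z)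
    have := Ec_norm_le ν ∅ (x - z)
    refine (norm_sub_le _ _).trans_lt ?_
    linarith
  set R : ℕ → HH ν → HH ν := fun L x => Ec ν (Icc (-(L:ℤ)) 0) x with hR
  have hRlim : Tendsto (fun L : ℕ => x - R L x) atTop (𝓝 0) := by
    rw [Metric.tendsto_atTop]
    intro ε hε
    obtain ⟨L, z, hz, hxz⟩ := happ (ε / 3) (by positivity)
    refine ⟨L, fun k hk => ?_⟩
    have e1 : R k z = z := dep_mono ν (Icc_subset_Icc (by omega) le_rfl) hz
    have e3 : x - R k x = (x - z) - R k (x - z) := by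
      have : R k (x - z) = R k x - R k z := map_sub _ _ _
      rw [this, e1]
      abel
    rw [dist_zero_right, e3]
    have := Ec_norm_le ν (Icc (-(k:ℤ)) 0) (x - z)
    refine (norm_sub_le _ _).trans_lt ?_
    simp only [hR]
    linarith
  -- properties of the truncations
  have hcomm : ∀ (L : ℕ) (i : ℤ) (w : HH ν), Q i (R L w) = R L (Q i w) := by
    intro L i w
    simp only [hQ, hR]
    rw [Ec_comp, Ec_comp, inter_comm]
  have hDcomm : ∀ (L : ℕ) (i : ℤ) (w : HH ν), Dl Q i (R L w) = R L (Dl Q i w) := by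
    intro L i w
    rw [Dl_apply, Dl_apply, hcomm, hcomm]
    exact (map_sub _ _ _).symm
  have hQR : ∀ L, Q 0 (R L x) = R L x := by
    intro L
    rw [hcomm]
    exact congrArg _ hx
  have hqR : ∀ L, Tendsto (fun k : ℕ => Q (-(k:ℤ)) (R L x)) atTop (𝓝 0) := by
    intro L
    simp_rw [hcomm]
    have := ((Ec ν (Icc (-(L:ℤ)) 0)).continuous.tendsto 0).comp hq
    rw [map_zero] at this
    exact this
  have hpR : ∀ L k, pk Q (R L x) k ≤ pk Q x k := by
    intro L k
    unfold pk
    rw [hDcomm]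
    exact Ec_norm_le ν _ _
  have hpRs : ∀ L, Summable (pk Q (R L x)) := fun L =>
    Summable.of_nonneg_of_le (fun k => pk_nonneg _ k) (hpR L) hp
  have hpd : ∀ L k, pk Q (x - R L x) k ≤ 2 * pk Q x k := by
    intro L k
    have : pk Q (x - R L x) k ≤ pk Q x k + pk Q (R L x) k := by
      unfold pk
      rw [map_sub]
      exact norm_sub_le _ _
    linarith [hpR L k]
  have hpds : ∀ L, Summable (pk Q (x - R L x)) := fun L =>
    Summable.of_nonneg_of_le (fun k => pk_nonneg _ k) (hpd L) (hp.mul_left 2)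
  have hδ : Tendsto (fun L => ∑' k, pk Q (x - R L x) k) atTop (𝓝 0) := by
    have := tendsto_tsum_of_dominated_convergence (𝓕 := atTop) (f := fun (L : ℕ) k => pk Q (x - R L x) k)
      (g := fun _ => (0:ℝ)) (bound := fun k => 2 * pk Q x k) (hp.mul_left 2) ?_ ?_
    · simpa using this
    · intro k
      have := (((Dl Q (-(k:ℤ))).continuous.tendsto 0).comp hRlim).norm
      rw [map_zero, norm_zero] at this
      exact this
    · refine Eventually.of_forall fun L k => ?_
      rw [Real.norm_eq_abs, abs_of_nonneg (pk_nonneg _ k)]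
      exact hpd L k
  have hcov := hsys.cov_sum (x := x) hx hq hp
  have hvar := hsys.var_lim hcov
  refine ⟨hcov, hvar, fun t => ?_⟩
  have hcovR := fun L => hsys.cov_sum (hQR L) (hqR L) (hpRs L)
  have hvarR := fun L => hsys.var_lim (hcovR L)
  have hdiff : ∀ (L N : ℕ), ‖SN (Us ν) x N - SN (Us ν) (R L x) N‖ ≤
      √N * ∑' k, pk Q (x - R L x) k := by
    intro L N
    have e : SN (Us ν) x N - SN (Us ν) (R L x) N =
        ∑ n ∈ (Finset.range N).map Nat.castEmbedding, Us ν (n:ℤ) (x - R L x) := by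
      rw [SN_eq, SN_eq, ← Finset.sum_sub_distrib]
      simp_rw [map_sub]
    rw [e]
    have := hsys.bound (x := x - R L x) (by rw [map_sub, hQR]; exact congrArg (· - R L x) hx) (by
      simp_rw [map_sub]
      simpa using hq.sub (hqR L)) (hpds L) ((Finset.range N).map Nat.castEmbedding)
    simpa using this
  have hsd : ∀ L : ℕ, |√(sg (Us ν) (R L x)) - √(sg (Us ν) x)| ≤ ∑' k, pk Q (x - R L x) k := by
    intro L
    have h1 := ((hvarR L).sqrt.sub hvar.sqrt).abs
    refine le_of_tendsto h1 ?_
    filter_upwards [eventually_gt_atTop 0] with N hN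
    have hN' : (0:ℝ) < N := by exact_mod_cast hN
    have hsN : 0 < √(N:ℝ) := Real.sqrt_pos.mpr hN'
    rw [Real.sqrt_div (by positivity), Real.sqrt_div (by positivity), Real.sqrt_sq (norm_nonneg _),
      Real.sqrt_sq (norm_nonneg _), ← sub_div, abs_div, abs_of_pos hsN, div_le_iff₀ hsN]
    refine (abs_norm_sub_norm_le _ _).trans ?_
    rw [norm_sub_rev, mul_comm]
    exact hdiff L N
  have hnn : ∀ w : HH ν, Tendsto (fun N : ℕ => ‖SN (Us ν) w N‖ ^ 2 / N) atTop (𝓝 (sg (Us ν) w)) →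
      0 ≤ sg (Us ν) w := fun w hw => ge_of_tendsto' hw fun N => by positivity
  have hsl : Tendsto (fun L : ℕ => sg (Us ν) (R L x)) atTop (𝓝 (sg (Us ν) x)) := by
    have h1 : Tendsto (fun L : ℕ => √(sg (Us ν) (R L x))) atTop (𝓝 (√(sg (Us ν) x))) := by
      rw [tendsto_iff_norm_sub_tendsto_zero]
      exact squeeze_zero (fun _ => norm_nonneg _) hsd hδ
    have h2 := h1.pow 2
    rw [Real.sq_sqrt (hnn _ hvar)] at h2
    refine h2.congr fun L => Real.sq_sqrt (hnn _ (hvarR L))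
  refine approx_limit (G := fun L : ℕ => Complex.exp (-((t ^ 2 * sg (Us ν) (R L x) / 2 : ℝ) : ℂ)))
    (e := fun L => |t| * ∑' k, pk Q (x - R L x) k) ?_ ?_ ?_
  · refine Eventually.of_forall fun L ε hε => ?_
    have hyL : Ec ν (Icc (-(L:ℤ)) 0) (R L x) = R L x := by
      simp only [hR]; rw [Ec_comp, inter_self]
    have hy0 : Ec ν ∅ (R L x) = 0 := by
      have : Ec ν ∅ (R L x) = R L (Ec ν ∅ x) := by
        simp only [hR]; rw [Ec_comp, Ec_comp, inter_comm]
      rw [this, h0]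
      exact map_zero _
    have hclt := mdep_clt ν hyL hy0 (tsum_nonneg fun k => pk_nonneg _ k)
      (fun s => hsys.bound (hQR L) (hqR L) (hpRs L) s) (hvarR L) t
    have := (Metric.tendsto_nhds.mp hclt) ε hε
    filter_upwards [this, eventually_gt_atTop 0] with N h1 hN
    have hN' : (0:ℝ) < N := by exact_mod_cast hN
    have hsN : 0 < √(N:ℝ) := Real.sqrt_pos.mpr hN'
    rw [dist_eq_norm] at h1
    have h2 : ‖cf ν ((t / √N) • SN (Us ν) x N) - cf ν ((t / √N) • SN (Us ν) (R L x) N)‖ ≤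
        |t| * ∑' k, pk Q (x - R L x) k := by
      refine (cf_lip ν _ _).trans ?_
      rw [← smul_sub, norm_smul, norm_div, Real.norm_eq_abs, Real.norm_eq_abs, abs_of_pos hsN]
      calc |t| / √N * ‖SN (Us ν) x N - SN (Us ν) (R L x) N‖
          ≤ |t| / √N * (√N * ∑' k, pk Q (x - R L x) k) := by gcongr; exact hdiff L N
        _ = _ := by field_simp
    refine (norm_sub_le_norm_sub_add_norm_sub _ (cf ν ((t / √N) • SN (Us ν) (R L x) N)) _).trans ?_
    linarith
  · simpa using hδ.const_mul |t|
  · have hc : Continuous fun r : ℝ => Complex.exp (-(r : ℂ)) := by fun_prop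
    exact (hc.tendsto _).comp ((hsl.const_mul (t ^ 2)).div_const 2)

end fivef
end S18

namespace S18
set_option linter.unusedSectionVars false

section sixa

/-- law of one block of innovations -/
def LawE (α : ℝ) (a : ℝ → ℝ) (ν : Measure (ℕ → ℝ)) : Prop :=
  ∀ (s : Finset ℕ) (u : ℕ → ℝ),
    ∫ x, Complex.exp (Complex.I * ((∑ k ∈ s, u k * x k : ℝ) : ℂ)) ∂ν =
    Complex.exp (-((∫ x in Ioc (0:ℝ) 1, |∑ k ∈ s, u k * a (k + x)| ^ α : ℝ) : ℂ))

/-- mass of one block -/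
noncomputable def tau (α : ℝ) (a : ℝ → ℝ) (m : ℕ) : ℝ := ∫ x in Ioc (m:ℝ) (m + 1), |a x| ^ α

lemma tau_nonneg (α : ℝ) (a : ℝ → ℝ) (m : ℕ) : 0 ≤ tau α a m :=
  integral_nonneg fun x => by positivity

lemma tau_eq (α : ℝ) (a : ℝ → ℝ) (m : ℕ) : ∫ x in Ioc (0:ℝ) 1, |a (m + x)| ^ α = tau α a m := by
  unfold tau
  rw [← intervalIntegral.integral_of_le zero_le_one,
    ← intervalIntegral.integral_of_le (by linarith : (m:ℝ) ≤ m + 1)]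
  rw [intervalIntegral.integral_comp_add_left (fun y => |a y| ^ α)]
  simp

variable {α : ℝ} {a : ℝ → ℝ} {ν : Measure (ℕ → ℝ)} [IsProbabilityMeasure ν]

lemma base_char (hν : LawE α a ν) (J : Finset ℤ) (s : Finset ℕ) (c : ℤ → ℕ → ℝ) :
    ∫ ω, Complex.exp (Complex.I * ((∑ i ∈ J, ∑ k ∈ s, c i k * ω i k : ℝ) : ℂ)) ∂(PP ν) =
    Complex.exp (-((∑ i ∈ J, ∫ x in Ioc (0:ℝ) 1, |∑ k ∈ s, c i k * a (k + x)| ^ α : ℝ) : ℂ)) := by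
  have hm : ∀ i : ℤ, Measurable (fun e : ℕ → ℝ => ∑ k ∈ s, c i k * e k) := fun i => by fun_prop
  have hind := ProbabilityTheory.iIndepFun_infinitePi (P := fun _ : ℤ => ν) (X := fun (i : ℤ) (e : ℕ → ℝ) => ∑ k ∈ s, c i k * e k) hm
  have h := congrFun ((hind.restrict J).charFun_map_fun_finsetSum_eq_prod (s := J)
    (fun i _ => ((hm i).comp (measurable_pi_apply i)).aemeasurable)) 1
  simp only [Function.comp_def] at h
  rw [charFun_apply_real, integral_map (Measurable.aemeasurable (by fun_prop)) (by fun_prop),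
    Finset.prod_apply] at h
  have e1 : ∀ i ∈ J, charFun ((PP ν).map fun ω => ∑ k ∈ s, c i k * ω i k) 1 =
      Complex.exp (-((∫ x in Ioc (0:ℝ) 1, |∑ k ∈ s, c i k * a (k + x)| ^ α : ℝ) : ℂ)) := by
    intro i _
    rw [← hν s (c i), charFun_apply_real,
      integral_map (Measurable.aemeasurable (by fun_prop)) (by fun_prop)]
    rw [← mp_int (measurePreserving_eval_infinitePi (fun _ : ℤ => ν) i)
      (f := fun x => Complex.exp (Complex.I * ((∑ k ∈ s, c i k * x k : ℝ) : ℂ)))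
      (Measurable.aestronglyMeasurable (by fun_prop))]
    simp [mul_comm]
  rw [Finset.prod_congr rfl e1, ← Complex.exp_sum] at h
  rw [Complex.ofReal_sum, ← Finset.sum_neg_distrib, ← h]
  refine integral_congr_ae (ae_of_all _ fun ω => ?_)
  simp only [Complex.ofReal_one, one_mul]
  rw [mul_comm]

open Classical in
/-- partial sums -/
noncomputable def XM (A : Set ℕ) (M : ℕ) (ω : ℤ → ℕ → ℝ) : ℝ :=
  ∑ m ∈ Finset.range M, if m ∈ A then ω (-(m:ℤ)) m else 0

/-- the partial moving average over lags in `A` -/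
noncomputable def XA (A : Set ℕ) (ω : ℤ → ℕ → ℝ) : ℝ := limsup (fun M => XM A M ω) atTop

lemma XM_measurable (A : Set ℕ) (M : ℕ) : Measurable (XM A M) := by
  classical
  unfold XM
  refine Finset.measurable_sum _ fun m _ => ?_
  by_cases h : m ∈ A
  · simp only [h, if_true]; fun_prop
  · simp only [h, if_false]; fun_prop

lemma XA_measurable (A : Set ℕ) : Measurable (XA A) := by
  unfold XA
  exact Measurable.limsup fun M => XM_measurable A M

open Classical in
lemma XM_char (hν : LawE α a ν) (h0 : 0 < α) (A : Set ℕ) (M : ℕ) (t : ℝ) :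
    ∫ ω, Complex.exp (Complex.I * ((t * XM A M ω : ℝ) : ℂ)) ∂(PP ν) =
    Complex.exp (-(((∑ m ∈ Finset.range M, if m ∈ A then tau α a m else 0) * |t| ^ α : ℝ) : ℂ)) := by
  have h := base_char hν ((Finset.range M).map ⟨fun m : ℕ => -(m:ℤ), fun m n h => by simpa using h⟩)
    (Finset.range M) (fun i k => if i = -(k:ℤ) ∧ k ∈ A then t else 0)
  have key : ∀ (g : ℕ → ℝ) (m : ℕ), m ∈ Finset.range M →
      ∑ k ∈ Finset.range M, (if -(m:ℤ) = -(k:ℤ) ∧ k ∈ A then t else 0) * g k =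
      t * if m ∈ A then g m else 0 := by
    intro g m hm
    rw [Finset.sum_eq_single m]
    · by_cases h : m ∈ A <;> simp [h]
    · intro k _ hk
      rw [if_neg, zero_mul]
      rintro ⟨h, -⟩
      apply hk
      omega
    · intro h; exact absurd hm h
  convert h using 1
  · refine integral_congr_ae (ae_of_all _ fun ω => ?_)
    have hh : t * XM A M ω = ∑ i ∈ (Finset.range M).map ⟨fun m : ℕ => -(m:ℤ), fun m n h => by simpa using h⟩,
        ∑ k ∈ Finset.range M, (if i = -(k:ℤ) ∧ k ∈ A then t else 0) * ω i k := by
      rw [Finset.sum_map, XM, Finset.mul_sum]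
      refine Finset.sum_congr rfl fun m hm => ?_
      exact (key (fun k => ω (-(m:ℤ)) k) m hm).symm
    exact congrArg (fun r : ℝ => Complex.exp (Complex.I * (r : ℂ))) hh
  · congr 3
    rw [Finset.sum_map, Finset.sum_mul]
    refine Finset.sum_congr rfl fun m hm => ?_
    have hk : ∀ x : ℝ, ∑ k ∈ Finset.range M, (if -(m:ℤ) = -(k:ℤ) ∧ k ∈ A then t else 0) * a (k + x)
        = t * if m ∈ A then a (m + x) else 0 := fun x => key (fun k => a (k + x)) m hm
    show _ = ∫ x in Ioc (0:ℝ) 1, |∑ k ∈ Finset.range M, (if -(m:ℤ) = -(k:ℤ) ∧ k ∈ A then t else 0) * a (k + x)| ^ α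
    simp only [hk]
    by_cases h : m ∈ A
    · simp only [h, if_true, abs_mul]
      rw [integral_congr_ae (ae_of_all _ fun x => Real.mul_rpow (abs_nonneg _) (abs_nonneg _)),
        integral_const_mul, tau_eq, mul_comm]
    · simp [h, Real.zero_rpow h0.ne']

lemma Y_law (hν : LawE α a ν) (h0 : 0 < α) (m : ℕ) :
    IsSAS α (tau α a m) ((PP ν).map fun ω => ω (-(m:ℤ)) m) := by
  classical
  intro t
  have h := XM_char hν h0 {m} (m + 1) t
  rw [charFun_apply_real, integral_map (Measurable.aemeasurable (by fun_prop)) (by fun_prop)]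
  have e : ∀ ω, XM {m} (m + 1) ω = ω (-(m:ℤ)) m := by
    intro ω
    simp [XM]
  simp only [e] at h
  have e2 : (∑ k ∈ Finset.range (m + 1), if k ∈ ({m} : Set ℕ) then tau α a k else 0) = tau α a m := by
    simp [Finset.sum_ite_eq']
  have h3 : ∫ ω, Complex.exp (Complex.I * ((t * ω (-(m:ℤ)) m : ℝ) : ℂ)) ∂(PP ν) =
      Complex.exp (-((tau α a m * |t| ^ α : ℝ) : ℂ)) := by
    rw [h, ← e2]
    congr!
  rw [← h3]
  refine integral_congr_ae (ae_of_all _ fun ω => ?_)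
  push_cast
  ring_nf

end sixa
end S18

namespace S18
set_option linter.unusedSectionVars false

section sixb
variable {α : ℝ} {a : ℝ → ℝ} {ν : Measure (ℕ → ℝ)} [IsProbabilityMeasure ν]

lemma tau_small (hs : Summable fun m => tau α a m ^ ((1:ℝ)/2)) : ∀ᶠ m in atTop, tau α a m ≤ 1 := by
  have := hs.tendsto_atTop_zero.eventually_lt_const (zero_lt_one)
  filter_upwards [this] with m hm
  by_contra h
  push Not at h
  have := Real.one_le_rpow h.le (by norm_num : (0:ℝ) ≤ 1/2)
  linarith

lemma tau_pow_summable (hs : Summable fun m => tau α a m ^ ((1:ℝ)/2)) {p : ℝ} (hp : 1/2 ≤ p) :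
    Summable fun m => tau α a m ^ p := by
  refine Summable.of_norm_bounded_eventually hs ?_
  rw [Nat.cofinite_eq_atTop]
  filter_upwards [tau_small hs] with m hm
  have h0 := tau_nonneg α a m
  rw [Real.norm_of_nonneg (by positivity)]
  rcases h0.eq_or_lt with h | h
  · rw [← h, Real.zero_rpow (by norm_num : (1:ℝ)/2 ≠ 0), Real.zero_rpow (by linarith)]
  · exact Real.rpow_le_rpow_of_exponent_ge h hm hp

lemma tau_summable (hs : Summable fun m => tau α a m ^ ((1:ℝ)/2)) : Summable (tau α a) := by
  simpa using tau_pow_summable hs (p := 1) (by norm_num)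

lemma Y_summable (hν : LawE α a ν) (h1 : 1 < α) (h2 : α < 2)
    (hs : Summable fun m => tau α a m ^ ((1:ℝ)/2)) :
    ∀ᵐ ω ∂(PP ν), Summable fun m : ℕ => |ω (-(m:ℤ)) m| := by
  obtain ⟨C, hC, hC2⟩ := first_moment h1 h2
  have hbd : ∀ m : ℕ, Integrable (fun ω : ℤ → ℕ → ℝ => |ω (-(m:ℤ)) m|) (PP ν) ∧
      ∫ ω, |ω (-(m:ℤ)) m| ∂(PP ν) ≤ C * (tau α a m ^ (1/α) + (1/2)^m) := by
    intro m
    have hmm : Measurable fun ω : ℤ → ℕ → ℝ => ω (-(m:ℤ)) m := by fun_prop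
    have : IsProbabilityMeasure ((PP ν).map fun ω => ω (-(m:ℤ)) m) :=
      Measure.isProbabilityMeasure_map hmm.aemeasurable
    have h0 := tau_nonneg α a m
    have h3 := hC2 (tau α a m) (tau α a m ^ (1/α) + (1/2)^m) _ h0 (by positivity) (by
      calc tau α a m = (tau α a m ^ (1/α)) ^ α := by
            rw [← Real.rpow_mul h0, one_div_mul_cancel (by linarith), Real.rpow_one]
        _ ≤ _ := Real.rpow_le_rpow (by positivity) (by simp) (by linarith)) (Y_law hν (by linarith) m)
    rw [integrable_map_measure (by fun_prop) hmm.aemeasurable,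
      integral_map hmm.aemeasurable (by fun_prop)] at h3
    exact h3
  have hS : Summable fun m : ℕ => C * (tau α a m ^ (1/α) + (1/2)^m) := by
    refine Summable.mul_left _ (Summable.add (tau_pow_summable hs ?_) ?_)
    · rw [div_le_div_iff₀ (by norm_num) (by linarith)]; linarith
    · exact summable_geometric_of_lt_one (by norm_num) (by norm_num)
  have hlt : ∫⁻ ω, ∑' m : ℕ, ENNReal.ofReal |ω (-(m:ℤ)) m| ∂(PP ν) ≠ ∞ := by
    rw [lintegral_tsum fun m => Measurable.aemeasurable (by fun_prop)]
    refine ne_top_of_le_ne_top hS.tsum_ofReal_ne_top (ENNReal.tsum_le_tsum fun m => ?_)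
    rw [← ofReal_integral_eq_lintegral_ofReal (hbd m).1 (ae_of_all _ fun ω => abs_nonneg _)]
    exact ENNReal.ofReal_le_ofReal (hbd m).2
  filter_upwards [ae_lt_top' (Measurable.aemeasurable (Measurable.tsum fun m => by fun_prop)) hlt] with ω hω
  have := ENNReal.summable_toReal hω.ne
  simpa using this

open Classical in
lemma XA_eq {ω : ℤ → ℕ → ℝ} (h : Summable fun m : ℕ => |ω (-(m:ℤ)) m|) (A : Set ℕ) :
    Summable (fun m : ℕ => if m ∈ A then ω (-(m:ℤ)) m else 0) ∧
    XA A ω = ∑' m : ℕ, (if m ∈ A then ω (-(m:ℤ)) m else 0) ∧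
    Tendsto (fun M => XM A M ω) atTop (𝓝 (XA A ω)) := by
  have hs : Summable (fun m : ℕ => if m ∈ A then ω (-(m:ℤ)) m else 0) := by
    refine Summable.of_norm_bounded h fun m => ?_
    by_cases hm : m ∈ A <;> simp [hm]
  have ht : Tendsto (fun M => XM A M ω) atTop (𝓝 (∑' m : ℕ, (if m ∈ A then ω (-(m:ℤ)) m else 0))) :=
    hs.hasSum.tendsto_sum_nat
  have he : XA A ω = ∑' m : ℕ, (if m ∈ A then ω (-(m:ℤ)) m else 0) := ht.limsup_eq
  exact ⟨hs, he, he ▸ ht⟩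

/-- additivity over disjoint lags -/
lemma XA_union {ω : ℤ → ℕ → ℝ} (h : Summable fun m : ℕ => |ω (-(m:ℤ)) m|) {A B : Set ℕ}
    (hd : Disjoint A B) : XA (A ∪ B) ω = XA A ω + XA B ω := by
  classical
  rw [(XA_eq h _).2.1, (XA_eq h A).2.1, (XA_eq h B).2.1, ← (XA_eq h A).1.tsum_add (XA_eq h B).1]
  refine tsum_congr fun m => ?_
  by_cases hA : m ∈ A
  · have : m ∉ B := fun hB => hd.le_bot ⟨hA, hB⟩
    simp [hA, this]
  · by_cases hB : m ∈ B <;> simp [hA, hB]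

lemma XA_singleton {ω : ℤ → ℕ → ℝ} (h : Summable fun m : ℕ => |ω (-(m:ℤ)) m|) (k : ℕ) :
    XA {k} ω = ω (-(k:ℤ)) k := by
  classical
  rw [(XA_eq h _).2.1, tsum_eq_single k]
  · simp
  · intro m hm; simp [hm]

open Classical in
/-- scale of the partial moving average -/
noncomputable def tauA (α : ℝ) (a : ℝ → ℝ) (A : Set ℕ) : ℝ := ∑' m : ℕ, if m ∈ A then tau α a m else 0

lemma tauA_nonneg (A : Set ℕ) : 0 ≤ tauA α a A := by
  classical
  refine tsum_nonneg fun m => ?_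
  split_ifs
  · exact tau_nonneg α a m
  · exact le_rfl

lemma XA_law (hν : LawE α a ν) (h1 : 1 < α) (h2 : α < 2)
    (hs : Summable fun m => tau α a m ^ ((1:ℝ)/2)) (A : Set ℕ) :
    IsSAS α (tauA α a A) ((PP ν).map (XA A)) := by
  classical
  intro t
  rw [charFun_apply_real, integral_map (XA_measurable A).aemeasurable (by fun_prop)]
  have hl : Tendsto (fun M => ∫ ω, Complex.exp (Complex.I * ((t * XM A M ω : ℝ) : ℂ)) ∂(PP ν)) atTop
      (𝓝 (∫ ω, Complex.exp ((t:ℂ) * (XA A ω : ℂ) * Complex.I) ∂(PP ν))) := by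
    refine tendsto_integral_of_dominated_convergence (fun _ => 1) ?_ (by simp) ?_ ?_
    · intro M
      have := XM_measurable A M
      exact Measurable.aestronglyMeasurable (by fun_prop)
    · intro M
      refine ae_of_all _ fun ω => ?_
      rw [mul_comm, Complex.norm_exp_ofReal_mul_I]
    · filter_upwards [Y_summable hν h1 h2 hs] with ω hω
      have h3 := (XA_eq hω A).2.2
      have h4 : Continuous fun x : ℝ => Complex.exp (Complex.I * ((t * x : ℝ) : ℂ)) := by fun_prop
      have h5 := (h4.tendsto (XA A ω)).comp h3
      refine h5.congr' (EventuallyEq.rfl) |>.trans_eq ?_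
      congr 2
      push_cast
      ring
  refine tendsto_nhds_unique hl ?_
  simp only [XM_char hν (by linarith : 0 < α) A]
  have hsA : Summable fun m : ℕ => if m ∈ A then tau α a m else 0 := by
    refine Summable.of_norm_bounded (tau_summable hs) fun m => ?_
    have := tau_nonneg α a m
    by_cases hm : m ∈ A <;> simp [hm, this, abs_of_nonneg]
  have h6 : Continuous fun x : ℝ => Complex.exp (-((x * |t| ^ α : ℝ) : ℂ)) := by fun_prop
  exact (h6.tendsto _).comp hsA.hasSum.tendsto_sum_nat

end sixb
end S18

namespace S18
set_option linter.unusedSectionVars false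

section sixc
variable {α : ℝ} {a : ℝ → ℝ} {ν : Measure (ℕ → ℝ)} [IsProbabilityMeasure ν]

lemma int_dom (h1 : 1 < α) (ham : Measurable a) (hai : Integrable (fun x => |a x| ^ α) volume)
    {m : ℕ} (n : Fin m → ℤ) (u : Fin m → ℝ) :
    Integrable (fun y => (∑ j, |u j| * |a ((n j : ℝ) - y)|) ^ α) volume := by
  have hα : (ENNReal.ofReal α).toReal = α := ENNReal.toReal_ofReal (by linarith)
  have hm : ∀ j, MemLp (fun y => |a ((n j : ℝ) - y)|) (ENNReal.ofReal α) volume := by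
    intro k
    rw [← integrable_norm_rpow_iff (Measurable.aestronglyMeasurable (by fun_prop)) (by simp; linarith) (by simp), hα]
    have := hai.comp_sub_left (n k : ℝ)
    simpa using this
  have hs : MemLp (fun x => ∑ j, |u j| * |a ((n j : ℝ) - x)|) (ENNReal.ofReal α) volume :=
    memLp_finsetSum _ fun k _ => (hm k).const_mul _
  rw [← integrable_norm_rpow_iff hs.1 (by simp; linarith) (by simp), hα] at hs
  refine hs.congr (ae_of_all _ fun y => ?_)
  simp only
  rw [Real.norm_of_nonneg (Finset.sum_nonneg fun j _ => by positivity)]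

/-- truncated kernel -/
noncomputable def aM (a : ℝ → ℝ) (M : ℕ) : ℝ → ℝ := (Ioc (0:ℝ) M).indicator a

lemma sum_blocks (g : ℝ → ℝ) (hg : Integrable g volume) (R : ℕ) :
    ∑ k ∈ Finset.range (2 * R), ∫ x in Ioc (0:ℝ) 1, g (((k:ℤ) - R + 1 : ℤ) - x) =
    ∫ x in Ioc (-(R:ℝ)) R, g x := by
  rw [← intervalIntegral.integral_of_le (by have : (0:ℝ) ≤ R := by positivity
                                            linarith)]
  have := intervalIntegral.sum_integral_adjacent_intervals (μ := volume) (f := g)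
    (a := fun k : ℕ => (k:ℝ) - R) (n := 2 * R) (fun k _ => hg.intervalIntegrable)
  have e : ((2 * R : ℕ) : ℝ) - R = R := by push_cast; ring
  simp only [e, Nat.cast_zero, zero_sub] at this
  rw [← this]
  refine Finset.sum_congr rfl fun k _ => ?_
  rw [← intervalIntegral.integral_of_le zero_le_one, intervalIntegral.integral_comp_sub_left]
  congr 1 <;> · push_cast; ring

lemma trunc_char (hν : LawE α a ν) (h1 : 1 < α) (ham : Measurable a)
    (hai : Integrable (fun x => |a x| ^ α) volume)
    {m : ℕ} (n : Fin m → ℤ) (u : Fin m → ℝ) (M : ℕ) :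
    ∫ ω, Complex.exp (Complex.I * ((∑ j, u j * XM univ M (shf (n j) ω) : ℝ) : ℂ)) ∂(PP ν) =
    Complex.exp (-((∫ y, |∑ j, u j * aM a M ((n j : ℝ) - y)| ^ α : ℝ) : ℂ)) := by
  classical
  obtain ⟨B, hB⟩ : ∃ B : ℕ, ∀ j, |n j| ≤ B := by
    refine ⟨∑ j, (n j).natAbs, fun j => ?_⟩
    have := Finset.single_le_sum (f := fun j => (n j).natAbs) (fun i _ => Nat.zero_le _) (Finset.mem_univ j)
    rw [Int.abs_eq_natAbs]
    exact_mod_cast this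
  set R := M + B + 1 with hR
  set J : Finset ℤ := (Finset.range (2 * R)).map ⟨fun k : ℕ => (k:ℤ) - R + 1, fun x y h => by simpa using h⟩ with hJ
  have hmemJ : ∀ j, ∀ k ∈ Finset.range M, n j - k ∈ J := by
    intro j k hk
    have := abs_le.1 (hB j)
    rw [Finset.mem_range] at hk
    rw [hJ, Finset.mem_map]
    refine ⟨(n j - k + R - 1).toNat, ?_, ?_⟩
    · rw [Finset.mem_range]; omega
    · show (((n j - k + R - 1).toNat : ℕ) : ℤ) - R + 1 = n j - k
      omega
  have hb := base_char hν J (Finset.range M) (fun i k => ∑ j, if n j - k = i then u j else 0)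
  have e1 : ∀ ω : ℤ → ℕ → ℝ, ∑ i ∈ J, ∑ k ∈ Finset.range M, (∑ j, if n j - k = i then u j else 0) * ω i k
      = ∑ j, u j * XM univ M (shf (n j) ω) := by
    intro ω
    simp only [XM, mem_univ, if_true, shf, Finset.mul_sum, Finset.sum_mul]
    rw [Finset.sum_congr rfl fun i _ => Finset.sum_comm]
    rw [Finset.sum_comm]
    refine Finset.sum_congr rfl fun j _ => ?_
    rw [Finset.sum_comm]
    refine Finset.sum_congr rfl fun k hk => ?_
    rw [Finset.sum_eq_single (n j - k)]
    · rw [if_pos rfl, neg_add_eq_sub]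
    · intro i _ hi
      rw [if_neg (Ne.symm hi), zero_mul]
    · intro h; exact absurd (hmemJ j k hk) h
  simp only [e1] at hb
  rw [hb]
  congr 3
  have e2 : ∀ i : ℤ, ∀ x ∈ Ioc (0:ℝ) 1,
      ∑ k ∈ Finset.range M, (∑ j, if n j - k = i then u j else 0) * a (k + x) =
      ∑ j, u j * aM a M ((n j : ℝ) - ((i:ℝ) - x)) := by
    intro i x hx
    simp only [Finset.sum_mul]
    rw [Finset.sum_comm]
    refine Finset.sum_congr rfl fun j _ => ?_
    by_cases h : ∃ k ∈ Finset.range M, n j - k = i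
    · obtain ⟨k, hk, hki⟩ := h
      rw [Finset.sum_eq_single k]
      · have e : (n j : ℝ) - ((i:ℝ) - x) = k + x := by
          rw [← hki]; push_cast; ring
        rw [if_pos hki, e, aM, indicator_of_mem]
        rw [Finset.mem_range] at hk
        have : (k:ℝ) + 1 ≤ M := by exact_mod_cast hk
        constructor
        · have : (0:ℝ) ≤ k := by positivity
          linarith [hx.1]
        · linarith [hx.2]
      · intro k' _ hk'
        rw [if_neg, zero_mul]
        intro h; apply hk'; omega
      · intro h; exact absurd hk h
    · push Not at h
      rw [Finset.sum_eq_zero fun k hk => by rw [if_neg (h k hk), zero_mul]]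
      rw [aM, indicator_of_notMem, mul_zero]
      rintro ⟨h3, h4⟩
      have h5 : i - n j < 1 := by
        have : ((i - n j : ℤ) : ℝ) < 1 := by push_cast; linarith [hx.2]
        exact_mod_cast this
      have h6 : n j - i < M := by
        have : ((n j - i : ℤ) : ℝ) < M := by push_cast; linarith [hx.1]
        exact_mod_cast this
      refine h (n j - i).toNat ?_ ?_
      · rw [Finset.mem_range]; omega
      · omega
  have e3 : ∀ i : ℤ, ∫ x in Ioc (0:ℝ) 1, |∑ k ∈ Finset.range M, (∑ j, if n j - k = i then u j else 0) * a (k + x)| ^ α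
      = ∫ x in Ioc (0:ℝ) 1, |∑ j, u j * aM a M ((n j : ℝ) - ((i:ℝ) - x))| ^ α := by
    intro i
    refine setIntegral_congr_fun measurableSet_Ioc fun x hx => ?_
    rw [e2 i x hx]
  simp only [e3]
  have haM : Measurable (aM a M) := ham.indicator measurableSet_Ioc
  have h_integ0 : Integrable (fun y => |∑ j, u j * aM a M ((n j : ℝ) - y)| ^ α) volume := by
    refine (int_dom h1 ham hai n u).mono' (Measurable.aestronglyMeasurable (by fun_prop)) (ae_of_all _ fun y => ?_)
    rw [Real.norm_of_nonneg (by positivity)]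
    refine Real.rpow_le_rpow (abs_nonneg _) ?_ (by linarith)
    refine (Finset.abs_sum_le_sum_abs _ _).trans (Finset.sum_le_sum fun j _ => ?_)
    rw [abs_mul]
    exact mul_le_mul_of_nonneg_left (norm_indicator_le_norm_self a _) (abs_nonneg _)
  rw [hJ, Finset.sum_map]
  have h7 := sum_blocks _ h_integ0 R
  refine h7.trans ?_
  refine setIntegral_eq_integral_of_forall_compl_eq_zero fun y hy => ?_
  rw [Finset.sum_eq_zero, abs_zero, Real.zero_rpow (by linarith)]
  intro j _
  rw [aM, indicator_of_notMem, mul_zero]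
  rintro ⟨h3, h4⟩
  apply hy
  have h8 := abs_le.1 (hB j)
  have h9 : (-(B:ℝ)) ≤ n j := by exact_mod_cast h8.1
  have h10 : (n j : ℝ) ≤ B := by exact_mod_cast h8.2
  have h11 : (R:ℝ) = M + B + 1 := by rw [hR]; push_cast; ring
  have : (0:ℝ) ≤ M := by positivity
  constructor <;> linarith

/-- the stationary model -/
noncomputable def XX (n : ℤ) (ω : ℤ → ℕ → ℝ) : ℝ := XA univ (shf n ω)

lemma XX_measurable (n : ℤ) : Measurable (XX n) := (XA_measurable univ).comp (shf_measurable n)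

lemma model_char (hν : LawE α a ν) (h1 : 1 < α) (h2 : α < 2)
    (hs : Summable fun m => tau α a m ^ ((1:ℝ)/2)) (ham : Measurable a)
    (hai : Integrable (fun x => |a x| ^ α) volume) (hc : ∀ x < 0, a x = 0)
    {m : ℕ} (n : Fin m → ℤ) (u : Fin m → ℝ) :
    ∫ ω, Complex.exp (Complex.I * ((∑ j, u j * XX (n j) ω : ℝ) : ℂ)) ∂(PP ν) =
    Complex.exp (-((∫ y, |∑ j, u j * a ((n j : ℝ) - y)| ^ α : ℝ) : ℂ)) := by
  have hl : Tendsto (fun M => ∫ ω, Complex.exp (Complex.I * ((∑ j, u j * XM univ M (shf (n j) ω) : ℝ) : ℂ)) ∂(PP ν)) atTop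
      (𝓝 (∫ ω, Complex.exp (Complex.I * ((∑ j, u j * XX (n j) ω : ℝ) : ℂ)) ∂(PP ν))) := by
    refine tendsto_integral_of_dominated_convergence (fun _ => 1) ?_ (by simp) ?_ ?_
    · intro M
      have := fun j => (XM_measurable univ M).comp (shf_measurable (E := ℕ → ℝ) (n j))
      simp only [Function.comp_def] at this
      exact Measurable.aestronglyMeasurable (by fun_prop)
    · intro M
      refine ae_of_all _ fun ω => ?_
      rw [mul_comm, Complex.norm_exp_ofReal_mul_I]
    · have : ∀ᵐ ω ∂(PP ν), ∀ j, Summable fun m : ℕ => |(shf (E := ℕ → ℝ) (n j) ω) (-(m:ℤ)) m| := by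
        rw [ae_all_iff]
        intro j
        exact (shf_mp ν (n j)).quasiMeasurePreserving.ae (Y_summable hν h1 h2 hs)
      filter_upwards [this] with ω hω
      have h4 : Continuous fun x : ℝ => Complex.exp (Complex.I * ((x : ℝ) : ℂ)) := by fun_prop
      refine (h4.tendsto _).comp (tendsto_finsetSum _ fun j _ => ?_)
      exact ((XA_eq (hω j) univ).2.2).const_mul _
  refine tendsto_nhds_unique hl ?_
  simp only [trunc_char hν h1 ham hai n u]
  have h6 : Continuous fun x : ℝ => Complex.exp (-((x : ℝ) : ℂ)) := by fun_prop
  refine (h6.tendsto _).comp ?_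
  refine tendsto_integral_of_dominated_convergence _ ?_ (int_dom h1 ham hai n u) ?_ ?_
  · intro M
    have haM : Measurable (aM a M) := ham.indicator measurableSet_Ioc
    exact Measurable.aestronglyMeasurable (by fun_prop)
  · intro M
    refine (ae_of_all _ fun y => ?_)
    rw [Real.norm_of_nonneg (by positivity)]
    refine Real.rpow_le_rpow (abs_nonneg _) ?_ (by linarith)
    refine (Finset.abs_sum_le_sum_abs _ _).trans (Finset.sum_le_sum fun j _ => ?_)
    rw [abs_mul]
    exact mul_le_mul_of_nonneg_left (norm_indicator_le_norm_self a _) (abs_nonneg _)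
  · have : ∀ᵐ y : ℝ, ∀ j, y ≠ n j := by
      rw [ae_all_iff]
      intro j
      exact Measure.ae_ne volume _
    filter_upwards [this] with y hy
    have h4 : Continuous fun x : ℝ => |x| ^ α := by
      exact continuous_abs.rpow_const fun x => Or.inr (by linarith)
    refine (h4.tendsto _).comp (tendsto_finsetSum _ fun j _ => ?_)
    refine Tendsto.const_mul _ ?_
    refine tendsto_const_nhds.congr' ?_
    filter_upwards [eventually_ge_atTop (⌈(n j:ℝ) - y⌉₊)] with M hM
    rcases lt_trichotomy ((n j : ℝ) - y) 0 with h | h | h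
    · rw [aM, indicator_of_notMem, hc _ h]
      rintro ⟨h3, h4⟩; linarith
    · exact absurd (by linarith) (hy j)
    · rw [aM, indicator_of_mem]
      exact ⟨h, (Nat.le_ceil _).trans (by exact_mod_cast hM)⟩

end sixc
end S18

namespace S18
set_option linter.unusedSectionVars false

section sixd
variable {α β : ℝ} {a : ℝ → ℝ} {ν : Measure (ℕ → ℝ)} [IsProbabilityMeasure ν]

lemma XM_congr {B : Set ℕ} {M : ℕ} {ω ω' : ℤ → ℕ → ℝ}
    (h : ∀ m < M, m ∈ B → ω (-(m:ℤ)) = ω' (-(m:ℤ))) : XM B M ω = XM B M ω' := by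
  classical
  unfold XM
  refine Finset.sum_congr rfl fun m hm => ?_
  by_cases hB : m ∈ B
  · rw [if_pos hB, if_pos hB, h m (Finset.mem_range.1 hm) hB]
  · rw [if_neg hB, if_neg hB]

lemma XA_congr {B : Set ℕ} {ω ω' : ℤ → ℕ → ℝ}
    (h : ∀ m ∈ B, ω (-(m:ℤ)) = ω' (-(m:ℤ))) : XA B ω = XA B ω' := by
  unfold XA
  congr 1
  funext M
  exact XM_congr fun m _ hm => h m hm

lemma mrg_in {A : Set ℤ} {i : ℤ} (h : i ∈ A) (p : (ℤ → ℕ → ℝ) × (ℤ → ℕ → ℝ)) : mrg A p i = p.1 i := by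
  classical
  exact if_pos h

lemma mrg_out {A : Set ℤ} {i : ℤ} (h : i ∉ A) (p : (ℤ → ℕ → ℝ) × (ℤ → ℕ → ℝ)) : mrg A p i = p.2 i := by
  classical
  exact if_neg h

lemma XA_mrg_in {A : Set ℤ} {B : Set ℕ} (h : ∀ m ∈ B, -(m:ℤ) ∈ A) (p : (ℤ → ℕ → ℝ) × (ℤ → ℕ → ℝ)) :
    XA B (mrg A p) = XA B p.1 := XA_congr fun m hm => mrg_in (h m hm) p

lemma XA_mrg_out {A : Set ℤ} {B : Set ℕ} (h : ∀ m ∈ B, -(m:ℤ) ∉ A) (p : (ℤ → ℕ → ℝ) × (ℤ → ℕ → ℝ)) :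
    XA B (mrg A p) = XA B p.2 := XA_congr fun m hm => mrg_out (h m hm) p

lemma sq_growth (hβ0 : 0 < β) (hβ1 : β < 1) (v : ℝ) :
    (1 + |v| ^ β) ^ 2 ≤ 4 + 2 * min (v ^ 2) (|v| ^ (2 * β)) := by
  have e : |v| ^ (2 * β) = (|v| ^ β) ^ 2 := by
    rw [mul_comm, Real.rpow_mul (abs_nonneg _)]; norm_cast
  rw [e]
  have h0 : 0 ≤ |v| ^ β := by positivity
  rcases le_total |v| 1 with h | h
  · have h3 : |v| ^ β ≤ 1 := Real.rpow_le_one (abs_nonneg _) h hβ0.le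
    have : 0 ≤ min (v ^ 2) ((|v| ^ β) ^ 2) := by positivity
    nlinarith
  · have h3 : |v| ^ β ≤ |v| := by
      simpa using Real.rpow_le_rpow_of_exponent_le h hβ1.le
    have : (|v| ^ β) ^ 2 ≤ v ^ 2 := by
      rw [← sq_abs v]; gcongr
    rw [min_eq_right this]
    nlinarith [sq_nonneg (1 - |v| ^ β)]

lemma tauA_le (hs : Summable fun m => tau α a m ^ ((1:ℝ)/2)) (B : Set ℕ) :
    tauA α a B ≤ tauA α a univ := by
  classical
  have hsA : ∀ A : Set ℕ, Summable fun m : ℕ => if m ∈ A then tau α a m else 0 := by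
    intro A
    refine Summable.of_norm_bounded (tau_summable hs) fun m => ?_
    have := tau_nonneg α a m
    by_cases hm : m ∈ A <;> simp [hm, this, abs_of_nonneg]
  refine Summable.tsum_le_tsum (fun m => ?_) (hsA B) (hsA univ)
  have := tau_nonneg α a m
  by_cases hm : m ∈ B <;> simp [hm, this]

lemma V_bound (hν : LawE α a ν) (h1 : 1 < α) (h2 : α < 2)
    (hs : Summable fun m => tau α a m ^ ((1:ℝ)/2)) (hβ0 : 0 < β) (hβ : β < α / 2) :
    ∃ C : ℝ, 0 ≤ C ∧ ∀ B, Integrable (fun ω => (1 + |XA B ω| ^ β) ^ 2) (PP ν) ∧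
      ∫ ω, (1 + |XA B ω| ^ β) ^ 2 ∂(PP ν) ≤ C := by
  obtain ⟨C, hC, hb⟩ := moment_bound (q := 2 * β) (α := α) (by linarith) (by linarith) h2
  have hT := tauA_nonneg (α := α) (a := a) univ
  refine ⟨4 + 2 * (C * tauA α a univ), by positivity, fun B => ?_⟩
  have hm := XA_measurable B
  have : IsProbabilityMeasure ((PP ν).map (XA B)) := Measure.isProbabilityMeasure_map hm.aemeasurable
  obtain ⟨hi, hle⟩ := hb _ _ (tauA_nonneg B) (XA_law hν h1 h2 hs B)
  have hi4 : Integrable (fun y : ℝ => 4 + 2 * min (y ^ 2) (|y| ^ (2 * β))) ((PP ν).map (XA B)) :=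
    (integrable_const _).add (hi.const_mul 2)
  have hi5 : Integrable (fun y : ℝ => (1 + |y| ^ β) ^ 2) ((PP ν).map (XA B)) := by
    refine hi4.mono' (Measurable.aestronglyMeasurable (by fun_prop)) (ae_of_all _ fun y => ?_)
    rw [Real.norm_of_nonneg (by positivity)]
    exact sq_growth hβ0 (by linarith) y
  constructor
  · exact (integrable_map_measure hi5.1 hm.aemeasurable).1 hi5
  · rw [← integral_map (f := fun y : ℝ => (1 + |y| ^ β) ^ 2) hm.aemeasurable hi5.1]
    calc _ ≤ ∫ y, (4 + 2 * min (y ^ 2) (|y| ^ (2 * β))) ∂((PP ν).map (XA B)) :=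
          integral_mono hi5 hi4 fun y => sq_growth hβ0 (by linarith) y
      _ = 4 + 2 * ∫ y, min (y ^ 2) (|y| ^ (2 * β)) ∂((PP ν).map (XA B)) := by
          rw [integral_add (integrable_const _) (hi.const_mul 2), integral_const_mul]; simp
      _ ≤ 4 + 2 * (C * tauA α a B) := by gcongr
      _ ≤ _ := by gcongr; exact tauA_le hs B

lemma memLp_growth (hν : LawE α a ν) (h1 : 1 < α) (h2 : α < 2)
    (hs : Summable fun m => tau α a m ^ ((1:ℝ)/2)) (hβ0 : 0 < β) (hβ : β < α / 2)
    {h : ℝ → ℝ} (hm : Measurable h) {D : ℝ} (hD : ∀ v, |h v| ≤ D * (1 + |v| ^ β)) (B : Set ℕ) :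
    MemLp (fun ω => h (XA B ω)) 2 (PP ν) := by
  have hX := XA_measurable B
  obtain ⟨C, hC, hb⟩ := V_bound hν h1 h2 hs hβ0 hβ
  rw [memLp_two_iff_integrable_sq (Measurable.aestronglyMeasurable (by fun_prop))]
  refine ((hb B).1.const_mul (D ^ 2)).mono' (Measurable.aestronglyMeasurable (by fun_prop)) (ae_of_all _ fun ω => ?_)
  rw [Real.norm_of_nonneg (by positivity), ← mul_pow, ← sq_abs]
  exact pow_le_pow_left₀ (abs_nonneg _) (hD _) 2

/-- second moment of the product of independent pieces -/
lemma VY_bound (hν : LawE α a ν) (h1 : 1 < α) (h2 : α < 2)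
    (hs : Summable fun m => tau α a m ^ ((1:ℝ)/2)) (hβ0 : 0 < β) (hβ : β < α / 2) :
    ∃ C : ℝ, 0 ≤ C ∧ ∀ (k : ℕ) (B : Set ℕ), k ∉ B →
      Integrable (fun ω => (1 + |XA B ω| ^ β) ^ 2 * min ((ω (-(k:ℤ)) k) ^ 2) (|ω (-(k:ℤ)) k| ^ (2 * β))) (PP ν) ∧
      ∫ ω, (1 + |XA B ω| ^ β) ^ 2 * min ((ω (-(k:ℤ)) k) ^ 2) (|ω (-(k:ℤ)) k| ^ (2 * β)) ∂(PP ν) ≤ C * tau α a k := by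
  obtain ⟨C1, hC1, hb1⟩ := V_bound hν h1 h2 hs hβ0 hβ
  obtain ⟨C, hC, hb⟩ := moment_bound (q := 2 * β) (α := α) (by linarith) (by linarith) h2
  refine ⟨C1 * C, by positivity, fun k B hk => ?_⟩
  have hY : Measurable fun ω : ℤ → ℕ → ℝ => ω (-(k:ℤ)) k := by fun_prop
  have hX := XA_measurable B
  have : IsProbabilityMeasure ((PP ν).map fun ω => ω (-(k:ℤ)) k) := Measure.isProbabilityMeasure_map hY.aemeasurable
  obtain ⟨hi, hle⟩ := hb _ _ (tau_nonneg α a k) (Y_law hν (by linarith) k)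
  rw [integrable_map_measure hi.1 hY.aemeasurable] at hi
  rw [integral_map hY.aemeasurable (Measurable.aestronglyMeasurable (by fun_prop))] at hle
  have hmeas : Measurable (fun ω : ℤ → ℕ → ℝ => (1 + |XA B ω| ^ β) ^ 2 * min ((ω (-(k:ℤ)) k) ^ 2) (|ω (-(k:ℤ)) k| ^ (2 * β))) := by
    fun_prop
  have hmp := mrg_mp ν ({-(k:ℤ)}ᶜ)
  have e : ∀ p : (ℤ → ℕ → ℝ) × (ℤ → ℕ → ℝ), (1 + |XA B (mrg {-(k:ℤ)}ᶜ p)| ^ β) ^ 2 *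
      min ((mrg {-(k:ℤ)}ᶜ p (-(k:ℤ)) k) ^ 2) (|mrg {-(k:ℤ)}ᶜ p (-(k:ℤ)) k| ^ (2 * β)) =
      (1 + |XA B p.1| ^ β) ^ 2 * min ((p.2 (-(k:ℤ)) k) ^ 2) (|p.2 (-(k:ℤ)) k| ^ (2 * β)) := by
    intro p
    rw [XA_mrg_in (fun m hm => ?_), mrg_out (by simp)]
    simp only [mem_compl_iff, mem_singleton_iff, neg_inj, Nat.cast_inj]
    rintro rfl; exact hk hm
  constructor
  · rw [← hmp.integrable_comp hmeas.aestronglyMeasurable]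
    simp only [Function.comp_def, e]
    exact (hb1 B).1.mul_prod hi
  · rw [← mp_int hmp hmeas.aestronglyMeasurable]
    simp only [e]
    rw [integral_prod_mul (fun ω => (1 + |XA B ω| ^ β) ^ 2) (fun ω : ℤ → ℕ → ℝ => min ((ω (-(k:ℤ)) k) ^ 2) (|ω (-(k:ℤ)) k| ^ (2 * β))),
      mul_assoc]
    refine mul_le_mul (hb1 B).2 hle (integral_nonneg fun ω => by positivity) hC1

end sixd
end S18

namespace S18
set_option linter.unusedSectionVars false

section sixe
variable {α β : ℝ} {a : ℝ → ℝ} {ν : Measure (ℕ → ℝ)} [IsProbabilityMeasure ν]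

lemma toLp_norm_sq {f : (ℤ → ℕ → ℝ) → ℝ} (hf : MemLp f 2 (PP ν)) : ‖hf.toLp f‖ ^ 2 = ∫ ω, (f ω) ^ 2 ∂(PP ν) := by
  rw [norm_sq_int]
  refine integral_congr_ae ?_
  filter_upwards [hf.coeFn_toLp] with ω h
  rw [h]

lemma G_eq (hν : LawE α a ν) (h1 : 1 < α) (h2 : α < 2)
    (hs : Summable fun m => tau α a m ^ ((1:ℝ)/2))
    {K : ℝ → ℝ} (hK : Measurable K) (hF : MemLp (fun ω => K (XA univ ω)) 2 (PP ν)) (k0 : ℕ) :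
    Ec ν (Iic (-(k0:ℤ))) (hF.toLp _) =ᵐ[PP ν]
      fun ω => smo K ((PP ν).map (XA {m | m < k0})) (XA {m | k0 ≤ m} ω) := by
  have hm := mrg_mp ν (Iic (-(k0:ℤ)))
  have g1 := Measure.ae_ae_of_ae_prod (hm.quasiMeasurePreserving.ae hF.coeFn_toLp)
  have g2 := Measure.ae_ae_of_ae_prod (hm.quasiMeasurePreserving.ae (Y_summable hν h1 h2 hs))
  filter_upwards [Ec_ae ν (Iic (-(k0:ℤ))) (hF.toLp _), g1, g2] with ω e1 e2 e3
  rw [e1, smo, integral_map (XA_measurable _).aemeasurable (Measurable.aestronglyMeasurable (by fun_prop))]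
  refine integral_congr_ae ?_
  filter_upwards [e2, e3] with ω' e4 e5
  rw [e4]
  have hu : (univ : Set ℕ) = {m | k0 ≤ m} ∪ {m | m < k0} := by
    ext m; simp [le_or_gt]
  have hd : Disjoint {m : ℕ | k0 ≤ m} {m | m < k0} := by
    rw [Set.disjoint_left]; intro m h h'
    simp only [mem_ofPred_eq] at h h'; omega
  rw [hu, XA_union e5 hd, XA_mrg_in, XA_mrg_out]
  · intro m hm
    simp only [mem_ofPred_eq] at hm
    simp only [mem_Iic]; omega
  · intro m hm
    simp only [mem_ofPred_eq] at hm
    simp only [mem_Iic]; omega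

lemma Dl_reduce (k0 k : ℕ) (hk : k0 ≤ k) (x : HH ν) :
    Dl (fun j => Ec ν (Iic j)) (-(k:ℤ)) x =
    Dl (fun j => Ec ν (Iic j)) (-(k:ℤ)) (Ec ν (Iic (-(k0:ℤ))) x) := by
  simp only [Dl_apply, Ec_comp]
  rw [Iic_inter_Iic, Iic_inter_Iic, inf_of_le_left (by omega), inf_of_le_left (by omega)]

lemma Dl_zero (k : ℕ) (y : HH ν) (hy : Ec ν {-(k:ℤ)}ᶜ y = y) :
    Dl (fun j => Ec ν (Iic j)) (-(k:ℤ)) y = 0 := by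
  rw [← hy]
  simp only [Dl_apply, Ec_comp]
  have : Iic (-(k:ℤ)) ∩ {-(k:ℤ)}ᶜ = Iic (-(k:ℤ) - 1) ∩ {-(k:ℤ)}ᶜ := by
    ext i; simp only [mem_inter_iff, mem_Iic, mem_compl_iff, mem_singleton_iff]; omega
  rw [this, sub_self]

lemma Dl_norm (i : ℤ) (y : HH ν) : ‖Dl (fun j => Ec ν (Iic j)) i y‖ ≤ 2 * ‖y‖ := by
  rw [Dl_apply]
  refine (norm_sub_le _ _).trans ?_
  have := Ec_norm_le ν (Iic i) y
  have := Ec_norm_le ν (Iic (i - 1)) y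
  linarith

lemma pk_bound (hν : LawE α a ν) (h1 : 1 < α) (h2 : α < 2)
    (hs : Summable fun m => tau α a m ^ ((1:ℝ)/2)) (hβ0 : 0 < β) (hβ : β < α / 2)
    {K : ℝ → ℝ} (hK : Measurable K) {C : ℝ} (hC : 0 ≤ C) (hKb : ∀ v, |K v| ≤ C * (1 + |v| ^ β))
    (hF : MemLp (fun ω => K (XA univ ω)) 2 (PP ν)) (k0 : ℕ) (hk0 : 0 < tauA α a {m | m < k0}) :
    ∃ C' : ℝ, 0 ≤ C' ∧ ∀ k ≥ k0, pk (fun j => Ec ν (Iic j)) (hF.toLp _) k ≤ C' * tau α a k ^ ((1:ℝ)/2) := by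
  set ρ := (PP ν).map (XA {m | m < k0}) with hρ
  have : IsProbabilityMeasure ρ := Measure.isProbabilityMeasure_map (XA_measurable _).aemeasurable
  obtain ⟨-, ⟨D1, hD1, hg1⟩, ⟨D, hD, hg⟩⟩ := smo_props h1 hk0 hβ0 (by linarith) hK hC hKb
    (XA_law hν h1 h2 hs {m | m < k0})
  rw [← hρ] at hg hg1
  have hsm := smo_measurable hK ρ
  obtain ⟨C1, hC1, hb⟩ := VY_bound hν h1 h2 hs hβ0 hβ
  refine ⟨2 * √(D * C1), by positivity, fun k hk => ?_⟩
  set B : Set ℕ := {m | k0 ≤ m ∧ m ≠ k} with hB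
  have hkB : k ∉ B := by simp [hB]
  have hG' := memLp_growth hν h1 h2 hs hβ0 hβ hsm hg1 B
  have hdep : Ec ν {-(k:ℤ)}ᶜ (hG'.toLp _) = hG'.toLp _ := by
    refine dep_of_mrg ν hG'.coeFn_toLp (ae_of_all _ fun p => ?_)
    rw [XA_mrg_in]
    intro m hm
    simp only [mem_compl_iff, mem_singleton_iff, neg_inj, Nat.cast_inj]
    exact hm.2
  unfold pk
  rw [Dl_reduce k0 k hk]
  set G := Ec ν (Iic (-(k0:ℤ))) (hF.toLp _) with hG
  have e1 : Dl (fun j => Ec ν (Iic j)) (-(k:ℤ)) G = Dl (fun j => Ec ν (Iic j)) (-(k:ℤ)) (G - hG'.toLp _) := by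
    rw [map_sub, Dl_zero k _ hdep, sub_zero]
  rw [e1]
  refine (Dl_norm _ _).trans ?_
  rw [mul_assoc]
  refine mul_le_mul_of_nonneg_left ?_ (by norm_num)
  rw [← Real.sqrt_eq_rpow, ← Real.sqrt_mul (by positivity)]
  refine Real.le_sqrt_of_sq_le ?_
  rw [norm_sq_int]
  obtain ⟨hi, hle⟩ := hb k B hkB
  calc ∫ ω, ((G - hG'.toLp _ : HH ν) ω) ^ 2 ∂(PP ν)
      ≤ ∫ ω, D * ((1 + |XA B ω| ^ β) ^ 2 * min ((ω (-(k:ℤ)) k) ^ 2) (|ω (-(k:ℤ)) k| ^ (2 * β))) ∂(PP ν) := by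
        refine integral_mono_of_nonneg (ae_of_all _ fun ω => sq_nonneg _) (hi.const_mul D) ?_
        filter_upwards [Lp.coeFn_sub G (hG'.toLp _), hG'.coeFn_toLp, G_eq hν h1 h2 hs hK hF k0,
          Y_summable hν h1 h2 hs] with ω q1 q2 q3 q4
        rw [q1, Pi.sub_apply, q2, q3]
        have hu : {m : ℕ | k0 ≤ m} = B ∪ {k} := by
          ext m; simp only [hB, mem_ofPred_eq, mem_union, mem_singleton_iff]
          constructor
          · intro h; by_cases h' : m = k
            · exact Or.inr h'
            · exact Or.inl ⟨h, h'⟩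
          · rintro (h | h)
            · exact h.1
            · exact h ▸ hk
        have hd : Disjoint B {k} := by simpa using hkB
        rw [hu, XA_union q4 hd, XA_singleton q4]
        exact hg _ _
    _ ≤ D * (C1 * tau α a k) := by
        rw [integral_const_mul]; gcongr
    _ = _ := by ring

/-- approximation by functions of finitely many coordinates -/
lemma approx (hν : LawE α a ν) (h1 : 1 < α) (h2 : α < 2)
    (hs : Summable fun m => tau α a m ^ ((1:ℝ)/2))
    {K : ℝ → ℝ} (hK : Measurable K)
    (hF : MemLp (fun ω => K (XA univ ω)) 2 (PP ν)) {ε : ℝ} (hε : 0 < ε) :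
    ∃ (L : ℕ) (z : HH ν), Ec ν (Icc (-(L:ℤ)) 0) z = z ∧ ‖hF.toLp _ - z‖ ≤ ε := by
  have hX := XA_measurable univ
  have : IsProbabilityMeasure ((PP ν).map (XA univ)) := Measure.isProbabilityMeasure_map hX.aemeasurable
  have hK2 : MemLp K 2 ((PP ν).map (XA univ)) :=
    (memLp_map_measure_iff hK.aestronglyMeasurable hX.aemeasurable).2 hF
  obtain ⟨g, hg, hgm⟩ := hK2.exists_boundedContinuous_eLpNorm_sub_le (by norm_num) 
    (ε := ENNReal.ofReal (ε / 2)) (by simpa using hε)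
  have hgc : Continuous g := g.continuous
  have hgb : ∀ f : (ℤ → ℕ → ℝ) → ℝ, Measurable f → MemLp (fun ω => g (f ω)) 2 (PP ν) := by
    intro f hf
    exact MemLp.of_bound (Measurable.aestronglyMeasurable (by fun_prop)) ‖g‖ (ae_of_all _ fun ω => g.norm_coe_le_norm _)
  have hgu := hgb _ hX
  have hM := fun L : ℕ => hgb _ (XM_measurable univ (L + 1))
  have d1 : ‖hF.toLp _ - hgu.toLp _‖ ≤ ε / 2 := by
    rw [← MemLp.toLp_sub, Lp.norm_toLp]
    refine ENNReal.toReal_le_of_le_ofReal (by positivity) ?_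
    refine le_trans (le_of_eq ?_) hg
    rw [eLpNorm_map_measure (hK.aestronglyMeasurable.sub hgc.aestronglyMeasurable) hX.aemeasurable]
    rfl
  have d2 : Tendsto (fun L => ‖hgu.toLp _ - (hM L).toLp _‖ ^ 2) atTop (𝓝 0) := by
    have : ∀ L, ‖hgu.toLp _ - (hM L).toLp _‖ ^ 2 = ∫ ω, (g (XA univ ω) - g (XM univ (L + 1) ω)) ^ 2 ∂(PP ν) := by
      intro L
      rw [← MemLp.toLp_sub, toLp_norm_sq]
      rfl
    simp only [this]
    have h0 : (0:ℝ) = ∫ ω : ℤ → ℕ → ℝ, (0:ℝ) ∂(PP ν) := by simp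
    rw [h0]
    refine tendsto_integral_of_dominated_convergence (fun _ => (‖g‖ + ‖g‖) ^ 2) ?_ (by fun_prop) ?_ ?_
    · intro L
      have := XM_measurable univ (L + 1)
      exact Measurable.aestronglyMeasurable (by fun_prop)
    · intro L
      refine ae_of_all _ fun ω => ?_
      rw [Real.norm_of_nonneg (sq_nonneg _), ← sq_abs]
      refine pow_le_pow_left₀ (abs_nonneg _) ?_ 2
      refine (abs_sub _ _).trans (add_le_add ?_ ?_)
      · exact g.norm_coe_le_norm _
      · exact g.norm_coe_le_norm _
    · filter_upwards [Y_summable hν h1 h2 hs] with ω hω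
      have h3 := ((XA_eq hω univ).2.2).comp (tendsto_add_atTop_nat 1)
      have h4 : Continuous fun x : ℝ => (g (XA univ ω) - g x) ^ 2 := by fun_prop
      have h5 := (h4.tendsto _).comp h3
      simpa [Function.comp_def] using h5
  obtain ⟨L, hL⟩ := (d2.eventually_lt_const (show (0:ℝ) < (ε / 2) ^ 2 by positivity)).exists
  refine ⟨L, (hM L).toLp _, ?_, ?_⟩
  · refine dep_of_mrg ν (hM L).coeFn_toLp (ae_of_all _ fun p => ?_)
    refine congrArg g ?_
    refine XM_congr fun m hm _ => mrg_in ?_ p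
    simp only [mem_Icc]; omega
  · have d3 := lt_of_pow_lt_pow_left₀ 2 (by positivity) hL
    have : hF.toLp _ - (hM L).toLp _ = (hF.toLp _ - hgu.toLp _) + (hgu.toLp _ - (hM L).toLp _) := by abel
    rw [this]
    refine (norm_add_le _ _).trans ?_
    linarith

lemma tauA_pos (hs : Summable fun m => tau α a m ^ ((1:ℝ)/2)) {A : Set ℕ} {m0 : ℕ} (hA : m0 ∈ A)
    (hm0 : 0 < tau α a m0) : 0 < tauA α a A := by
  classical
  unfold tauA
  have hsA : Summable fun m : ℕ => if m ∈ A then tau α a m else 0 := by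
    refine Summable.of_norm_bounded (tau_summable hs) fun m => ?_
    have := tau_nonneg α a m
    by_cases hm : m ∈ A
    · rw [if_pos hm, Real.norm_of_nonneg this]
    · rw [if_neg hm, norm_zero]; exact this
  refine hsA.tsum_pos (fun m => ?_) m0 ?_
  · have := tau_nonneg α a m
    split_ifs
    · exact this
    · exact le_rfl
  · rw [if_pos hA]; exact hm0

lemma model_clt (hν : LawE α a ν) (h1 : 1 < α) (h2 : α < 2)
    (hs : Summable fun m => tau α a m ^ ((1:ℝ)/2)) (hβ0 : 0 < β) (hβ : β < α / 2)
    {K : ℝ → ℝ} (hK : Measurable K) {C : ℝ} (hC : 0 ≤ C) (hKb : ∀ v, |K v| ≤ C * (1 + |v| ^ β))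
    (hτ : ∃ m, 0 < tau α a m) :
    ∃ x : HH ν, (x =ᵐ[PP ν] fun ω => K (XA univ ω) - ∫ ω', K (XA univ ω') ∂(PP ν)) ∧
    MemLp (fun ω => K (XA univ ω)) 2 (PP ν) ∧
    (Summable fun n : ℕ => |inner ℝ x (Us ν n x)|) ∧
    Tendsto (fun N : ℕ => ‖SN (Us ν) x N‖ ^ 2 / N) atTop (𝓝 (sg (Us ν) x)) ∧
    ∀ t : ℝ, Tendsto (fun N : ℕ => cf ν ((t / √N) • SN (Us ν) x N)) atTop
      (𝓝 (Complex.exp (-((t ^ 2 * sg (Us ν) x / 2 : ℝ) : ℂ)))) := by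
  classical
  have hF := memLp_growth hν h1 h2 hs hβ0 hβ hK hKb univ
  set F : HH ν := hF.toLp _ with hFd
  set c : HH ν := Ec ν ∅ F with hc
  have hcA : ∀ A, Ec ν A c = c := by
    intro A
    rw [hc, Ec_comp, inter_empty]
  have hF0 : Ec ν (Iic 0) F = F := by
    refine dep_of_mrg ν hF.coeFn_toLp (ae_of_all _ fun p => ?_)
    rw [XA_mrg_in]
    intro m _
    simp
  refine ⟨F - c, ?_, hF, hannan ν ?_ ?_ ?_ ?_⟩
  · filter_upwards [Lp.coeFn_sub F c, hF.coeFn_toLp, Ec_empty ν F] with ω q1 q2 q3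
    rw [q1, Pi.sub_apply, q2, q3]
    congr 1
    exact integral_congr_ae hF.coeFn_toLp
  · rw [map_sub, hF0, hcA]
  · rw [map_sub, hcA, ← hc, sub_self]
  · intro ε hε
    obtain ⟨L, z, hz, hle⟩ := approx hν h1 h2 hs hK hF hε
    refine ⟨L, z - c, ?_, ?_⟩
    · rw [map_sub, hz, hcA]
    · rw [sub_sub_sub_cancel_right]; exact hle
  · obtain ⟨m0, hm0⟩ := hτ
    have hk0 : 0 < tauA α a {m | m < m0 + 1} := by
      exact tauA_pos hs (by simp) hm0
    obtain ⟨C', hC', hb⟩ := pk_bound hν h1 h2 hs hβ0 hβ hK hC hKb hF (m0 + 1) hk0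
    have e : pk (fun j => Ec ν (Iic j)) (F - c) = pk (fun j => Ec ν (Iic j)) F := by
      funext k
      unfold pk
      rw [map_sub, Dl_apply _ c]
      simp only [hcA, sub_self, sub_zero]
    rw [e]
    refine Summable.of_norm_bounded_eventually (hs.mul_left C') ?_
    rw [Nat.cofinite_eq_atTop]
    filter_upwards [eventually_ge_atTop (m0 + 1)] with k hk
    rw [Real.norm_of_nonneg (pk_nonneg _ _)]
    exact hb k hk

end sixe
end S18

namespace S18
set_option linter.unusedSectionVars false

section sevena
variable {α β : ℝ} {a : ℝ → ℝ} {ν : Measure (ℕ → ℝ)} [IsProbabilityMeasure ν]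

lemma XX_zero : XX 0 = XA univ := by
  funext ω
  unfold XX
  congr 1
  funext i
  simp [shf]

lemma int_XX {h : ℝ → ℝ} (hm : Measurable h) (n : ℤ) :
    ∫ ω, h (XX n ω) ∂(PP ν) = ∫ ω, h (XA univ ω) ∂(PP ν) :=
  mp_int (shf_mp ν n) (f := fun ω => h (XA univ ω)) (hm.comp (XA_measurable univ)).aestronglyMeasurable

lemma inner_int (x y : HH ν) : inner ℝ x y = ∫ ω, x ω * y ω ∂(PP ν) := by
  rw [L2.inner_def]
  refine integral_congr_ae (ae_of_all _ fun ω => ?_)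
  simp [mul_comm]

lemma model_final (hν : LawE α a ν) (h1 : 1 < α) (h2 : α < 2)
    (hs : Summable fun m => tau α a m ^ ((1:ℝ)/2)) (hβ0 : 0 < β) (hβ : β < α / 2)
    {K : ℝ → ℝ} (hK : Measurable K) {C : ℝ} (hC : 0 ≤ C) (hKb : ∀ v, |K v| ≤ C * (1 + |v| ^ β))
    (hτ : ∃ m, 0 < tau α a m) :
    ∃ κ σ2 : ℝ, (∀ n, ∫ ω, K (XX n ω) ∂(PP ν) = κ) ∧ 0 ≤ σ2 ∧
    (Integrable (fun ω => (K (XX 0 ω)) ^ 2) (PP ν)) ∧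
    (Summable fun n : ℕ => |(∫ ω, K (XX 0 ω) * K (XX ((n:ℤ) + 1) ω) ∂(PP ν)) - κ * κ|) ∧
    σ2 = ((∫ ω, (K (XX 0 ω)) ^ 2 ∂(PP ν)) - κ ^ 2) +
      2 * ∑' n : ℕ, ((∫ ω, K (XX 0 ω) * K (XX ((n:ℤ) + 1) ω) ∂(PP ν)) - κ * κ) ∧
    (∀ N : ℕ, ∫ ω, (∑ n ∈ Finset.range N, (K (XX ((n:ℤ) + 1) ω) - κ)) ∂(PP ν) = 0) ∧
    Tendsto (fun N : ℕ => (∫ ω, (∑ n ∈ Finset.range N, (K (XX ((n:ℤ) + 1) ω) - κ)) ^ 2 ∂(PP ν)) / N)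
      atTop (𝓝 σ2) ∧
    ∀ t : ℝ, Tendsto (fun N : ℕ => ∫ ω, Complex.exp (Complex.I * ((t *
      ((∑ n ∈ Finset.range N, (K (XX ((n:ℤ) + 1) ω) - κ)) / √N) : ℝ) : ℂ)) ∂(PP ν)) atTop
      (𝓝 (Complex.exp (-((t ^ 2 * σ2 / 2 : ℝ) : ℂ)))) := by
  obtain ⟨x, hx, hF, c1, c2, c3⟩ := model_clt hν h1 h2 hs hβ0 hβ hK hC hKb hτ
  set κ := ∫ ω', K (XA univ ω') ∂(PP ν) with hκ
  have hFn : ∀ n, MemLp (fun ω => K (XX n ω)) 2 (PP ν) := fun n =>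
    hF.comp_measurePreserving (shf_mp ν n)
  have hFi : ∀ n, Integrable (fun ω => K (XX n ω)) (PP ν) := fun n => (hFn n).integrable (by norm_num)
  have hmean : ∀ n, ∫ ω, K (XX n ω) ∂(PP ν) = κ := fun n => int_XX hK n
  have hU : ∀ n, Us ν n x =ᵐ[PP ν] fun ω => K (XX n ω) - κ := by
    intro n
    filter_upwards [Us_ae ν n x, (shf_mp ν n).quasiMeasurePreserving.ae hx] with ω q1 q2
    rw [q1, q2, XX]
  have hx0 : x =ᵐ[PP ν] fun ω => K (XX 0 ω) - κ := by rw [XX_zero]; exact hx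
  have hinner : ∀ n, inner ℝ x (Us ν n x) = (∫ ω, K (XX 0 ω) * K (XX n ω) ∂(PP ν)) - κ * κ := by
    intro n
    have hp : Integrable (fun ω => K (XX 0 ω) * K (XX n ω)) (PP ν) := (hFn 0).integrable_mul (hFn n)
    rw [inner_int]
    calc ∫ ω, x ω * Us ν n x ω ∂(PP ν)
        = ∫ ω, ((K (XX 0 ω) * K (XX n ω) - κ * K (XX 0 ω)) - (κ * K (XX n ω) - κ * κ)) ∂(PP ν) := by
          refine integral_congr_ae ?_
          filter_upwards [hx0, hU n] with ω q1 q2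
          rw [q1, q2]; ring
      _ = _ := by
          have i1 : Integrable (fun ω => K (XX 0 ω) * K (XX n ω) - κ * K (XX 0 ω)) (PP ν) :=
            hp.sub ((hFi 0).const_mul _)
          have i2 : Integrable (fun ω => κ * K (XX n ω) - κ * κ) (PP ν) :=
            ((hFi n).const_mul _).sub (integrable_const _)
          rw [integral_sub i1 i2,
            integral_sub hp ((hFi 0).const_mul _), integral_sub ((hFi n).const_mul _) (integrable_const _),
            integral_const_mul, integral_const_mul, hmean, hmean]
          simp
  have hnorm : ‖x‖ ^ 2 = (∫ ω, (K (XX 0 ω)) ^ 2 ∂(PP ν)) - κ ^ 2 := by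
    have := hinner 0
    rw [Us_zero, real_inner_self_eq_norm_sq] at this
    rw [this, sq κ]
    simp only [sq]
  have hSN : ∀ N : ℕ, Us ν 1 (SN (Us ν) x N) =ᵐ[PP ν] fun ω => ∑ n ∈ Finset.range N, (K (XX ((n:ℤ) + 1) ω) - κ) := by
    intro N
    have e : Us ν 1 (SN (Us ν) x N) = ∑ n ∈ Finset.range N, Us ν ((n:ℤ) + 1) x := by
      unfold SN
      rw [map_sum]
      refine Finset.sum_congr rfl fun n _ => ?_
      rw [Us_Us, add_comm]
    rw [e]
    have hall : ∀ᵐ ω ∂(PP ν), ∀ n : ℕ, Us ν ((n:ℤ) + 1) x ω = K (XX ((n:ℤ) + 1) ω) - κ := by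
      rw [ae_all_iff]; intro n; exact hU _
    filter_upwards [hall, Lp.coeFn_finsetSum (Finset.range N) (fun n : ℕ => Us ν ((n:ℤ) + 1) x)] with ω q1 q2
    rw [q2, Finset.sum_apply]
    exact Finset.sum_congr rfl fun n _ => q1 n
  have c2' : Tendsto (fun N : ℕ => (∫ ω, (∑ n ∈ Finset.range N, (K (XX ((n:ℤ) + 1) ω) - κ)) ^ 2 ∂(PP ν)) / N)
      atTop (𝓝 (sg (Us ν) x)) := by
    refine c2.congr fun N => ?_
    rw [← LinearIsometry.norm_map (Us ν 1), norm_sq_int]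
    congr 1
    refine integral_congr_ae ?_
    filter_upwards [hSN N] with ω q
    rw [q]
  refine ⟨κ, sg (Us ν) x, hmean, ?_, (hFn 0).integrable_sq, ?_, ?_, ?_, c2', ?_⟩
  · exact ge_of_tendsto' c2 fun N => by positivity
  · have := (summable_nat_add_iff 1).2 c1
    refine this.congr fun n => ?_
    rw [← hinner]
    push_cast
    rfl
  · unfold sg
    rw [hnorm]
    simp only [hinner]
  · intro N
    have i1 : ∀ n : ℕ, Integrable (fun ω => K (XX ((n:ℤ) + 1) ω) - κ) (PP ν) := fun n =>
      (hFi _).sub (integrable_const _)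
    rw [integral_finsetSum _ fun n _ => i1 n]
    refine Finset.sum_eq_zero fun n _ => ?_
    rw [integral_sub (hFi _) (integrable_const _), hmean]
    simp
  · intro t
    refine (c3 t).congr fun N => ?_
    rw [← cf_Us ν 1, map_smul, cf]
    refine integral_congr_ae ?_
    filter_upwards [hSN N, Lp.coeFn_smul (t / √N) (Us ν 1 (SN (Us ν) x N))] with ω q1 q2
    rw [q2, Pi.smul_apply, q1, smul_eq_mul]
    congr 3
    ring

end sevena
end S18

namespace S18
set_option linter.unusedSectionVars false

section sevenb
variable {α β : ℝ} {a : ℝ → ℝ}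

lemma law_eq {Ω Ω' : Type*} [MeasurableSpace Ω] [MeasurableSpace Ω'] {P : Measure Ω} [IsProbabilityMeasure P]
    {P' : Measure Ω'} [IsProbabilityMeasure P'] {m : ℕ} {X : Fin m → Ω → ℝ} {Y : Fin m → Ω' → ℝ}
    (hX : ∀ j, Measurable (X j)) (hY : ∀ j, Measurable (Y j))
    (h : ∀ u : Fin m → ℝ, ∫ ω, Complex.exp (Complex.I * ((∑ j, u j * X j ω : ℝ) : ℂ)) ∂P =
      ∫ ω, Complex.exp (Complex.I * ((∑ j, u j * Y j ω : ℝ) : ℂ)) ∂P') :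
    P.map (fun ω j => X j ω) = P'.map (fun ω j => Y j ω) := by
  have mX : Measurable fun ω j => X j ω := measurable_pi_lambda _ hX
  have mY : Measurable fun ω j => Y j ω := measurable_pi_lambda _ hY
  have := Measure.isProbabilityMeasure_map (μ := P) mX.aemeasurable
  have := Measure.isProbabilityMeasure_map (μ := P') mY.aemeasurable
  apply Measure.ext_of_charFunDual
  ext L
  rw [charFunDual_apply, charFunDual_apply, integral_map mX.aemeasurable (by fun_prop),
    integral_map mY.aemeasurable (by fun_prop)]
  have hL : ∀ v : Fin m → ℝ, L v = ∑ j, L (Pi.single j 1) * v j := by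
    intro v
    conv_lhs => rw [pi_eq_sum_univ' v]
    rw [map_sum]
    refine Finset.sum_congr rfl fun j _ => ?_
    rw [map_smul, smul_eq_mul, mul_comm]
  have := h fun j => L (Pi.single j 1)
  simp only [hL (fun j => X j _), hL (fun j => Y j _), mul_comm _ Complex.I]
  exact this

lemma int_transfer {Ω Ω' G : Type*} [MeasurableSpace Ω] [MeasurableSpace Ω'] {P : Measure Ω}
    {P' : Measure Ω'} {m : ℕ} {X : Fin m → Ω → ℝ} {Y : Fin m → Ω' → ℝ}
    [NormedAddCommGroup G] [NormedSpace ℝ G] [MeasurableSpace G] [BorelSpace G] [SecondCountableTopology G]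
    (hX : ∀ j, Measurable (X j)) (hY : ∀ j, Measurable (Y j))
    (h : P.map (fun ω j => X j ω) = P'.map (fun ω j => Y j ω)) {Φ : (Fin m → ℝ) → G} (hΦ : Measurable Φ) :
    ∫ ω, Φ (fun j => X j ω) ∂P = ∫ ω, Φ (fun j => Y j ω) ∂P' := by
  have mX : Measurable fun ω j => X j ω := measurable_pi_lambda _ hX
  have mY : Measurable fun ω j => Y j ω := measurable_pi_lambda _ hY
  rw [← integral_map (f := Φ) mX.aemeasurable hΦ.aestronglyMeasurable, h, integral_map mY.aemeasurable hΦ.aestronglyMeasurable]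

lemma clt_of_charFun {Ω : Type*} [MeasurableSpace Ω] {P : Measure Ω} [IsProbabilityMeasure P]
    {S : ℕ → Ω → ℝ} (hS : ∀ N, Measurable (S N)) {σ2 : ℝ} (hσ : 0 ≤ σ2)
    (h : ∀ t : ℝ, Tendsto (fun N : ℕ => ∫ ω, Complex.exp (Complex.I * ((t * S N ω : ℝ) : ℂ)) ∂P) atTop
      (𝓝 (Complex.exp (-((t ^ 2 * σ2 / 2 : ℝ) : ℂ))))) (φ : BoundedContinuousFunction ℝ ℝ) :
    Tendsto (fun N => ∫ ω, φ (S N ω) ∂P) atTop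
      (𝓝 (∫ x : ℝ, φ x ∂(ProbabilityTheory.gaussianReal 0 (Real.toNNReal σ2)))) := by
  let μ : ℕ → ProbabilityMeasure ℝ := fun N => ⟨P.map (S N), Measure.isProbabilityMeasure_map (hS N).aemeasurable⟩
  let μ0 : ProbabilityMeasure ℝ := ⟨ProbabilityTheory.gaussianReal 0 (Real.toNNReal σ2), inferInstance⟩
  have ht : Tendsto μ atTop (𝓝 μ0) := by
    rw [ProbabilityMeasure.tendsto_iff_tendsto_charFun]
    intro t
    have e1 : charFun (μ0 : Measure ℝ) t = Complex.exp (-((t ^ 2 * σ2 / 2 : ℝ) : ℂ)) := by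
      show charFun (ProbabilityTheory.gaussianReal 0 (Real.toNNReal σ2)) t = _
      rw [ProbabilityTheory.charFun_gaussianReal]
      congr 1
      rw [Real.coe_toNNReal _ hσ]
      push_cast
      ring
    rw [e1]
    refine (h t).congr fun N => ?_
    show _ = charFun (P.map (S N)) t
    rw [charFun_apply_real, integral_map (hS N).aemeasurable (by fun_prop)]
    refine integral_congr_ae (ae_of_all _ fun ω => ?_)
    simp only [Complex.ofReal_mul]
    rw [mul_comm]
  have h3 := (ProbabilityMeasure.tendsto_iff_forall_integral_tendsto.1 ht) φ
  refine h3.congr fun N => ?_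
  show ∫ x, φ x ∂(P.map (S N)) = _
  rw [integral_map (hS N).aemeasurable φ.continuous.aestronglyMeasurable]

end sevenb
end S18

namespace S18
set_option linter.unusedSectionVars false

section sevenc

lemma core (α : ℝ) (hα1 : 1 < α) (hα2 : α < 2)
    (a : ℝ → ℝ) (ham : Measurable a)
    (hai : Integrable (fun x => |a x| ^ α) volume)
    (hane : 0 < ∫ x : ℝ, |a x| ^ α)
    (hcausal : ∀ x : ℝ, x < 0 → a x = 0)
    {Ω : Type*} [MeasurableSpace Ω] (P : Measure Ω) [IsProbabilityMeasure P]
    (ξ : ℤ → Ω → ℝ) (hξm : ∀ n, Measurable (ξ n))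
    (hchar : ∀ (m : ℕ) (n : Fin m → ℤ) (u : Fin m → ℝ),
      (∫ ω, Complex.exp (Complex.I * ((∑ j, u j * ξ (n j) ω : ℝ) : ℂ)) ∂P)
        = Complex.exp (-((∫ x : ℝ, |∑ j, u j * a ((n j : ℝ) - x)| ^ α : ℝ) : ℂ)))
    (hlaw : ∀ n, IsSAS α (∫ x : ℝ, |a x| ^ α) (P.map (ξ n)))
    (K : ℝ → ℝ) (hKm : Measurable K)
    (β C : ℝ) (hβ0 : 0 < β) (hβ : β < α / 2) (hC : 0 ≤ C)
    (hKb : ∀ v, |K v| ≤ C * (1 + |v| ^ β))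
    (hsum1 : Summable (fun m : ℕ => tau α a m ^ ((1:ℝ) / 2))) :
    Integrable (fun ω => (K (ξ 0 ω)) ^ 2) P ∧
    Summable (fun n : ℕ =>
      |(∫ ω, K (ξ 0 ω) * K (ξ ((n : ℤ) + 1) ω) ∂P) -
        (∫ ω, K (ξ 0 ω) ∂P) * (∫ ω, K (ξ ((n : ℤ) + 1) ω) ∂P)|) ∧
    ∃ σ2 : ℝ,
      σ2 = ((∫ ω, (K (ξ 0 ω)) ^ 2 ∂P) - (∫ ω, K (ξ 0 ω) ∂P) ^ 2) +
        2 * ∑' n : ℕ, ((∫ ω, K (ξ 0 ω) * K (ξ ((n : ℤ) + 1) ω) ∂P) -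
          (∫ ω, K (ξ 0 ω) ∂P) * (∫ ω, K (ξ ((n : ℤ) + 1) ω) ∂P)) ∧
      Filter.Tendsto (fun N : ℕ =>
          ((∫ ω, (∑ n ∈ Finset.range N,
              (K (ξ ((n : ℤ) + 1) ω) - ∫ ω', K (ξ ((n : ℤ) + 1) ω') ∂P)) ^ 2 ∂P) -
            (∫ ω, (∑ n ∈ Finset.range N,
              (K (ξ ((n : ℤ) + 1) ω) - ∫ ω', K (ξ ((n : ℤ) + 1) ω') ∂P)) ∂P) ^ 2) / N)
        Filter.atTop (nhds σ2) ∧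
      ∀ φ : BoundedContinuousFunction ℝ ℝ,
        Filter.Tendsto (fun N : ℕ =>
            ∫ ω, φ ((∑ n ∈ Finset.range N,
              (K (ξ ((n : ℤ) + 1) ω) - ∫ ω', K (ξ ((n : ℤ) + 1) ω') ∂P)) /
                Real.sqrt N) ∂P)
          Filter.atTop
          (nhds (∫ x : ℝ, φ x ∂(ProbabilityTheory.gaussianReal 0 (Real.toNNReal σ2)))) := by
  set T := ∫ x : ℝ, |a x| ^ α with hT
  -- normalised stable law
  have hpr : IsProbabilityMeasure (P.map (ξ 0)) := Measure.isProbabilityMeasure_map (hξm 0).aemeasurable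
  have hρ := (hlaw 0).map_mul (T ^ (-(1/α)))
  have e1 : |T ^ (-(1/α))| ^ α * T = 1 := by
    rw [abs_of_pos (by positivity), ← Real.rpow_mul hane.le, neg_mul, one_div_mul_cancel (by linarith),
      Real.rpow_neg_one, inv_mul_cancel₀ hane.ne']
  rw [e1] at hρ
  have : IsProbabilityMeasure ((P.map (ξ 0)).map fun x => T ^ (-(1/α)) * x) :=
    Measure.isProbabilityMeasure_map (Measurable.aemeasurable (by fun_prop))
  have hμ : IsProbabilityMeasure (volume.restrict (Ioc (0:ℝ) 1)) := ⟨by simp⟩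
  obtain ⟨ν, hνp, hν⟩ := exists_law hα1 (μ := volume.restrict (Ioc (0:ℝ) 1)) (f := fun k x => a (k + x))
    (fun k => by fun_prop) (fun k => (hai.comp_add_left (k:ℝ)).integrableOn) hρ
  have hν : LawE α a ν := hν
  -- non triviality
  have hτ : ∃ m, 0 < tau α a m := by
    by_contra hcon
    push Not at hcon
    have h0 : ∀ m, tau α a m = 0 := fun m => le_antisymm (hcon m) (tau_nonneg α a m)
    have hz : tauA α a univ = 0 := by simp [tauA, h0]
    have h3 := XA_law hν hα1 hα2 hsum1 univ 1
    have h4 := model_char hν hα1 hα2 hsum1 ham hai hcausal (m := 1) (fun _ => 0) (fun _ => 1)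
    rw [charFun_apply_real, integral_map (XA_measurable univ).aemeasurable (by fun_prop), hz] at h3
    simp only [Finset.univ_unique, Finset.sum_singleton, one_mul, XX_zero, Int.cast_zero, zero_sub] at h4
    rw [integral_neg_eq_self (fun x => |a x| ^ α) volume] at h4
    have h5 : Complex.exp (-((T : ℝ) : ℂ)) = Complex.exp (-((0 * |1| ^ α : ℝ) : ℂ)) := by
      rw [← h4, ← h3]
      refine integral_congr_ae (ae_of_all _ fun ω => ?_)
      simp [mul_comm]
    rw [← Complex.ofReal_neg, ← Complex.ofReal_neg, ← Complex.ofReal_exp, ← Complex.ofReal_exp,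
      Complex.ofReal_inj, Real.exp_eq_exp] at h5
    linarith
  obtain ⟨κ, σ2, g1, g2, g3, g4, g5, g6, g7, g8⟩ := model_final hν hα1 hα2 hsum1 hβ0 hβ hKm hC hKb hτ
  have hlawm : ∀ (m : ℕ) (n : Fin m → ℤ), P.map (fun ω j => ξ (n j) ω) = (PP ν).map (fun ω j => XX (n j) ω) := by
    intro m n
    refine law_eq (fun j => hξm _) (fun j => XX_measurable _) fun u => ?_
    rw [hchar, model_char hν hα1 hα2 hsum1 ham hai hcausal]
  have hm1 : ∀ n, ∫ ω, K (ξ n ω) ∂P = κ := by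
    intro n
    rw [← g1 n]
    exact int_transfer (Φ := fun v : Fin 1 → ℝ => K (v 0)) (fun j => hξm _) (fun j => XX_measurable _)
      (hlawm 1 fun _ => n) (by fun_prop)
  have hm2 : ∀ n, ∫ ω, K (ξ 0 ω) * K (ξ n ω) ∂P = ∫ ω, K (XX 0 ω) * K (XX n ω) ∂(PP ν) := by
    intro n
    exact int_transfer (Φ := fun v : Fin 2 → ℝ => K (v 0) * K (v 1)) (fun j => hξm _) (fun j => XX_measurable _)
      (hlawm 2 ![0, n]) (by fun_prop)
  have hm3 : ∫ ω, (K (ξ 0 ω)) ^ 2 ∂P = ∫ ω, (K (XX 0 ω)) ^ 2 ∂(PP ν) := by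
    simp only [sq]; exact hm2 0
  have hmS : ∀ N : ℕ, ∀ Φ : ℝ → ℝ, Measurable Φ →
      ∫ ω, Φ (∑ n ∈ Finset.range N, (K (ξ ((n : ℤ) + 1) ω) - κ)) ∂P =
      ∫ ω, Φ (∑ n ∈ Finset.range N, (K (XX ((n : ℤ) + 1) ω) - κ)) ∂(PP ν) := by
    intro N Φ hΦ
    simp only [Finset.sum_range]
    exact int_transfer (Φ := fun v : Fin N → ℝ => Φ (∑ n, (K (v n) - κ))) (fun j => hξm _) (fun j => XX_measurable _)
      (hlawm N fun n => (n:ℤ) + 1) (by fun_prop)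
  have hmSc : ∀ N : ℕ, ∀ Φ : ℝ → ℂ, Measurable Φ →
      ∫ ω, Φ (∑ n ∈ Finset.range N, (K (ξ ((n : ℤ) + 1) ω) - κ)) ∂P =
      ∫ ω, Φ (∑ n ∈ Finset.range N, (K (XX ((n : ℤ) + 1) ω) - κ)) ∂(PP ν) := by
    intro N Φ hΦ
    simp only [Finset.sum_range]
    exact int_transfer (Φ := fun v : Fin N → ℝ => Φ (∑ n, (K (v n) - κ))) (fun j => hξm _) (fun j => XX_measurable _)
      (hlawm N fun n => (n:ℤ) + 1) (by fun_prop)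
  have h_integ0 : Integrable (fun ω => (K (ξ 0 ω)) ^ 2) P := by
    have h5 := hlawm 1 fun _ => 0
    have mX : Measurable fun (ω : Ω) (j : Fin 1) => ξ 0 ω := measurable_pi_lambda _ fun _ => hξm 0
    have mY : Measurable fun (ω : ℤ → ℕ → ℝ) (j : Fin 1) => XX 0 ω := measurable_pi_lambda _ fun _ => XX_measurable 0
    have mΦ : Measurable fun v : Fin 1 → ℝ => (K (v 0)) ^ 2 := by fun_prop
    have h6 := (integrable_map_measure (f := fun (ω : ℤ → ℕ → ℝ) (j : Fin 1) => XX 0 ω) (μ := PP ν)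
      (g := fun v : Fin 1 → ℝ => (K (v 0)) ^ 2) mΦ.aestronglyMeasurable mY.aemeasurable).2 g3
    rw [← h5] at h6
    exact (integrable_map_measure mΦ.aestronglyMeasurable mX.aemeasurable).1 h6
  simp only [hm1, hm2, hm3]
  refine ⟨h_integ0, g4, σ2, g5, ?_, fun φ => ?_⟩
  · refine g7.congr fun N => ?_
    rw [hmS N (fun y => y ^ 2) (by fun_prop), hmS N (fun y => y) (by fun_prop), g6]
    simp
  · refine clt_of_charFun (S := fun N ω => (∑ n ∈ Finset.range N, (K (ξ ((n : ℤ) + 1) ω) - κ)) / √N) 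
      (fun N => ?_) g2 (fun t => ?_) φ
    · have := fun n : ℕ => hξm ((n:ℤ) + 1)
      fun_prop
    · refine (g8 t).congr fun N => ?_
      exact (hmSc N (fun y => Complex.exp (Complex.I * ((t * (y / √N) : ℝ) : ℂ))) (by fun_prop)).symm

end sevenc
end S18

/-- Paper's Theorem 6.1: central limit theorem for unbounded functions of
SαS moving averages. -/
theorem stmt18 (α : ℝ) (hα1 : 1 < α) (hα2 : α < 2)
    (a : ℝ → ℝ) (ham : Measurable a)
    (hai : Integrable (fun x => |a x| ^ α) volume)
    (hane : 0 < ∫ x : ℝ, |a x| ^ α)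
    (hcausal : ∀ x : ℝ, x < 0 → a x = 0)
    {Ω : Type*} [MeasurableSpace Ω] (P : Measure Ω) [IsProbabilityMeasure P]
    (ξ : ℤ → Ω → ℝ) (hξm : ∀ n, Measurable (ξ n))
    (hchar : ∀ (m : ℕ) (n : Fin m → ℤ) (u : Fin m → ℝ),
      (∫ ω, Complex.exp (Complex.I * ((∑ j, u j * ξ (n j) ω : ℝ) : ℂ)) ∂P)
        = Complex.exp (-((∫ x : ℝ, |∑ j, u j * a ((n j : ℝ) - x)| ^ α : ℝ) : ℂ)))
    (K : ℝ → ℝ) (hKm : Measurable K)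
    (β x₀ cK : ℝ) (hβ0 : 0 < β) (hβ : β < α / 2) (hx₀ : 0 < x₀)
    (hK1 : ∀ x : ℝ, x₀ < |x| → |K x| ≤ cK * |x| ^ β)
    (hK2a : AntitoneOn (fun x => K x / x) (Set.Ioi x₀))
    (hK2b : MonotoneOn (fun x => K x / x) (Set.Iio (-x₀)))
    (hK3 : ∃ T : Finset ℝ, (∃ M : ℝ, ∀ x : ℝ, |x| ≤ x₀ → x ∉ T → |K x| ≤ M) ∧
      ∀ x ∈ T, ∃ δ > (0:ℝ), IntegrableOn K (Set.Ioo (x - δ) (x + δ)) volume)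
    (hsum1 : Summable (fun m : ℕ =>
      (∫ x in Set.Ioc ((m : ℝ)) ((m : ℝ) + 1), |a x| ^ α) ^ ((1:ℝ) / 2)))
    (hsum2 : Summable (fun n : ℕ => ∫ x : ℝ,
      (|a (-x)| ^ (α - 1) * |a (((n : ℝ) + 1) - x)| +
        |a (((n : ℝ) + 1) - x)| ^ (α - 1) * |a (-x)|))) :
    Integrable (fun ω => (K (ξ 0 ω)) ^ 2) P ∧
    Summable (fun n : ℕ =>
      |(∫ ω, K (ξ 0 ω) * K (ξ ((n : ℤ) + 1) ω) ∂P) -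
        (∫ ω, K (ξ 0 ω) ∂P) * (∫ ω, K (ξ ((n : ℤ) + 1) ω) ∂P)|) ∧
    ∃ σ2 : ℝ,
      σ2 = ((∫ ω, (K (ξ 0 ω)) ^ 2 ∂P) - (∫ ω, K (ξ 0 ω) ∂P) ^ 2) +
        2 * ∑' n : ℕ, ((∫ ω, K (ξ 0 ω) * K (ξ ((n : ℤ) + 1) ω) ∂P) -
          (∫ ω, K (ξ 0 ω) ∂P) * (∫ ω, K (ξ ((n : ℤ) + 1) ω) ∂P)) ∧
      Filter.Tendsto (fun N : ℕ =>
          ((∫ ω, (∑ n ∈ Finset.range N,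
              (K (ξ ((n : ℤ) + 1) ω) - ∫ ω', K (ξ ((n : ℤ) + 1) ω') ∂P)) ^ 2 ∂P) -
            (∫ ω, (∑ n ∈ Finset.range N,
              (K (ξ ((n : ℤ) + 1) ω) - ∫ ω', K (ξ ((n : ℤ) + 1) ω') ∂P)) ∂P) ^ 2) / N)
        Filter.atTop (nhds σ2) ∧
      ∀ φ : BoundedContinuousFunction ℝ ℝ,
        Filter.Tendsto (fun N : ℕ =>
            ∫ ω, φ ((∑ n ∈ Finset.range N,
              (K (ξ ((n : ℤ) + 1) ω) - ∫ ω', K (ξ ((n : ℤ) + 1) ω') ∂P)) /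
                Real.sqrt N) ∂P)
          Filter.atTop
          (nhds (∫ x : ℝ, φ x ∂(ProbabilityTheory.gaussianReal 0 (Real.toNNReal σ2)))) := by
  classical
  have hlaw : ∀ n, S18.IsSAS α (∫ x : ℝ, |a x| ^ α) (P.map (ξ n)) := by
    intro n t
    rw [charFun_apply_real, integral_map (hξm n).aemeasurable (by fun_prop)]
    have h := hchar 1 (fun _ => n) (fun _ => t)
    simp only [Finset.univ_unique, Finset.sum_singleton] at h
    have e : ∫ x : ℝ, |t * a ((n:ℝ) - x)| ^ α = (∫ x : ℝ, |a x| ^ α) * |t| ^ α := by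
      have e2 : ∀ x : ℝ, |t * a ((n:ℝ) - x)| ^ α = |t| ^ α * |a ((n:ℝ) - x)| ^ α := by
        intro x
        rw [abs_mul, Real.mul_rpow (abs_nonneg _) (abs_nonneg _)]
      simp only [e2]
      rw [integral_const_mul, integral_sub_left_eq_self (fun x => |a x| ^ α) volume (n:ℝ), mul_comm]
    rw [e] at h
    rw [← h]
    refine integral_congr_ae (ae_of_all _ fun ω => ?_)
    simp only [Complex.ofReal_mul]
    rw [mul_comm Complex.I]
  obtain ⟨T, ⟨M, hM⟩, -⟩ := hK3
  set K' : ℝ → ℝ := (((T : Set ℝ))ᶜ).indicator K with hK'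
  have hTm : MeasurableSet (((T : Set ℝ))ᶜ) := T.finite_toSet.measurableSet.compl
  have hK'm : Measurable K' := hKm.indicator hTm
  have hKae : ∀ n, ∀ᵐ ω ∂P, K (ξ n ω) = K' (ξ n ω) := by
    intro n
    have hpr : IsProbabilityMeasure (P.map (ξ n)) := Measure.isProbabilityMeasure_map (hξm n).aemeasurable
    have h0 : (P.map (ξ n)) (T : Set ℝ) = 0 :=
      (hlaw n).absCont hα1 hane (T.finite_toSet.measure_zero volume)
    have h1 : ∀ᵐ y ∂(P.map (ξ n)), y ∈ ((T : Set ℝ))ᶜ := compl_mem_ae_iff.2 h0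
    filter_upwards [ae_of_ae_map (hξm n).aemeasurable h1] with ω hω
    rw [hK', indicator_of_mem hω]
  have hKb : ∀ v, |K' v| ≤ (|M| + |cK|) * (1 + |v| ^ β) := by
    intro v
    have h0 : 0 ≤ |v| ^ β := by positivity
    have hM0 := abs_nonneg M
    have hc0 := abs_nonneg cK
    by_cases hv : v ∈ ((T : Set ℝ))ᶜ
    · rw [hK', indicator_of_mem hv]
      rcases le_or_gt |v| x₀ with h | h
      · have h3 := hM v h (by simpa using hv)
        have h4 := le_abs_self M
        nlinarith [mul_nonneg hM0 h0, mul_nonneg hc0 h0]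
      · have h3 := hK1 v h
        have h4 : cK * |v| ^ β ≤ |cK| * |v| ^ β := mul_le_mul_of_nonneg_right (le_abs_self cK) h0
        nlinarith [mul_nonneg hM0 h0, mul_nonneg hc0 h0]
    · rw [hK', indicator_of_notMem hv, abs_zero]
      positivity
  have hc := S18.core α hα1 hα2 a ham hai hane hcausal P ξ hξm hchar hlaw K' hK'm β (|M| + |cK|) hβ0 hβ
    (by positivity) hKb hsum1
  have hall : ∀ᵐ ω ∂P, ∀ n, K (ξ n ω) = K' (ξ n ω) := by
    rw [ae_all_iff]; exact hKae
  have r1 : ∀ n, ∫ ω, K (ξ n ω) ∂P = ∫ ω, K' (ξ n ω) ∂P := fun n => integral_congr_ae (hKae n)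
  have r2 : ∀ n, ∫ ω, K (ξ 0 ω) * K (ξ n ω) ∂P = ∫ ω, K' (ξ 0 ω) * K' (ξ n ω) ∂P := by
    intro n
    refine integral_congr_ae ?_
    filter_upwards [hall] with ω hω
    rw [hω, hω]
  have r3 : ∫ ω, (K (ξ 0 ω)) ^ 2 ∂P = ∫ ω, (K' (ξ 0 ω)) ^ 2 ∂P := by
    refine integral_congr_ae ?_
    filter_upwards [hall] with ω hω
    rw [hω]
  have r4 : ∀ (N : ℕ) (c : ℕ → ℝ) (Φ : ℝ → ℝ),
      ∫ ω, Φ (∑ n ∈ Finset.range N, (K (ξ ((n : ℤ) + 1) ω) - c n)) ∂P =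
      ∫ ω, Φ (∑ n ∈ Finset.range N, (K' (ξ ((n : ℤ) + 1) ω) - c n)) ∂P := by
    intro N c Φ
    refine integral_congr_ae ?_
    filter_upwards [hall] with ω hω
    simp only [hω]
  simp only [r1, r2, r3]
  obtain ⟨c1, c2, σ2, c3, c4, c5⟩ := hc
  refine ⟨?_, c2, σ2, c3, ?_, fun φ => ?_⟩
  · refine c1.congr ?_
    filter_upwards [hall] with ω hω
    rw [hω]
  · refine c4.congr fun N => ?_
    rw [r4 N (fun n => ∫ ω', K' (ξ ((n : ℤ) + 1) ω') ∂P) (fun y => y ^ 2),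
      r4 N (fun n => ∫ ω', K' (ξ ((n : ℤ) + 1) ω') ∂P) (fun y => y)]
  · refine (c5 φ).congr fun N => ?_
    rw [r4 N (fun n => ∫ ω', K' (ξ ((n : ℤ) + 1) ω') ∂P) (fun y => φ (y / √N))]
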